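/- arXiv:1704.08213 — 5 statements merged into one kernel-verified Lean document; each statement's English description precedes it below -/
import Mathlib

section
/- Let m ≥ 2, let ‖·‖_F be a norm on ℝ^m, let X be a standard Gaussian vector in ℝ^m, and for a linear map J : ℝ^m → ℝ^m let ‖J‖_{2→F} denote its operator norm from the Euclidean space ℓ₂^m to (ℝ^m, ‖·‖_F). (i) If J satisfies 𝔼‖J X‖_F = 1 and 𝔼‖J P X‖_F ≥ rank(P)/m for every orthogonal projection P on ℓ₂^m, then ‖J‖_{2→F} ≤ 5 · (log m)^{−1/2}. (ii) Every linear map J with 𝔼‖J X‖_F = 1 satisfies ‖J‖_{2→F} ≥ √(π/2) · m^{−1}. -/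
open MeasureTheory ProbabilityTheory

/-- The distribution of a standard Gaussian vector in `ℝ^m`. -/
noncomputable def stdGaussian (m : ℕ) : Measure (Fin m → ℝ) :=
  Measure.pi fun _ => gaussianReal 0 1

/-- The operator norm of a linear map `J` from the Euclidean space `ℓ₂^m`
to `(ℝ^m, nF)`, for a norm `nF` on `ℝ^m`. -/
noncomputable def opNormF (m : ℕ) (nF : (Fin m → ℝ) → ℝ)
    (J : (Fin m → ℝ) →ₗ[ℝ] (Fin m → ℝ)) : ℝ :=
  ⨆ x : {x : Fin m → ℝ // ∑ i, x i ^ 2 ≤ 1}, nF (J x.1)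

instance instProbStd (m : ℕ) : IsProbabilityMeasure (_root_.stdGaussian m) := by
  unfold _root_.stdGaussian; infer_instance

lemma charFunDual_gauss (L : StrongDual ℝ ℝ) :
    charFunDual (gaussianReal 0 1) L = Complex.exp (-((L 1 ^ 2 / 2 : ℝ) : ℂ)) := by
  have h : ∀ x, L x = L 1 * x := fun x => by
    have := L.map_smul x 1
    simp only [smul_eq_mul, mul_one] at this
    rw [this, mul_comm]
  have := charFun_gaussianReal (μ := 0) (v := 1) (L 1)
  rw [charFun_apply_real] at this
  rw [charFunDual_apply]
  have h2 : ∀ v : ℝ, Complex.exp ((L v : ℂ) * Complex.I)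
      = Complex.exp ((L 1 : ℂ) * v * Complex.I) := fun v => by
    rw [h v, Complex.ofReal_mul]
  rw [integral_congr_ae (ae_of_all _ h2), this]
  congr 1
  push_cast
  simp

lemma charFunDual_std (m : ℕ) (L : StrongDual ℝ (Fin m → ℝ)) :
    charFunDual (_root_.stdGaussian m) L =
      Complex.exp (-((∑ i, L (Pi.single i 1) ^ 2 / 2 : ℝ) : ℂ)) := by
  unfold _root_.stdGaussian
  rw [charFunDual_pi]
  simp_rw [charFunDual_gauss, ← Complex.exp_sum]
  congr 1
  push_cast
  rw [Finset.sum_neg_distrib]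
  simp

lemma std_neg (m : ℕ) (f : (Fin m → ℝ) → ℝ) :
    ∫ x, f (-x) ∂_root_.stdGaussian m = ∫ x, f x ∂_root_.stdGaussian m := by
  have h : (_root_.stdGaussian m).map
      (ContinuousLinearEquiv.neg ℝ : (Fin m → ℝ) ≃L[ℝ] _).toContinuousLinearMap
      = _root_.stdGaussian m := by
    apply Measure.ext_of_charFunDual
    ext L
    rw [charFunDual_map, charFunDual_std, charFunDual_std]
    simp
  conv_rhs => rw [← h]
  exact ((MeasurableEquiv.neg (Fin m → ℝ)).measurableEmbedding.integral_map _).symm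

noncomputable def prj {m : ℕ} (u : Fin m → ℝ) : (Fin m → ℝ) →ₗ[ℝ] (Fin m → ℝ) where
  toFun x := x - (∑ i, x i * u i) • u
  map_add' x y := by
    ext j; simp [add_mul, Finset.sum_add_distrib]; ring
  map_smul' c x := by
    ext j; simp [mul_assoc, ← Finset.mul_sum]; ring

lemma prj_apply {m : ℕ} (u x : Fin m → ℝ) : prj u x = x - (∑ i, x i * u i) • u := rfl

lemma law_eq (m : ℕ) (u : Fin m → ℝ) (hu : ∑ i, u i ^ 2 = 1) :
    ((_root_.stdGaussian m).prod (gaussianReal 0 1)).map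
      (((prj u).toContinuousLinearMap.coprod
        (ContinuousLinearMap.toSpanSingleton ℝ u) : ((Fin m → ℝ) × ℝ) →L[ℝ] (Fin m → ℝ)))
      = _root_.stdGaussian m := by
  apply Measure.ext_of_charFunDual
  ext L
  have hL : L u = ∑ i, u i * L (Pi.single i 1) := by
    conv_lhs => rw [pi_eq_sum_univ' u]
    simp [map_sum]
  rw [charFunDual_map, charFunDual_prod, charFunDual_std, charFunDual_std, charFunDual_gauss,
    ← Complex.exp_add]
  congr 1
  rw [← neg_add, ← Complex.ofReal_add]
  congr 2
  have h1 : ∀ i, prj u (Pi.single i 1) = Pi.single i 1 - u i • u := by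
    intro i; rw [prj_apply]; congr 2
    simp [Pi.single_apply]
  simp [h1]
  have : ∀ i, (L (Pi.single i 1) - u i * L u)^2 / 2 = L (Pi.single i 1) ^2/2 - L u * (u i * L (Pi.single i 1)) + (L u)^2/2 * u i ^2 := by
    intro i; ring
  simp_rw [this, Finset.sum_add_distrib, Finset.sum_sub_distrib, ← Finset.mul_sum, hu, ← hL]
  ring

lemma prj_idem {m : ℕ} (u : Fin m → ℝ) (hu : ∑ i, u i ^ 2 = 1) : prj u ∘ₗ prj u = prj u := by
  refine LinearMap.ext fun x => ?_
  have h : ∑ i, prj u x i * u i = 0 := by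
    simp only [prj_apply, Pi.sub_apply, Pi.smul_apply, smul_eq_mul, sub_mul,
      Finset.sum_sub_distrib, mul_assoc, ← Finset.mul_sum, ← sq, hu]
    ring
  rw [LinearMap.comp_apply, prj_apply u (prj u x), h]
  simp

lemma prj_sa {m : ℕ} (u x y : Fin m → ℝ)  :
    ∑ i, prj u x i * y i = ∑ i, x i * prj u y i := by
  simp [prj_apply, sub_mul, mul_sub, Finset.sum_sub_distrib]
  simp_rw [mul_assoc, mul_left_comm (x _) (∑ i, _) (u _), ← Finset.mul_sum, mul_comm (u _)]
  ring

lemma prj_rank {m : ℕ} (u : Fin m → ℝ) :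
    (m : ℝ) - 1 ≤ (Module.finrank ℝ (LinearMap.range (prj u)) : ℝ) := by
  have h := LinearMap.finrank_range_add_finrank_ker (prj u)
  have h2 : Module.finrank ℝ (LinearMap.ker (prj u)) ≤ 1 := by
    have hk : LinearMap.ker (prj u) ≤ Submodule.span ℝ {u} := by
      intro x hx
      rw [LinearMap.mem_ker, prj_apply, sub_eq_zero] at hx
      rw [hx]
      exact Submodule.smul_mem _ _ (Submodule.mem_span_singleton_self u)
    exact (Submodule.finrank_mono hk).trans ((finrank_span_le_card ({u} : Set (Fin m → ℝ))).trans (by simp))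
  rw [Module.finrank_fin_fun] at h
  have : m ≤ Module.finrank ℝ (LinearMap.range (prj u)) + 1 := by omega
  have : (m : ℝ) ≤ Module.finrank ℝ (LinearMap.range (prj u)) + 1 := by exact_mod_cast this
  linarith

lemma half_int (b : ℝ) (hb : 0 < b) :
    ∫ y in Set.Ioi (0:ℝ), y * Real.exp (-b * y ^ 2) = (2 * b)⁻¹ := by
  have := integral_mul_cexp_neg_mul_sq (b := b) (by simpa using hb)
  have h2 : ∀ r : ℝ, (r : ℂ) * Complex.exp (-b * r ^2) = ((r * Real.exp (-b * r^2) : ℝ) : ℂ) := by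
    intro r; push_cast; rfl
  simp_rw [h2] at this
  rw [integral_complex_ofReal] at this
  exact_mod_cast this

lemma abs_gauss : ∫ t, |t| ∂gaussianReal 0 1 = Real.sqrt (2 / Real.pi) := by
  rw [integral_gaussianReal_eq_integral_smul (by simp)]
  have : ∀ x : ℝ, gaussianPDFReal 0 1 x • |x| =
     (fun y => (Real.sqrt (2 * Real.pi))⁻¹ * (y * Real.exp (- (1/2) * y^2))) |x| := by
    intro x
    simp [gaussianPDFReal, smul_eq_mul]
    ring_nf
  simp_rw [this]
  rw [integral_comp_abs (f := fun y => (Real.sqrt (2 * Real.pi))⁻¹ * (y * Real.exp (- (1/2) * y^2))), integral_const_mul, half_int _ (by norm_num)]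
  rw [Real.sqrt_mul (by norm_num), Real.sqrt_div (by norm_num)]
  have := Real.pi_pos
  have h2 := Real.sq_sqrt (show (0:ℝ) ≤ 2 by norm_num)
  field_simp
  linarith

lemma int_abs : Integrable (fun t : ℝ => |t|) (gaussianReal 0 1) :=
  (IsGaussian.integrable_id (μ := gaussianReal 0 1)).abs

lemma tail_gauss (s : ℝ) (hs : 0 ≤ s) :
    Real.exp (-s^2) / 6 ≤ ∫ t, max (|t| - s) 0 ∂gaussianReal 0 1 := by
  rw [integral_gaussianReal_eq_integral_smul (by simp)]
  have hpdf : ∀ x, gaussianPDFReal 0 1 x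
      = (Real.sqrt (2 * Real.pi))⁻¹ * Real.exp (-(1/2) * x ^ 2) := by
    intro x
    simp only [gaussianPDFReal, sub_zero, NNReal.coe_one, mul_one]
    congr 2
    ring
  set c := (Real.sqrt (2 * Real.pi))⁻¹ with hc
  have hc0 : 0 < c := by positivity
  have hc3 : 1 / 3 ≤ c := by
    rw [hc, one_div]
    apply inv_anti₀ (by positivity)
    rw [Real.sqrt_le_iff]
    constructor
    · norm_num
    · linarith [Real.pi_le_four]
  have hint : Integrable (fun x : ℝ => gaussianPDFReal 0 1 x • max (|x| - s) 0) := by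
    have h1 := ((integrable_mul_exp_neg_mul_sq (b := 1/2) (by norm_num)).norm.const_mul c)
    refine h1.mono' ?_ (ae_of_all _ fun x => ?_)
    · exact ((measurable_gaussianPDFReal 0 1).smul (by fun_prop)).aestronglyMeasurable
    · rw [hpdf, smul_eq_mul, norm_mul, norm_mul, norm_mul, Real.norm_of_nonneg hc0.le,
        mul_assoc, mul_comm ‖x‖]
      gcongr
      rw [Real.norm_of_nonneg (le_max_right _ _), Real.norm_eq_abs]
      exact max_le (by linarith) (abs_nonneg x)
  have hsh := integral_add_right_eq_self (μ := volume)
    (fun x : ℝ => gaussianPDFReal 0 1 x • max (|x| - s) 0) s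
  rw [← hsh]
  have hint2 := hint.comp_add_right s
  have hi := half_int 1 one_pos
  have hi2 : Integrable (fun y : ℝ => y * Real.exp (-1 * y ^ 2)) :=
    integrable_mul_exp_neg_mul_sq one_pos
  calc Real.exp (-s^2) / 6 ≤ c * Real.exp (-s^2) * (2 * 1)⁻¹ := by
        nlinarith [Real.exp_pos (-s^2)]
    _ = ∫ y in Set.Ioi (0:ℝ), c * Real.exp (-s^2) * (y * Real.exp (-1 * y ^ 2)) := by
        rw [integral_const_mul, hi]
    _ ≤ ∫ y in Set.Ioi (0:ℝ), gaussianPDFReal 0 1 (y + s) • max (|y + s| - s) 0 := by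
        refine setIntegral_mono_on (hi2.const_mul _).integrableOn hint2.integrableOn
          measurableSet_Ioi fun y hy => ?_
        have hy0 : (0:ℝ) < y := hy
        rw [hpdf, smul_eq_mul, abs_of_nonneg (by linarith), add_sub_cancel_right,
          max_eq_left hy0.le]
        have : Real.exp (-s^2) * Real.exp (-1 * y^2) ≤ Real.exp (-(1/2) * (y + s)^2) := by
          rw [← Real.exp_add]
          apply Real.exp_le_exp.2
          nlinarith [sq_nonneg (y - s)]
        calc c * Real.exp (-s^2) * (y * Real.exp (-1 * y ^ 2))
            = c * y * (Real.exp (-s^2) * Real.exp (-1 * y^2)) := by ring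
          _ ≤ c * y * Real.exp (-(1/2) * (y + s)^2) := by gcongr
          _ = _ := by ring
    _ ≤ _ := by
        refine setIntegral_le_integral hint2 (ae_of_all _ fun x => ?_)
        exact mul_nonneg (gaussianPDFReal_nonneg _ _ _) (le_max_right _ _)

section semi

variable {m : ℕ} {q : (Fin m → ℝ) → ℝ}

lemma q_zero (qs : ∀ (c : ℝ) (x), q (c • x) = |c| * q x) : q 0 = 0 := by
  simpa using qs 0 0

lemma q_neg (qs : ∀ (c : ℝ) (x), q (c • x) = |c| * q x) (x) : q (-x) = q x := by
  simpa using qs (-1) x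

lemma q_nonneg (qs : ∀ (c : ℝ) (x), q (c • x) = |c| * q x)
    (qa : ∀ x y, q (x + y) ≤ q x + q y) (x) : 0 ≤ q x := by
  have := qa x (-x)
  rw [q_neg qs, add_neg_cancel, q_zero qs] at this
  linarith

lemma q_le (qs : ∀ (c : ℝ) (x), q (c • x) = |c| * q x)
    (qa : ∀ x y, q (x + y) ≤ q x + q y) (x) : q x ≤ ∑ i, |x i| * q (Pi.single i 1) := by
  have h : ∀ s : Finset (Fin m), q (∑ i ∈ s, x i • (Pi.single i 1 : Fin m → ℝ))
      ≤ ∑ i ∈ s, |x i| * q (Pi.single i 1) := by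
    intro s
    induction s using Finset.induction_on with
    | empty => simp [q_zero qs]
    | insert a s ha ih =>
      rw [Finset.sum_insert ha, Finset.sum_insert ha]
      refine (qa _ _).trans ?_
      rw [qs]
      linarith
  have hx : x = ∑ i, x i • (Pi.single i 1 : Fin m → ℝ) := by
    ext j; simp [Finset.sum_apply, Pi.single_apply]
  conv_lhs => rw [hx]
  exact h _

lemma q_cont (qs : ∀ (c : ℝ) (x), q (c • x) = |c| * q x)
    (qa : ∀ x y, q (x + y) ≤ q x + q y) : Continuous q := by
  rw [continuous_iff_continuousAt]
  intro x
  rw [ContinuousAt, tendsto_iff_dist_tendsto_zero]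
  have hb : ∀ y, dist (q y) (q x) ≤ ∑ i, |(y - x) i| * q (Pi.single i 1) := by
    intro y
    refine le_trans ?_ (q_le qs qa (y - x))
    rw [Real.dist_eq, abs_le]
    have h1 := qa (y - x) x
    have h2 := qa (-(y - x)) y
    rw [q_neg qs] at h2
    simp only [sub_add_cancel, neg_sub] at h1 h2
    constructor <;> linarith
  refine squeeze_zero (fun _ => dist_nonneg) hb ?_
  have : Continuous (fun y : Fin m → ℝ => ∑ i, |(y - x) i| * q (Pi.single i 1)) := by
    simp only [Pi.sub_apply]
    fun_prop
  have h := this.tendsto x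
  simpa using h

lemma int_coord (i : Fin m) : Integrable (fun x : Fin m → ℝ => |x i|) (_root_.stdGaussian m) :=
  (measurePreserving_eval (fun _ : Fin m => gaussianReal 0 1) i).integrable_comp_of_integrable
    int_abs

lemma coord_val (i : Fin m) : ∫ x, |x i| ∂_root_.stdGaussian m = Real.sqrt (2 / Real.pi) := by
  rw [← abs_gauss]
  have := (measurePreserving_eval (fun _ : Fin m => gaussianReal 0 1) i)
  rw [← this.map_eq, integral_map this.aemeasurable (by fun_prop)]
  rfl

lemma q_int (qs : ∀ (c : ℝ) (x), q (c • x) = |c| * q x)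
    (qa : ∀ x y, q (x + y) ≤ q x + q y) : Integrable q (_root_.stdGaussian m) := by
  have h : Integrable (fun x : Fin m → ℝ => ∑ i, |x i| * q (Pi.single i 1))
      (_root_.stdGaussian m) :=
    integrable_finsetSum _ fun i _ => (int_coord i).mul_const _
  refine h.mono' (q_cont qs qa).aestronglyMeasurable (ae_of_all _ fun x => ?_)
  rw [Real.norm_of_nonneg (q_nonneg qs qa x)]
  exact q_le qs qa x

lemma part_two (qs : ∀ (c : ℝ) (x), q (c • x) = |c| * q x)
    (qa : ∀ x y, q (x + y) ≤ q x + q y) (h1 : ∫ x, q x ∂_root_.stdGaussian m = 1)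
    (A : ℝ) (hA : ∀ i, q (Pi.single i 1) ≤ A) (hm : 0 < m) :
    Real.sqrt (Real.pi / 2) / m ≤ A := by
  have h2 : (1:ℝ) ≤ ∑ i : Fin m, Real.sqrt (2 / Real.pi) * q (Pi.single i 1) := by
    refine h1.symm.le.trans ?_
    refine (integral_mono (q_int qs qa)
      (integrable_finsetSum _ fun i _ => (int_coord i).mul_const _) (q_le qs qa)).trans ?_
    rw [integral_finsetSum _ fun i _ => (int_coord i).mul_const _]
    simp_rw [integral_mul_const, coord_val]
    rfl
  have h3 : (1:ℝ) ≤ m * (Real.sqrt (2 / Real.pi) * A) := by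
    refine h2.trans ((Finset.sum_le_sum (g := fun _ => Real.sqrt (2 / Real.pi) * A)
      fun i _ => ?_).trans ?_)
    · exact mul_le_mul_of_nonneg_left (hA i) (Real.sqrt_nonneg _)
    · simp
  have h4 : Real.sqrt (Real.pi / 2) * Real.sqrt (2 / Real.pi) = 1 := by
    rw [← Real.sqrt_mul (by positivity)]
    have := Real.pi_pos
    rw [show Real.pi / 2 * (2 / Real.pi) = 1 by field_simp]
    simp
  have hm' : (0:ℝ) < m := by exact_mod_cast hm
  rw [div_le_iff₀ hm']
  calc Real.sqrt (Real.pi / 2) = Real.sqrt (Real.pi / 2) * 1 := by ring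
    _ ≤ Real.sqrt (Real.pi / 2) * (m * (Real.sqrt (2 / Real.pi) * A)) := by gcongr
    _ = (Real.sqrt (Real.pi / 2) * Real.sqrt (2 / Real.pi)) * (A * m) := by ring
    _ = A * m := by rw [h4, one_mul]

lemma max_bound (qs : ∀ (c : ℝ) (x), q (c • x) = |c| * q x)
    (qa : ∀ x y, q (x + y) ≤ q x + q y) (h1 : ∫ x, q x ∂_root_.stdGaussian m = 1)
    (u : Fin m → ℝ) (hu : ∑ i, u i ^ 2 = 1) :
    ∫ t, max (|t| * q u) (∫ x, q (prj u x) ∂_root_.stdGaussian m) ∂gaussianReal 0 1 ≤ 1 := by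
  have hlaw := law_eq m u hu
  set T := ((prj u).toContinuousLinearMap.coprod
        (ContinuousLinearMap.toSpanSingleton ℝ u) : ((Fin m → ℝ) × ℝ) →L[ℝ] (Fin m → ℝ)) with hT
  have hTa : ∀ p, T p = prj u p.1 + p.2 • u := by intro p; simp [hT]
  have hcont := q_cont qs qa
  have hPi : Integrable (fun x => q (prj u x)) (_root_.stdGaussian m) :=
    q_int (q := fun x => q (prj u x)) (fun c x => by simp [qs])
      (fun x y => by simpa using qa (prj u x) (prj u y))
  have hpc : Continuous (prj u) := (prj u).continuous_of_finiteDimensional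
  have hTi : Integrable (fun p => q (T p)) ((_root_.stdGaussian m).prod (gaussianReal 0 1)) := by
    have := q_int qs qa
    rw [← hlaw] at this
    exact this.comp_measurable T.continuous.measurable
  have e1 : ∫ t, ∫ x, q (prj u x + t • u) ∂_root_.stdGaussian m ∂gaussianReal 0 1 = 1 := by
    rw [← h1]
    conv_rhs => rw [← hlaw]
    rw [integral_map T.continuous.aemeasurable hcont.aestronglyMeasurable,
      integral_prod_symm _ hTi]
    simp_rw [hTa]
  have hTo : Integrable (fun t => ∫ x, q (prj u x + t • u) ∂_root_.stdGaussian m)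
      (gaussianReal 0 1) := by
    have := hTi.integral_prod_right
    simpa only [hTa] using this
  rw [← e1]
  refine integral_mono ?_ hTo fun t => ?_
  · exact (int_abs.mul_const _).sup (integrable_const _)
  have hi : ∀ t : ℝ, Integrable (fun x => q (prj u x + t • u)) (_root_.stdGaussian m) := by
    intro t
    refine (hPi.add (integrable_const (q (t • u)))).mono'
      (hcont.comp (hpc.add continuous_const)).aestronglyMeasurable (ae_of_all _ fun x => ?_)
    rw [Real.norm_of_nonneg (q_nonneg qs qa _)]
    exact qa _ _
  have hsym : ∫ x, q (prj u x + t • u) ∂_root_.stdGaussian m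
      = ∫ x, q (prj u x - t • u) ∂_root_.stdGaussian m := by
    rw [← std_neg]
    refine integral_congr_ae (ae_of_all _ fun x => ?_)
    simp only [map_neg]
    rw [← q_neg qs]
    congr 1
    abel
  have hi2 : Integrable (fun x => q (prj u x - t • u)) (_root_.stdGaussian m) := by
    have := hi (-t)
    simpa only [neg_smul, ← sub_eq_add_neg] using this
  have hsum := integral_add (hi t) hi2
  rw [← hsym] at hsum
  refine max_le ?_ ?_
  · have : ∫ _ : Fin m → ℝ, 2 * (|t| * q u) ∂_root_.stdGaussian m
      ≤ ∫ x, (q (prj u x + t • u) + q (prj u x - t • u)) ∂_root_.stdGaussian m := by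
      refine integral_mono (integrable_const _) ((hi t).add hi2) fun x => ?_
      have h := qa (prj u x + t • u) (-(prj u x - t • u))
      rw [q_neg qs, show prj u x + t • u + -(prj u x - t • u) = (2 * t) • u by
        rw [two_mul, add_smul]; abel, qs, abs_mul, abs_two] at h
      simp only
      linarith
    simp only [integral_const, probReal_univ, smul_eq_mul] at this
    linarith
  · have : ∫ x, 2 * q (prj u x) ∂_root_.stdGaussian m
      ≤ ∫ x, (q (prj u x + t • u) + q (prj u x - t • u)) ∂_root_.stdGaussian m := by
      refine integral_mono (hPi.const_mul 2) ((hi t).add hi2) fun x => ?_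
      have h := qa (prj u x + t • u) (prj u x - t • u)
      rw [show prj u x + t • u + (prj u x - t • u) = (2 : ℝ) • prj u x by
        rw [two_smul]; abel, qs, abs_two] at h
      simp only
      linarith
    rw [integral_const_mul] at this
    linarith

lemma part_one (hm : 2 ≤ m) (qs : ∀ (c : ℝ) (x), q (c • x) = |c| * q x)
    (qa : ∀ x y, q (x + y) ≤ q x + q y) (h1 : ∫ x, q x ∂_root_.stdGaussian m = 1)
    (u : Fin m → ℝ) (hu : ∑ i, u i ^ 2 = 1)
    (hP : ((m : ℝ) - 1) / m ≤ ∫ x, q (prj u x) ∂_root_.stdGaussian m) :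
    q u ≤ 5 / Real.sqrt (Real.log m) := by
  have hmax := max_bound qs qa h1 u hu
  set M := ∫ x, q (prj u x) ∂_root_.stdGaussian m
  have hm0 : (0:ℝ) < m := by positivity
  have hlog : 0 < Real.log m := Real.log_pos (by exact_mod_cast (by omega : 1 < m))
  by_contra! hcon
  set s := Real.sqrt (Real.log m) / 5 with hs
  have hs0 : 0 < s := by positivity
  have has : 1 ≤ s * q u := by
    have : 5 / Real.sqrt (Real.log m) = 1 / s := by rw [hs]; field_simp
    rw [this, div_lt_iff₀ hs0] at hcon
    linarith
  have hexp : (1:ℝ) / m = Real.exp (-25 * s ^ 2) := by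
    have : -25 * s^2 = - Real.log m := by
      rw [hs, div_pow, Real.sq_sqrt hlog.le]; ring
    rw [this, Real.exp_neg, Real.exp_log hm0, one_div]
  have imax : Integrable (fun t : ℝ => max (|t| * q u) M) (gaussianReal 0 1) :=
    (int_abs.mul_const _).sup (integrable_const _)
  have hM1 : M ≤ 1 := by
    refine le_trans ?_ hmax
    have : ∫ _ : ℝ, M ∂gaussianReal 0 1 ≤ ∫ t, max (|t| * q u) M ∂gaussianReal 0 1 :=
      integral_mono (integrable_const _) imax fun t => le_max_right _ _
    simpa using this
  have it : Integrable (fun t : ℝ => max (|t| - s) 0) (gaussianReal 0 1) :=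
    (int_abs.sub (integrable_const s)).sup (integrable_const 0)
  have key : ∫ t, max (|t| - s) 0 ∂gaussianReal 0 1
      ≤ ∫ t, s * (max (|t| * q u) M - M) ∂gaussianReal 0 1 := by
    refine integral_mono it ((imax.sub (integrable_const M)).const_mul s) fun t => ?_
    refine max_le ?_ ?_
    · have := le_max_left (|t| * q u) M
      have h3 : |t| ≤ |t| * (s * q u) := le_mul_of_one_le_right (abs_nonneg t) has
      have h4 : s * (|t| * q u - M) ≤ s * (max (|t| * q u) M - M) := by gcongr
      simp only
      nlinarith
    · exact mul_nonneg hs0.le (sub_nonneg.2 (le_max_right _ _))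
  rw [integral_const_mul, integral_sub imax (integrable_const M)] at key
  simp only [integral_const, probReal_univ, smul_eq_mul, one_mul] at key
  have hM2 : 1 - M ≤ 1 / m := by
    have : ((m : ℝ) - 1) / m = 1 - 1 / m := by field_simp
    linarith
  have h5 : Real.exp (-s^2) / 6 ≤ s * Real.exp (-25 * s^2) := by
    rw [← hexp]
    refine (tail_gauss s hs0.le).trans (key.trans ?_)
    gcongr
    linarith
  have h6 : Real.exp (-s^2) = Real.exp (24 * s^2) * Real.exp (-25 * s^2) := by
    rw [← Real.exp_add]; congr 1; ring
  rw [h6] at h5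
  have h7 := Real.add_one_le_exp (24 * s^2)
  have h8 := Real.exp_pos (-25 * s^2)
  have h9 : Real.exp (24 * s^2) / 6 ≤ s := by
    by_contra! h
    have := mul_lt_mul_of_pos_right h h8
    linarith
  nlinarith [sq_nonneg (s - 1/8)]

end semi

theorem stmt3 (m : ℕ) (hm : 2 ≤ m)
    (nF : (Fin m → ℝ) → ℝ)
    (hn0 : ∀ x, nF x = 0 ↔ x = 0)
    (hns : ∀ (c : ℝ) (x), nF (c • x) = |c| * nF x)
    (hna : ∀ x y, nF (x + y) ≤ nF x + nF y)
    (J : (Fin m → ℝ) →ₗ[ℝ] (Fin m → ℝ))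
    (hJ1 : (∫ x, nF (J x) ∂stdGaussian m) = 1) :
    ((∀ P : (Fin m → ℝ) →ₗ[ℝ] (Fin m → ℝ), P ∘ₗ P = P →
        (∀ x y : Fin m → ℝ, ∑ i, P x i * y i = ∑ i, x i * P y i) →
        (Module.finrank ℝ (LinearMap.range P) : ℝ) / m ≤
          ∫ x, nF (J (P x)) ∂stdGaussian m) →
      opNormF m nF J ≤ 5 / Real.sqrt (Real.log m)) ∧
    Real.sqrt (Real.pi / 2) / m ≤ opNormF m nF J := by
  have qs : ∀ (c : ℝ) (x), nF (J (c • x)) = |c| * nF (J x) := fun c x => by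
    rw [map_smul, hns]
  have qa : ∀ x y, nF (J (x + y)) ≤ nF (J x) + nF (J y) := fun x y => by
    rw [map_add]; exact hna _ _
  have qn := q_nonneg (q := fun x => nF (J x)) qs qa
  constructor
  · intro hP
    have hne : Nonempty {x : Fin m → ℝ // ∑ i, x i ^ 2 ≤ 1} := ⟨⟨0, by simp⟩⟩
    refine ciSup_le fun x => ?_
    obtain ⟨x, hx⟩ := x
    simp only
    by_cases h0 : ∑ i, x i ^ 2 = 0
    · have hx0 : x = 0 := by
        ext i
        have := (Finset.sum_eq_zero_iff_of_nonneg (fun i _ => sq_nonneg (x i))).1 h0 i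
          (Finset.mem_univ i)
        simpa using this
      rw [hx0, map_zero, (hn0 0).2 rfl]
      positivity
    · have hpos : 0 < ∑ i, x i ^ 2 :=
        lt_of_le_of_ne (Finset.sum_nonneg fun i _ => sq_nonneg _) (Ne.symm h0)
      set r := Real.sqrt (∑ i, x i ^ 2) with hr
      have hr0 : 0 < r := Real.sqrt_pos.2 hpos
      have hr1 : r ≤ 1 := Real.sqrt_le_one.2 hx
      have hr2 : r ^ 2 = ∑ i, x i ^ 2 := Real.sq_sqrt hpos.le
      have hu : ∑ i, (r⁻¹ • x) i ^ 2 = 1 := by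
        simp only [Pi.smul_apply, smul_eq_mul, mul_pow, ← Finset.mul_sum, ← hr2]
        field_simp
      have hb := part_one (q := fun x => nF (J x)) hm qs qa hJ1 (r⁻¹ • x) hu (by
        refine le_trans ?_ (hP (prj (r⁻¹ • x)) (prj_idem _ hu) (prj_sa _))
        gcongr
        exact prj_rank _)
      have hxr : nF (J x) = r * nF (J (r⁻¹ • x)) := by
        rw [qs, abs_of_pos (inv_pos.2 hr0), mul_inv_cancel_left₀ hr0.ne']
      rw [hxr]
      exact (mul_le_of_le_one_left (qn _) hr1).trans hb
  · refine part_two (q := fun x => nF (J x)) qs qa hJ1 _ (fun i => ?_) (by omega)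
    have hbd : BddAbove (Set.range fun x : {x : Fin m → ℝ // ∑ i, x i ^ 2 ≤ 1} =>
        nF (J x.1)) := by
      refine ⟨∑ i, nF (J (Pi.single i 1)), ?_⟩
      rintro _ ⟨⟨x, hx⟩, rfl⟩
      refine (q_le (q := fun x => nF (J x)) qs qa x).trans (Finset.sum_le_sum fun i _ => ?_)
      refine mul_le_of_le_one_left (qn _) ?_
      rw [← sq_le_one_iff_abs_le_one]
      exact (Finset.single_le_sum (f := fun i => x i ^ 2) (fun i _ => sq_nonneg (x i))
        (Finset.mem_univ i)).trans hx
    exact le_ciSup hbd ⟨Pi.single i 1, by simp [Pi.single_apply]⟩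
end

section
/- Let n, m ≥ 1, let G be a real normed space, and let S : ℝ^m → G be linear, where ℝ^m carries the Euclidean norm ‖·‖₂. Let N be a random n×m matrix with entries N_{ij} = X_{ij}/√n, where the X_{ij} are independent standard normal random variables, and let X be a standard Gaussian vector in ℝ^m. Then for every x ∈ ℝ^m, 𝔼‖S x − S(Nᵀ N x)‖_G ≤ (2/√n) · ‖x‖₂ · 𝔼‖S X‖_G. In particular, the linear rank-n Monte Carlo method A^ω := S Nᵀ N satisfies sup_{‖x‖₂ ≤ 1} 𝔼‖S x − A^ω(x)‖_G ≤ (2/√n) · 𝔼‖S X‖_G. -/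
open MeasureTheory ProbabilityTheory

/-- Abbreviation for the Gaussian measure on vectors. -/
noncomputable abbrev gv (m : ℕ) : Measure (Fin m → ℝ) :=
  Measure.pi fun _ => gaussianReal 0 1

/-- Abbreviation for the Gaussian measure on matrices. -/
noncomputable abbrev gm (n m : ℕ) : Measure (Fin n → Fin m → ℝ) :=
  Measure.pi fun _ => gv m

lemma isGaussian_pi_aux {ι : Type*} [Fintype ι] {E : Type*} [NormedAddCommGroup E]
    [NormedSpace ℝ E] [MeasurableSpace E] [BorelSpace E] [SecondCountableTopology E]
    [CompleteSpace E] (μ : Measure E) [IsGaussian μ] :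
    IsGaussian (Measure.pi fun _ : ι => μ) := by
  have h : iIndepFun (fun (i : ι) (ω : ι → E) => ω i) (Measure.pi fun _ : ι => μ) :=
    iIndepFun_pi (X := fun (_ : ι) (x : E) => x) (fun _ => aemeasurable_id)
  have h2 : ∀ i : ι, HasGaussianLaw (fun (ω : ι → E) => ω i) (Measure.pi fun _ : ι => μ) := by
    intro i
    refine ⟨?_⟩
    have := (measurePreserving_eval (α := fun _ : ι => E) (fun _ : ι => μ) i).map_eq
    change IsGaussian (Measure.map (Function.eval i : (ι → E) → E) _)
    rw [this]; infer_instance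
  have h3 := (iIndepFun.hasGaussianLaw h2 h).isGaussian_map
  simpa using h3

instance isGaussian_gv (m : ℕ) : IsGaussian (gv m) := isGaussian_pi_aux _
instance isGaussian_gm (n m : ℕ) : IsGaussian (gm n m) := isGaussian_pi_aux _

lemma gv_memLp (m : ℕ) (j : Fin m) : MemLp (fun y : Fin m → ℝ => y j) 2 (gv m) :=
  IsGaussian.memLp_dual (gv m) (ContinuousLinearMap.proj j) 2 (by simp)

lemma gm_memLp (n m : ℕ) (i : Fin n) (j : Fin m) :
    MemLp (fun y : Fin n → Fin m → ℝ => y i j) 2 (gm n m) :=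
  IsGaussian.memLp_dual (gm n m)
    ((ContinuousLinearMap.proj j).comp (ContinuousLinearMap.proj i :
      (Fin n → Fin m → ℝ) →L[ℝ] (Fin m → ℝ))) 2 (by simp)

lemma gv_integral (m : ℕ) (j : Fin m) : ∫ y, y j ∂(gv m) = 0 := by
  rw [integral_eval]; simp

lemma gm_integral (n m : ℕ) (i : Fin n) (j : Fin m) : ∫ y, y i j ∂(gm n m) = 0 := by
  exact (integral_comp_eval (μ := fun _ : Fin n => gv m) (i := i)
    (f := fun y : Fin m → ℝ => y j) (gv_memLp m j).aestronglyMeasurable).trans (gv_integral m j)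

lemma gv_integral_mul (m : ℕ) (j l : Fin m) :
    ∫ y, y j * y l ∂(gv m) = if j = l then 1 else 0 := by
  split_ifs with h
  · subst h
    refine (integral_comp_eval (μ := fun _ : Fin m => gaussianReal 0 1) (i := j)
      (f := fun y : ℝ => y * y) (by fun_prop)).trans ?_
    have := variance_eq_sub (X := fun x : ℝ => x) (μ := gaussianReal 0 1)
      (memLp_id_gaussianReal 2)
    simp only [variance_fun_id_gaussianReal, integral_id_gaussianReal] at this
    simp [← pow_two] at this ⊢
    linarith
  · have hi : iIndepFun (fun (i : Fin m) (ω : Fin m → ℝ) => ω i) (gv m) :=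
      iIndepFun_pi (X := fun _ x => x) (fun _ => aemeasurable_id)
    rw [(hi.indepFun h).integral_fun_mul_eq_mul_integral
      (gv_memLp m j).aestronglyMeasurable (gv_memLp m l).aestronglyMeasurable,
      gv_integral, zero_mul]

lemma gm_integral_mul (n m : ℕ) (i : Fin n) (j l : Fin m) :
    ∫ y, y i j * y i l ∂(gm n m) = if j = l then 1 else 0 := by
  exact (integral_comp_eval (μ := fun _ : Fin n => gv m) (i := i)
    (f := fun y : Fin m → ℝ => y j * y l) (by fun_prop)).trans (gv_integral_mul m j l)

lemma gm_integrable (n m : ℕ) (i : Fin n) (j : Fin m) :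
    Integrable (fun y : Fin n → Fin m → ℝ => y i j) (gm n m) :=
  (gm_memLp n m i j).integrable (by norm_num)

lemma gm_integrable_mul (n m : ℕ) (i i' : Fin n) (j l : Fin m) :
    Integrable (fun y : Fin n → Fin m → ℝ => y i j * y i' l) (gm n m) :=
  (gm_memLp n m i j).integrable_mul (gm_memLp n m i' l)

lemma charFunDual_gv (m : ℕ) (L : StrongDual ℝ (Fin m → ℝ)) :
    charFunDual (gv m) L = Complex.exp (-((∑ j, (L (Pi.single j 1)) ^ 2 : ℝ) : ℂ) / 2) := by
  rw [charFunDual_pi]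
  have h : ∀ i : Fin m, charFunDual (gaussianReal 0 1)
      (L.comp (.single ℝ (fun _ : Fin m => ℝ) i)) =
      Complex.exp (-((L (Pi.single i 1) ^ 2 : ℝ) : ℂ) / 2) := by
    intro i
    rw [IsGaussian.charFunDual_eq, integral_complex_ofReal,
      integral_continuousLinearMap_gaussianReal, variance_continuousLinearMap_gaussianReal]
    simp [neg_div, sq_nonneg]
  simp_rw [h, ← Complex.exp_sum]
  congr 1
  push_cast
  rw [← Finset.sum_div, Finset.sum_neg_distrib]

/-- The law of a linear combination of the rows. -/
lemma map_comb (n m : ℕ) (v : Fin n → ℝ) :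
    (gm n m).map (fun ω => ∑ i, v i • ω i) =
      (gv m).map (fun y => Real.sqrt (∑ i, v i ^ 2) • y) := by
  let T : (Fin n → Fin m → ℝ) →L[ℝ] (Fin m → ℝ) :=
    ∑ i, v i • (ContinuousLinearMap.proj i : (Fin n → Fin m → ℝ) →L[ℝ] (Fin m → ℝ))
  let U : (Fin m → ℝ) →L[ℝ] (Fin m → ℝ) :=
    Real.sqrt (∑ i, v i ^ 2) • ContinuousLinearMap.id ℝ (Fin m → ℝ)
  have hT : (fun ω : Fin n → Fin m → ℝ => ∑ i, v i • ω i) = T := by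
    ext ω j; simp [T]
  have hU : (fun y : Fin m → ℝ => Real.sqrt (∑ i, v i ^ 2) • y) = U := by
    ext ω j; simp [U]
  rw [hT, hU]
  refine Measure.ext_of_charFunDual ?_
  ext L
  rw [charFunDual_map, charFunDual_map, charFunDual_pi, charFunDual_gv]
  simp_rw [charFunDual_gv, ← Complex.exp_sum]
  congr 1
  rw [← Finset.sum_div, Finset.sum_neg_distrib]
  congr 2
  rw [← Complex.ofReal_sum]
  congr 1
  have h1 : ∀ (i : Fin n) (y : Fin m → ℝ), T (Pi.single i y) = v i • y := by
    intro i y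
    rw [← hT]
    simp only
    rw [Finset.sum_eq_single i]
    · simp
    · intro b _ hb; simp [hb]
    · simp
  simp only [ContinuousLinearMap.comp_apply,
    ContinuousLinearMap.single_apply, h1, ← hU, map_smul, smul_eq_mul, mul_pow]
  rw [Real.sq_sqrt (by positivity), ← Finset.mul_sum, Finset.sum_mul_sum]

/-- The bilinear expression used for decoupling. -/
def bil {n m : ℕ} (x : Fin m → ℝ) (ω ω' : Fin n → Fin m → ℝ) : Fin m → ℝ :=
  fun j => ∑ i, ω i j * ∑ l, ω' i l * x l

lemma bil_smul {n m : ℕ} (x : Fin m → ℝ) (c d : ℝ) (ω ω' : Fin n → Fin m → ℝ) :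
    bil x (c • ω) (d • ω') = (c * d) • bil x ω ω' := by
  ext j
  simp only [bil, Pi.smul_apply, smul_eq_mul, Finset.mul_sum]
  refine Finset.sum_congr rfl fun i _ => Finset.sum_congr rfl fun l _ => by ring

lemma bil_expand {n m : ℕ} (x : Fin m → ℝ) (ω ω' : Fin n → Fin m → ℝ) (j : Fin m) :
    bil x (ω + ω') (ω' - ω) j = ∑ i, ∑ l,
      ((ω' i j * ω' i l) * x l + (ω' i l * (ω i j * x l) - ω' i j * (ω i l * x l)
        - ω i j * ω i l * x l)) := by
  simp only [bil, Pi.add_apply, Pi.sub_apply, Finset.mul_sum]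
  refine Finset.sum_congr rfl fun i _ => Finset.sum_congr rfl fun l _ => by ring

lemma bil_integrable_snd {n m : ℕ} (x : Fin m → ℝ) (ω : Fin n → Fin m → ℝ) (j : Fin m) :
    Integrable (fun ω' => bil x (ω + ω') (ω' - ω) j) (gm n m) := by
  simp_rw [bil_expand]
  refine integrable_finsetSum _ fun i _ => integrable_finsetSum _ fun l _ => ?_
  exact ((gm_integrable_mul n m i i j l).mul_const _).add
    ((((gm_integrable n m i l).mul_const _).sub ((gm_integrable n m i j).mul_const _)).sub
      (integrable_const _))

lemma bil_integral_snd {n m : ℕ} (x : Fin m → ℝ) (ω : Fin n → Fin m → ℝ) (j : Fin m) :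
    ∫ ω', bil x (ω + ω') (ω' - ω) j ∂(gm n m) = n * x j - bil x ω ω j := by
  simp_rw [bil_expand]
  have h1 : ∀ i l, Integrable (fun ω' : Fin n → Fin m → ℝ => ω' i j * ω' i l * x l) (gm n m) :=
    fun i l => (gm_integrable_mul n m i i j l).mul_const _
  have h2 : ∀ i l, Integrable (fun ω' : Fin n → Fin m → ℝ => ω' i l * (ω i j * x l)) (gm n m) :=
    fun i l => (gm_integrable n m i l).mul_const _
  have h3 : ∀ i l, Integrable (fun ω' : Fin n → Fin m → ℝ => ω' i j * (ω i l * x l)) (gm n m) :=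
    fun i l => (gm_integrable n m i j).mul_const _
  have h23 : ∀ i l, Integrable (fun ω' : Fin n → Fin m → ℝ =>
      ω' i l * (ω i j * x l) - ω' i j * (ω i l * x l)) (gm n m) :=
    fun i l => (h2 i l).sub (h3 i l)
  have h4 : ∀ i l, Integrable (fun _ : Fin n → Fin m → ℝ => ω i j * ω i l * x l) (gm n m) :=
    fun i l => integrable_const _
  have h234 : ∀ i l, Integrable (fun ω' : Fin n → Fin m → ℝ =>
      ω' i l * (ω i j * x l) - ω' i j * (ω i l * x l) - ω i j * ω i l * x l) (gm n m) :=
    fun i l => (h23 i l).sub (h4 i l)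
  have h1234 : ∀ i l, Integrable (fun ω' : Fin n → Fin m → ℝ => ω' i j * ω' i l * x l +
      (ω' i l * (ω i j * x l) - ω' i j * (ω i l * x l) - ω i j * ω i l * x l)) (gm n m) :=
    fun i l => (h1 i l).add (h234 i l)
  rw [integral_finsetSum _ fun i _ => integrable_finsetSum _ fun l _ => h1234 i l]
  have key : ∀ i l, ∫ ω', ((ω' i j * ω' i l) * x l + (ω' i l * (ω i j * x l)
      - ω' i j * (ω i l * x l) - ω i j * ω i l * x l)) ∂(gm n m)
      = (if j = l then 1 else 0) * x l - ω i j * ω i l * x l := by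
    intro i l
    rw [integral_add (h1 i l) (h234 i l), integral_sub (h23 i l) (h4 i l),
      integral_sub (h2 i l) (h3 i l), integral_mul_const, integral_mul_const, integral_mul_const,
      gm_integral_mul, gm_integral, gm_integral]
    simp
    ring
  have : ∀ i : Fin n, ∫ ω', ∑ l, ((ω' i j * ω' i l) * x l + (ω' i l * (ω i j * x l)
      - ω' i j * (ω i l * x l) - ω i j * ω i l * x l)) ∂(gm n m)
      = x j - ω i j * ∑ l, ω i l * x l := by
    intro i
    rw [integral_finsetSum _ fun l _ => h1234 i l]
    simp_rw [key]
    rw [Finset.sum_sub_distrib]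
    simp [Finset.mul_sum, mul_assoc]
  simp_rw [this]
  simp [bil]

lemma bil_integrable_prod {n m : ℕ} (x : Fin m → ℝ) :
    Integrable (fun p : (Fin n → Fin m → ℝ) × (Fin n → Fin m → ℝ) => bil x p.1 p.2)
      ((gm n m).prod (gm n m)) := by
  refine Integrable.of_eval fun j => ?_
  simp only [bil, Finset.mul_sum]
  refine integrable_finsetSum _ fun i _ => integrable_finsetSum _ fun l _ => ?_
  exact (gm_integrable n m i j).mul_prod ((gm_integrable n m i l).mul_const (x l))

lemma bil_integrable_diag {n m : ℕ} (x : Fin m → ℝ) :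
    Integrable (fun ω : Fin n → Fin m → ℝ => bil x ω ω) (gm n m) := by
  refine Integrable.of_eval fun j => ?_
  simp only [bil, Finset.mul_sum]
  refine integrable_finsetSum _ fun i _ => integrable_finsetSum _ fun l _ => ?_
  simp_rw [← mul_assoc]
  exact (gm_integrable_mul n m i i j l).mul_const _

lemma gm_integral_id (n m : ℕ) : ∫ y, y ∂(gm n m) = 0 := by
  have h1 : ∀ i : Fin n, Integrable (fun y : Fin n → Fin m → ℝ => y i) (gm n m) :=
    fun i => Integrable.of_eval fun j => gm_integrable n m i j
  ext i j
  rw [eval_integral h1, eval_integral (fun j => gm_integrable n m i j), gm_integral]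
  rfl

lemma rot_mp (n m : ℕ) : MeasurePreserving
    (ContinuousLinearMap.rotation (E := Fin n → Fin m → ℝ) (Real.pi / 4))
    ((gm n m).prod (gm n m)) ((gm n m).prod (gm n m)) :=
  ⟨by fun_prop, IsGaussian.map_rotation_eq_self (by simpa using gm_integral_id n m) _⟩

lemma bil_rot {n m : ℕ} (x : Fin m → ℝ) (p : (Fin n → Fin m → ℝ) × (Fin n → Fin m → ℝ)) :
    bil x (p.1 + p.2) (p.2 - p.1) = (2 : ℝ) •
      bil x (ContinuousLinearMap.rotation (Real.pi / 4) p).1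
        (ContinuousLinearMap.rotation (Real.pi / 4) p).2 := by
  rw [ContinuousLinearMap.rotation_apply, Real.cos_pi_div_four, Real.sin_pi_div_four]
  have h1 : (√2 / 2 : ℝ) • p.1 + (√2 / 2 : ℝ) • p.2 = (√2 / 2 : ℝ) • (p.1 + p.2) := by
    rw [smul_add]
  have h2 : -(√2 / 2 : ℝ) • p.1 + (√2 / 2 : ℝ) • p.2 = (√2 / 2 : ℝ) • (p.2 - p.1) := by
    rw [smul_sub, neg_smul]; abel
  simp only [h1, h2, bil_smul, smul_smul]
  have : (2 * (√2 / 2 * (√2 / 2)) : ℝ) = 1 := by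
    have := Real.mul_self_sqrt (show (0:ℝ) ≤ 2 by norm_num)
    linarith
  rw [this, one_smul]

lemma norm_S_integrable {G : Type*} [NormedAddCommGroup G] [NormedSpace ℝ G] {m : ℕ}
    (S : (Fin m → ℝ) →ₗ[ℝ] G) {Ω : Type*} [MeasurableSpace Ω] {μ : Measure Ω}
    {f : Ω → Fin m → ℝ} (hf : Integrable f μ) : Integrable (fun ω => ‖S (f ω)‖) μ :=
  (S.toContinuousLinearMap.integrable_comp hf).norm

lemma decouple {G : Type*} [NormedAddCommGroup G] [NormedSpace ℝ G] {n m : ℕ}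
    (S : (Fin m → ℝ) →ₗ[ℝ] G) (x : Fin m → ℝ) :
    ∫ ω, ‖S ((n : ℝ) • x - bil x ω ω)‖ ∂(gm n m) ≤
      2 * ∫ p, ‖S (bil x p.1 p.2)‖ ∂((gm n m).prod (gm n m)) := by
  have hcont : Continuous fun y => ‖S y‖ := (LinearMap.continuous_of_finiteDimensional S).norm
  have hconv : ConvexOn ℝ Set.univ fun y => ‖S y‖ :=
    (convexOn_univ_norm (E := G)).comp_linearMap S
  have hrot := (rot_mp n m)
  have hint : Integrable (fun p : (Fin n → Fin m → ℝ) × (Fin n → Fin m → ℝ) =>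
      ‖S (bil x (p.1 + p.2) (p.2 - p.1))‖) ((gm n m).prod (gm n m)) := by
    simp_rw [bil_rot]
    refine norm_S_integrable S (Integrable.smul (2 : ℝ) ?_)
    exact hrot.integrable_comp_of_integrable (bil_integrable_prod x)
  have hval : ∫ p, ‖S (bil x (p.1 + p.2) (p.2 - p.1))‖ ∂((gm n m).prod (gm n m)) =
      2 * ∫ p, ‖S (bil x p.1 p.2)‖ ∂((gm n m).prod (gm n m)) := by
    simp_rw [bil_rot, map_smul, norm_smul]
    rw [integral_const_mul]
    congr 1
    · simp
    · conv_rhs => rw [← hrot.map_eq]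
      rw [integral_map (by fun_prop)]
      rw [hrot.map_eq]
      exact (norm_S_integrable S (bil_integrable_prod x)).aestronglyMeasurable
  rw [← hval, integral_prod _ hint]
  refine integral_mono (norm_S_integrable S ((integrable_const _).sub (bil_integrable_diag x)))
    hint.integral_prod_left fun ω => ?_
  have hI : Integrable (fun ω' => bil x (ω + ω') (ω' - ω)) (gm n m) :=
    Integrable.of_eval fun j => bil_integrable_snd x ω j
  have hJ := hconv.map_integral_le (μ := gm n m) (f := fun ω' => bil x (ω + ω') (ω' - ω))
    hcont.continuousOn isClosed_univ (by simp) hI (norm_S_integrable S hI)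
  have hE : ∫ ω', bil x (ω + ω') (ω' - ω) ∂(gm n m) = (n : ℝ) • x - bil x ω ω := by
    ext j
    rw [eval_integral (fun j => bil_integrable_snd x ω j), bil_integral_snd]
    simp
  rw [hE] at hJ
  exact hJ

lemma fixed_row {G : Type*} [NormedAddCommGroup G] [NormedSpace ℝ G] {n m : ℕ}
    (S : (Fin m → ℝ) →ₗ[ℝ] G) (x : Fin m → ℝ) (ω' : Fin n → Fin m → ℝ) :
    ∫ ω, ‖S (bil x ω ω')‖ ∂(gm n m) =
      Real.sqrt (∑ i, (∑ l, ω' i l * x l) ^ 2) * ∫ y, ‖S y‖ ∂(gv m) := by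
  have hcont : Continuous fun y => ‖S y‖ := (LinearMap.continuous_of_finiteDimensional S).norm
  have h := map_comb n m (fun i => ∑ l, ω' i l * x l)
  have h1 : ∀ ω, bil x ω ω' = ∑ i, (∑ l, ω' i l * x l) • ω i := by
    intro ω; ext j
    simp [bil, Finset.sum_apply, mul_comm]
  simp_rw [h1]
  have hm1 : AEMeasurable (fun ω : Fin n → Fin m → ℝ => ∑ i, (∑ l, ω' i l * x l) • ω i)
      (gm n m) := (Continuous.measurable (by fun_prop)).aemeasurable
  rw [← integral_map (f := fun y => ‖S y‖) hm1 hcont.aestronglyMeasurable, h,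
    integral_map (by fun_prop) hcont.aestronglyMeasurable]
  simp_rw [map_smul, norm_smul]
  rw [integral_const_mul, Real.norm_of_nonneg (Real.sqrt_nonneg _)]

lemma second_moment {n m : ℕ} (x : Fin m → ℝ) :
    Integrable (fun ω : Fin n → Fin m → ℝ => ∑ i, (∑ l, ω i l * x l) ^ 2) (gm n m) ∧
    ∫ ω : Fin n → Fin m → ℝ, ∑ i, (∑ l, ω i l * x l) ^ 2 ∂(gm n m) = n * ∑ j, x j ^ 2 := by
  have hexp : ∀ ω : Fin n → Fin m → ℝ, ∑ i, (∑ l, ω i l * x l) ^ 2 =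
      ∑ i, ∑ j, ∑ l, ω i j * ω i l * (x j * x l) := by
    intro ω
    refine Finset.sum_congr rfl fun i _ => ?_
    rw [sq, Finset.sum_mul_sum]
    refine Finset.sum_congr rfl fun j _ => Finset.sum_congr rfl fun l _ => by ring
  have h1 : ∀ i j l, Integrable (fun ω : Fin n → Fin m → ℝ => ω i j * ω i l * (x j * x l))
      (gm n m) := fun i j l => (gm_integrable_mul n m i i j l).mul_const _
  have h2 := fun i j => integrable_finsetSum Finset.univ fun l _ => h1 i j l
  have h3 := fun i => integrable_finsetSum Finset.univ fun j _ => h2 i j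
  simp_rw [hexp]
  refine ⟨integrable_finsetSum _ fun i _ => h3 i, ?_⟩
  rw [integral_finsetSum _ fun i _ => h3 i]
  have : ∀ i : Fin n, ∫ ω : Fin n → Fin m → ℝ, ∑ j, ∑ l, ω i j * ω i l * (x j * x l) ∂(gm n m)
      = ∑ j, x j ^ 2 := by
    intro i
    rw [integral_finsetSum _ fun j _ => h2 i j]
    refine Finset.sum_congr rfl fun j _ => ?_
    rw [integral_finsetSum _ fun l _ => h1 i j l]
    simp_rw [integral_mul_const, gm_integral_mul]
    simp [sq]
  simp_rw [this]
  simp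

lemma first_moment {n m : ℕ} (x : Fin m → ℝ) :
    ∫ ω : Fin n → Fin m → ℝ, Real.sqrt (∑ i, (∑ l, ω i l * x l) ^ 2) ∂(gm n m)
      ≤ Real.sqrt n * Real.sqrt (∑ j, x j ^ 2) := by
  obtain ⟨hi, hv⟩ := second_moment (n := n) x
  have hc : Continuous (fun ω : Fin n → Fin m → ℝ => Real.sqrt (∑ i, (∑ l, ω i l * x l) ^ 2)) := by
    fun_prop
  have hL : MemLp (fun ω : Fin n → Fin m → ℝ => Real.sqrt (∑ i, (∑ l, ω i l * x l) ^ 2)) 2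
      (gm n m) := by
    rw [memLp_two_iff_integrable_sq hc.aestronglyMeasurable]
    refine hi.congr (Filter.Eventually.of_forall fun ω => ?_)
    simp only
    rw [Real.sq_sqrt (by positivity)]
  have hvar := variance_nonneg
    (fun ω : Fin n → Fin m → ℝ => Real.sqrt (∑ i, (∑ l, ω i l * x l) ^ 2)) (gm n m)
  rw [variance_eq_sub hL] at hvar
  have he : ∫ ω : Fin n → Fin m → ℝ,
      ((fun ω : Fin n → Fin m → ℝ => Real.sqrt (∑ i, (∑ l, ω i l * x l) ^ 2)) ^ 2) ω ∂(gm n m)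
      = n * ∑ j, x j ^ 2 := by
    rw [← hv]
    refine integral_congr_ae (Filter.Eventually.of_forall fun ω => ?_)
    simp only [Pi.pow_apply]
    rw [Real.sq_sqrt (by positivity)]
  rw [he] at hvar
  rw [← Real.sqrt_mul (by positivity)]
  exact Real.le_sqrt_of_sq_le (by linarith)

lemma main_bound {G : Type*} [NormedAddCommGroup G] [NormedSpace ℝ G]
    (n m : ℕ) (hn : 1 ≤ n) (S : (Fin m → ℝ) →ₗ[ℝ] G) (x : Fin m → ℝ) :
    ∫ ω, ‖S x - S (fun j => (1 / (n : ℝ)) * ∑ i, ω i j * ∑ l, ω i l * x l)‖ ∂(gm n m)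
      ≤ 2 / Real.sqrt n * Real.sqrt (∑ j, x j ^ 2) * ∫ y, ‖S y‖ ∂(gv m) := by
  have hn0 : (0 : ℝ) < n := by exact_mod_cast hn
  have h1 : ∀ ω : Fin n → Fin m → ℝ,
      ‖S x - S (fun j => (1 / (n : ℝ)) * ∑ i, ω i j * ∑ l, ω i l * x l)‖ =
      (1 / (n : ℝ)) * ‖S ((n : ℝ) • x - bil x ω ω)‖ := by
    intro ω
    have : (fun j => (1 / (n : ℝ)) * ∑ i, ω i j * ∑ l, ω i l * x l) =
        (1 / (n : ℝ)) • bil x ω ω := by ext j; simp [bil]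
    rw [this, ← map_sub]
    have h2 : x - (1 / (n : ℝ)) • bil x ω ω = (1 / (n : ℝ)) • ((n : ℝ) • x - bil x ω ω) := by
      rw [smul_sub, smul_smul, one_div_mul_cancel hn0.ne', one_smul]
    rw [h2, map_smul, norm_smul, Real.norm_of_nonneg (by positivity)]
  simp_rw [h1]
  rw [integral_const_mul]
  have hE : 0 ≤ ∫ y, ‖S y‖ ∂(gv m) := integral_nonneg fun _ => norm_nonneg _
  have hb : ∫ p, ‖S (bil x p.1 p.2)‖ ∂((gm n m).prod (gm n m)) ≤
      Real.sqrt n * Real.sqrt (∑ j, x j ^ 2) * ∫ y, ‖S y‖ ∂(gv m) := by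
    rw [integral_prod_symm _ (norm_S_integrable S (bil_integrable_prod x))]
    simp_rw [fixed_row]
    rw [integral_mul_const]
    exact mul_le_mul_of_nonneg_right (first_moment x) hE
  calc _ ≤ (1 / (n : ℝ)) * (2 * (Real.sqrt n * Real.sqrt (∑ j, x j ^ 2) * ∫ y, ‖S y‖ ∂(gv m))) :=
        mul_le_mul_of_nonneg_left ((decouple S x).trans
          (mul_le_mul_of_nonneg_left hb (by norm_num))) (by positivity)
    _ = _ := by
        have : (2 : ℝ) / Real.sqrt n = (1 / (n : ℝ)) * (2 * Real.sqrt n) := by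
          have h := Real.mul_self_sqrt hn0.le
          have : 0 < Real.sqrt n := Real.sqrt_pos.2 hn0
          rw [div_eq_iff this.ne', mul_assoc, mul_assoc, h]
          field_simp
        rw [this]; ring

theorem stmt4 {G : Type*} [NormedAddCommGroup G] [NormedSpace ℝ G]
    (n m : ℕ) (hn : 1 ≤ n) (hm : 1 ≤ m)
    (S : (Fin m → ℝ) →ₗ[ℝ] G) :
    (∀ x : Fin m → ℝ,
      (∫ ω : Fin n → Fin m → ℝ,
          ‖S x - S (fun j => (1 / (n : ℝ)) * ∑ i, ω i j * ∑ l, ω i l * x l)‖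
        ∂(Measure.pi fun _ => Measure.pi fun _ => gaussianReal 0 1))
      ≤ 2 / Real.sqrt n * Real.sqrt (∑ j, x j ^ 2) * ∫ y, ‖S y‖ ∂stdGaussian m) ∧
    (∀ x : Fin m → ℝ, Real.sqrt (∑ j, x j ^ 2) ≤ 1 →
      (∫ ω : Fin n → Fin m → ℝ,
          ‖S x - S (fun j => (1 / (n : ℝ)) * ∑ i, ω i j * ∑ l, ω i l * x l)‖
        ∂(Measure.pi fun _ => Measure.pi fun _ => gaussianReal 0 1))
      ≤ 2 / Real.sqrt n * ∫ y, ‖S y‖ ∂stdGaussian m) := by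
  have key := main_bound n m hn S
  refine ⟨fun x => key x, fun x hx => (key x).trans ?_⟩
  have hE : 0 ≤ ∫ y, ‖S y‖ ∂(gv m) := integral_nonneg fun _ => norm_nonneg _
  change _ ≤ 2 / Real.sqrt n * ∫ y, ‖S y‖ ∂(gv m)
  refine mul_le_mul_of_nonneg_right ?_ hE
  exact mul_le_of_le_one_right (by positivity) hx
end

section
/- Let d ≥ 100 be an integer and let n ∈ ℕ with n ≤ 108 · exp(√d − 10). Consider any randomized adaptive sampling algorithm of cardinality n for monotone Boolean functions: a probability space (Ω, Σ, ℙ) and, for each ω ∈ Ω, n sample points where the k-th point t_k^ω ∈ {0,1}^d is chosen measurably as a function of ω and of the previously observed values f(t₁^ω), …, f(t_{k−1}^ω), together with an output map that produces a Boolean function A^ω(f) : {0,1}^d → {0,1} depending on f only through the n observed values, measurably in ω. Then sup over monotone Boolean f : {0,1}^d → {0,1} of 𝔼_ω [ 2^{−d} · #{x ∈ {0,1}^d : f(x) ≠ (A^ω(f))(x)} ] > 1/30. More generally, for every 0 < ε ≤ 1/30 and every integer d ≥ 1/(9ε²), the same conclusion with lower bound > ε holds for every such algorithm with n ≤ 108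 · exp(√d/(30ε) − 10). -/
open MeasureTheory

/-- product Bernoulli weight -/
noncomputable def bw {δ : Type*} (p : ℝ) (D W : Finset δ) : ℝ :=
  p ^ W.card * (1 - p) ^ (D.card - W.card)

lemma bw_nonneg {δ : Type*} {p : ℝ} (h0 : 0 ≤ p) (h1 : p ≤ 1) (D W : Finset δ) :
    0 ≤ bw p D W := by
  have : 0 ≤ 1 - p := by linarith
  unfold bw; positivity

lemma bw_sum {δ : Type*} (p : ℝ) (D : Finset δ) :
    ∑ W ∈ D.powerset, bw p D W = 1 := by
  unfold bw
  rw [Finset.sum_pow_mul_eq_add_pow]; simp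

lemma sum_split {δ : Type*} [DecidableEq δ] {D E : Finset δ} (h : E ⊆ D) (F : Finset δ → ℝ) :
    ∑ W ∈ D.powerset, F W = ∑ U ∈ (D \ E).powerset, ∑ V ∈ E.powerset, F (U ∪ V) := by
  rw [← Finset.sum_product']
  refine Finset.sum_nbij' (fun W => (W \ E, W ∩ E)) (fun z => z.1 ∪ z.2) ?_ ?_ ?_ ?_ ?_
  · intro W hW
    simp only [Finset.mem_product, Finset.mem_powerset] at *
    exact ⟨Finset.sdiff_subset_sdiff hW le_rfl, Finset.inter_subset_right⟩
  · intro z hz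
    simp only [Finset.mem_product, Finset.mem_powerset] at *
    exact Finset.union_subset (hz.1.trans Finset.sdiff_subset) (hz.2.trans h)
  · intro W hW
    simp [Finset.sdiff_union_inter]
  · rintro ⟨U, V⟩ hz
    simp only [Finset.mem_product, Finset.mem_powerset] at hz
    ext w
    · have h1 := @hz.1 w
      have h2 := @hz.2 w
      simp only [Finset.mem_sdiff, Finset.mem_union] at *
      tauto
    · have h1 := @hz.1 w
      have h2 := @hz.2 w
      simp only [Finset.mem_sdiff, Finset.mem_union, Finset.mem_inter] at *
      tauto
  · intro W hW
    simp [Finset.sdiff_union_inter]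

lemma bw_split {δ : Type*} [DecidableEq δ] (p : ℝ) {D E U V : Finset δ} (h : E ⊆ D)
    (hU : U ⊆ D \ E) (hV : V ⊆ E) : bw p D (U ∪ V) = bw p (D \ E) U * bw p E V := by
  have hd : Disjoint U V := by
    refine Finset.disjoint_of_subset_left hU (Finset.disjoint_of_subset_right hV ?_)
    exact Finset.sdiff_disjoint
  have h1 := Finset.card_le_card hU
  have h2 := Finset.card_le_card hV
  have h3 := Finset.card_sdiff_add_card_eq_card h
  unfold bw
  rw [Finset.card_union_of_disjoint hd]
  have : D.card - (U.card + V.card) = ((D \ E).card - U.card) + (E.card - V.card) := by omega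
  rw [this, pow_add, pow_add]; ring

/-- the random monotone function -/
def fW {X δ : Type*} [DecidableEq δ] (below : X → Finset δ) (hi : X → Prop) [DecidablePred hi]
    (W : Finset δ) (x : X) : Bool := decide (hi x ∨ ∃ w ∈ W, w ∈ below x)

/-- elements excluded by zero-answers -/
def Rev {X δ : Type*} [DecidableEq δ] (below : X → Finset δ) (hi : X → Prop) [DecidablePred hi]
    (T : (X → Bool) → Finset X) (W : Finset δ) : Finset δ :=
  ((T (fW below hi W)).filter fun y => fW below hi W y = false).biUnion below

lemma point_bound {X δ : Type*} [DecidableEq δ] (below : X → Finset δ)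
    (hi : X → Prop) [DecidablePred hi] {p : ℝ} (h0 : 0 ≤ p) (h1 : p ≤ 1)
    (T : (X → Bool) → Finset X) (out : (X → Bool) → X → Bool)
    (hT : ∀ f g : X → Bool, (∀ y ∈ T f, f y = g y) → out f = out g)
    (x : X) (hx : ¬ hi x) (U : Finset δ) (hU : Disjoint U (below x)) :
    min ((1 - p) ^ (below x).card) (1 - (1 - p) ^ (below x).card)
      - p * ((Rev below hi T U ∩ below x).card : ℝ) ≤
    ∑ V ∈ (below x).powerset, bw p (below x) V *
      (if fW below hi (U ∪ V) x ≠ out (fW below hi (U ∪ V)) x then 1 else 0) := by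
  set q := (1 - p) ^ (below x).card with hq
  set S := Rev below hi T U ∩ below x with hS
  have hp1 : 0 ≤ 1 - p := by linarith
  have hnn : ∀ V ∈ (below x).powerset, 0 ≤ bw p (below x) V *
      (if fW below hi (U ∪ V) x ≠ out (fW below hi (U ∪ V)) x then (1:ℝ) else 0) := by
    intro V _
    have := bw_nonneg h0 h1 (below x) V
    split_ifs <;> simp [this]
  have hfU : fW below hi U x = false := by
    simp only [fW, decide_eq_false_iff_not, not_or, not_exists, not_and]
    exact ⟨hx, fun w hw hw' => Finset.disjoint_left.1 hU hw hw'⟩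
  have hempty : bw p (below x) ∅ = q := by simp [bw, hq]
  by_cases hout : out (fW below hi U) x = true
  · have := Finset.single_le_sum hnn (Finset.empty_mem_powerset _)
    rw [hempty, Finset.union_empty, if_pos (by rw [hfU, hout]; simp), mul_one] at this
    have h3 : 0 ≤ p * (S.card : ℝ) := by positivity
    have h4 := min_le_left q (1 - q)
    linarith
  · have hout' : out (fW below hi U) x = false := by simpa using hout
    have hsub : (below x \ S).powerset.erase ∅ ⊆ (below x).powerset := by
      intro V hV
      simp only [Finset.mem_erase, Finset.mem_powerset] at *
      exact hV.2.trans Finset.sdiff_subset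
    have hkey : ∀ V ∈ (below x \ S).powerset.erase ∅,
        fW below hi (U ∪ V) x ≠ out (fW below hi (U ∪ V)) x := by
      intro V hV
      simp only [Finset.mem_erase, Finset.mem_powerset] at hV
      obtain ⟨w, hw⟩ := Finset.nonempty_iff_ne_empty.2 hV.1
      have e1 : fW below hi (U ∪ V) x = true := by
        simp only [fW, decide_eq_true_eq]
        exact Or.inr ⟨w, Finset.mem_union_right _ hw, (Finset.mem_sdiff.1 (hV.2 hw)).1⟩
      have e2 : out (fW below hi U) = out (fW below hi (U ∪ V)) := by
        apply hT
        intro y hy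
        by_cases hy0 : fW below hi U y = false
        · rw [hy0]
          symm
          have hy1 := hy0
          simp only [fW, decide_eq_false_iff_not, not_or, not_exists, not_and] at hy1 ⊢
          refine ⟨hy1.1, fun v hv hv' => ?_⟩
          rcases Finset.mem_union.1 hv with hv | hv
          · exact hy1.2 v hv hv'
          · have := Finset.mem_sdiff.1 (hV.2 hv)
            apply this.2
            rw [hS, Finset.mem_inter]
            refine ⟨?_, this.1⟩
            simp only [Rev, Finset.mem_biUnion, Finset.mem_filter]
            exact ⟨y, ⟨hy, hy0⟩, hv'⟩
        · have hy1 : fW below hi U y = true := by simpa using hy0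
          rw [hy1]; symm
          simp only [fW, decide_eq_true_eq] at hy1 ⊢
          rcases hy1 with h | ⟨v, hv, hv'⟩
          · exact Or.inl h
          · exact Or.inr ⟨v, Finset.mem_union_left _ hv, hv'⟩
      rw [← e2, e1, hout']; simp
    have hle := Finset.sum_le_sum_of_subset_of_nonneg hsub (fun V hV _ => hnn V hV)
    have heq : ∑ V ∈ (below x \ S).powerset.erase ∅, bw p (below x) V *
      (if fW below hi (U ∪ V) x ≠ out (fW below hi (U ∪ V)) x then (1:ℝ) else 0)
      = (1 - p) ^ S.card - q := by
      rw [Finset.sum_congr rfl (fun V hV => by rw [if_pos (hkey V hV), mul_one])]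
      have : ∑ V ∈ (below x \ S).powerset, bw p (below x) V = (1 - p) ^ S.card := by
        have hSs : S ⊆ below x := Finset.inter_subset_right
        have hc := Finset.card_sdiff_add_card_eq_card hSs
        have hb := congrArg (fun z => (1 - p) ^ S.card * z) (bw_sum p (below x \ S))
        simp only [mul_one, Finset.mul_sum] at hb
        rw [← hb]
        refine Finset.sum_congr rfl fun V hV => ?_
        have hcV := Finset.card_le_card (Finset.mem_powerset.1 hV)
        unfold bw
        have : (below x).card - V.card = S.card + ((below x \ S).card - V.card) := by omega
        rw [this, pow_add]; ring
      rw [← this, ← Finset.sum_erase_add _ _ (Finset.empty_mem_powerset (below x \ S)), hempty]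
      ring
    have hbern : 1 - p * (S.card : ℝ) ≤ (1 - p) ^ S.card := by
      have := one_add_mul_le_pow (a := -p) (by linarith) S.card
      rw [← sub_eq_add_neg] at this
      linarith
    have h4 := min_le_right q (1 - q)
    linarith

lemma point_bound2 {X δ : Type*} [DecidableEq δ] (D : Finset δ) (below : X → Finset δ)
    (hbelow : ∀ x, below x ⊆ D)
    (hi : X → Prop) [DecidablePred hi] {p : ℝ} (h0 : 0 ≤ p) (h1 : p ≤ 1)
    (T : (X → Bool) → Finset X) (out : (X → Bool) → X → Bool)
    (hT : ∀ f g : X → Bool, (∀ y ∈ T f, f y = g y) → out f = out g)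
    (x : X) (hx : ¬ hi x) :
    (1 - p) ^ (below x).card * min ((1 - p) ^ (below x).card) (1 - (1 - p) ^ (below x).card)
      - p * ∑ W ∈ D.powerset, bw p D W * ((Rev below hi T W ∩ below x).card : ℝ) ≤
    (1 - p) ^ (below x).card * ∑ W ∈ D.powerset, bw p D W *
      (if fW below hi W x ≠ out (fW below hi W) x then 1 else 0) := by
  have hp1 : 0 ≤ 1 - p := by linarith
  set q := (1 - p) ^ (below x).card with hq
  have hq0 : 0 ≤ q := by positivity
  set m := min q (1 - q) with hm
  have hempty : bw p (below x) ∅ = q := by simp [bw, hq]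
  have hdisj : ∀ U ∈ (D \ below x).powerset, Disjoint U (below x) := fun U hU =>
    Finset.disjoint_of_subset_left (Finset.mem_powerset.1 hU) Finset.sdiff_disjoint
  have A1 : ∑ U ∈ (D \ below x).powerset, bw p (D \ below x) U *
      (m - p * ((Rev below hi T U ∩ below x).card : ℝ)) ≤
      ∑ W ∈ D.powerset, bw p D W *
      (if fW below hi W x ≠ out (fW below hi W) x then 1 else 0) := by
    rw [sum_split (hbelow x)]
    refine Finset.sum_le_sum fun U hU => ?_
    refine (mul_le_mul_of_nonneg_left (point_bound below hi h0 h1 T out hT x hx U (hdisj U hU))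
      (bw_nonneg h0 h1 _ _)).trans ?_
    rw [Finset.mul_sum]
    refine le_of_eq (Finset.sum_congr rfl fun V hV => ?_)
    rw [bw_split p (hbelow x) (Finset.mem_powerset.1 hU) (Finset.mem_powerset.1 hV)]
    ring
  have A2 : q * ∑ U ∈ (D \ below x).powerset, bw p (D \ below x) U *
      ((Rev below hi T U ∩ below x).card : ℝ) ≤
      ∑ W ∈ D.powerset, bw p D W * ((Rev below hi T W ∩ below x).card : ℝ) := by
    rw [sum_split (hbelow x), Finset.mul_sum]
    refine Finset.sum_le_sum fun U hU => ?_
    have := Finset.single_le_sum (s := (below x).powerset) (f := fun V => bw p D (U ∪ V) *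
      ((Rev below hi T (U ∪ V) ∩ below x).card : ℝ))
      (fun V _ => mul_nonneg (bw_nonneg h0 h1 _ _) (Nat.cast_nonneg _))
      (Finset.empty_mem_powerset _)
    refine le_trans (le_of_eq ?_) this
    rw [bw_split p (hbelow x) (Finset.mem_powerset.1 hU) (Finset.empty_subset _), hempty,
      Finset.union_empty]
    ring
  have A3 : ∑ U ∈ (D \ below x).powerset, bw p (D \ below x) U *
      (m - p * ((Rev below hi T U ∩ below x).card : ℝ)) = m - p *
      ∑ U ∈ (D \ below x).powerset, bw p (D \ below x) U *
      ((Rev below hi T U ∩ below x).card : ℝ) := by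
    simp only [mul_sub, Finset.sum_sub_distrib]
    rw [← Finset.sum_mul, bw_sum, Finset.mul_sum]
    congr 1
    · ring
    · exact Finset.sum_congr rfl fun _ _ => by ring
  rw [A3] at A1
  have A4 := mul_le_mul_of_nonneg_left A1 hq0
  have A5 := mul_le_mul_of_nonneg_left A2 h0
  nlinarith

lemma layer_bound {X δ : Type*} [DecidableEq δ] (D : Finset δ) (below : X → Finset δ)
    (hbelow : ∀ x, below x ⊆ D)
    (hi : X → Prop) [DecidablePred hi] {p : ℝ} (h0 : 0 ≤ p) (h1 : p ≤ 1)
    (T : (X → Bool) → Finset X) (out : (X → Bool) → X → Bool)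
    (hT : ∀ f g : X → Bool, (∀ y ∈ T f, f y = g y) → out f = out g)
    (n B M N : ℕ) (hn : ∀ f, (T f).card ≤ n) (hB : ∀ y, ¬ hi y → (below y).card ≤ B)
    (Lay : Finset X) (hL1 : ∀ x ∈ Lay, ¬ hi x) (hL2 : ∀ x ∈ Lay, (below x).card = N)
    (hM : ∀ w ∈ D, (Lay.filter fun x => w ∈ below x).card ≤ M) :
    (Lay.card : ℝ) * ((1 - p) ^ N * min ((1 - p) ^ N) (1 - (1 - p) ^ N))
      - p * (n * B * M) ≤
    (1 - p) ^ N * ∑ W ∈ D.powerset, bw p D W *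
      ((Lay.filter fun x => fW below hi W x ≠ out (fW below hi W) x).card : ℝ) := by
  have hR : ∀ W, (Rev below hi T W).card ≤ n * B := by
    intro W
    unfold Rev
    refine (Finset.card_biUnion_le_card_mul _ _ B ?_).trans
      (Nat.mul_le_mul_right _ ((Finset.card_filter_le _ _).trans (hn _)))
    intro y hy
    apply hB
    have := (Finset.mem_filter.1 hy).2
    simp only [fW, decide_eq_false_iff_not, not_or] at this
    exact this.1
  have hRD : ∀ W, Rev below hi T W ⊆ D := by
    intro W
    unfold Rev
    exact Finset.biUnion_subset.2 fun y _ => hbelow y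
  have hdc : ∀ W, ∑ x ∈ Lay, (Rev below hi T W ∩ below x).card ≤ n * B * M := by
    intro W
    have : ∀ x ∈ Lay, (Rev below hi T W ∩ below x).card =
      ∑ w ∈ Rev below hi T W, if w ∈ below x then 1 else 0 := by
      intro x _
      rw [← Finset.filter_mem_eq_inter, Finset.card_filter]
    rw [Finset.sum_congr rfl this, Finset.sum_comm]
    refine (Finset.sum_le_card_nsmul _ _ M ?_).trans ?_
    · intro w hw
      rw [← Finset.card_filter]
      exact hM w (hRD W hw)
    · simpa using Nat.mul_le_mul_right _ (hR W)
  have hsum := Finset.sum_le_sum fun x (hx : x ∈ Lay) =>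
    point_bound2 D below hbelow hi h0 h1 T out hT x (hL1 x hx)
  have e1 : ∑ x ∈ Lay, ((1 - p) ^ (below x).card * min ((1 - p) ^ (below x).card)
      (1 - (1 - p) ^ (below x).card)
      - p * ∑ W ∈ D.powerset, bw p D W * ((Rev below hi T W ∩ below x).card : ℝ)) =
      (Lay.card : ℝ) * ((1 - p) ^ N * min ((1 - p) ^ N) (1 - (1 - p) ^ N))
      - p * ∑ W ∈ D.powerset, bw p D W *
        ((∑ x ∈ Lay, (Rev below hi T W ∩ below x).card : ℕ) : ℝ) := by
    rw [Finset.sum_sub_distrib, Finset.sum_congr rfl (fun x hx => by rw [hL2 x hx]),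
      Finset.sum_const, nsmul_eq_mul, ← Finset.mul_sum, Finset.sum_comm]
    simp only [Nat.cast_sum, Finset.mul_sum]
  have e2 : ∑ x ∈ Lay, ((1 - p) ^ (below x).card * ∑ W ∈ D.powerset, bw p D W *
      (if fW below hi W x ≠ out (fW below hi W) x then (1:ℝ) else 0)) =
      (1 - p) ^ N * ∑ W ∈ D.powerset, bw p D W *
      ((Lay.filter fun x => fW below hi W x ≠ out (fW below hi W) x).card : ℝ) := by
    rw [Finset.sum_congr rfl (fun x hx => by rw [hL2 x hx]), ← Finset.mul_sum, Finset.sum_comm]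
    congr 1
    refine Finset.sum_congr rfl fun W _ => ?_
    rw [← Finset.mul_sum, Finset.card_filter]
    push_cast
    rfl
  rw [e1, e2] at hsum
  refine le_trans ?_ hsum
  have : ∑ W ∈ D.powerset, bw p D W *
        ((∑ x ∈ Lay, (Rev below hi T W ∩ below x).card : ℕ) : ℝ) ≤ n * B * M := by
    calc _ ≤ ∑ W ∈ D.powerset, bw p D W * ((n * B * M : ℕ) : ℝ) :=
          Finset.sum_le_sum fun W _ => mul_le_mul_of_nonneg_left
            (Nat.cast_le.2 (hdc W)) (bw_nonneg h0 h1 _ _)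
      _ = _ := by rw [← Finset.sum_mul, bw_sum]; push_cast; ring
  have := mul_le_mul_of_nonneg_left this h0
  linarith

/-- support of a point -/
def supp {d : ℕ} (x : Fin d → Bool) : Finset (Fin d) := Finset.univ.filter fun i => x i = true

lemma supp_inj {d : ℕ} : Function.Injective (supp : (Fin d → Bool) → Finset (Fin d)) := by
  intro x y h
  funext i
  have : i ∈ supp x ↔ i ∈ supp y := by rw [h]
  simp only [supp, Finset.mem_filter, Finset.mem_univ, true_and] at this
  cases hx : x i <;> cases hy : y i <;> simp_all

lemma layer_card (d j : ℕ) :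
    (Finset.univ.filter fun x : Fin d → Bool => (supp x).card = j).card = d.choose j := by
  have : (Finset.univ.filter fun x : Fin d → Bool => (supp x).card = j).card =
      (Finset.powersetCard j (Finset.univ : Finset (Fin d))).card := by
    refine Finset.card_nbij' supp (fun s i => decide (i ∈ s)) ?_ ?_ ?_ ?_
    · intro x hx
      simpa [Finset.mem_powersetCard] using hx
    · intro s hs
      have e : supp (fun i => decide (i ∈ s)) = s := by ext; simp [supp]
      simp only [Set.mem_ofPred_eq, Finset.coe_filter, Finset.mem_univ,
        true_and, Finset.mem_coe, Finset.mem_powersetCard] at hs ⊢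
      rw [e]; exact hs.2
    · intro x _
      funext i; simp [supp]
    · intro s _
      ext; simp [supp]
  rw [this, Finset.card_powersetCard, Finset.card_univ, Fintype.card_fin]

lemma above_card (d j t : ℕ) (w : Finset (Fin d)) (hw : w.card = t) :
    ((Finset.univ.filter fun x : Fin d → Bool => (supp x).card = j).filter
      fun x => w ∈ (supp x).powersetCard t).card ≤ (d - t).choose (j - t) := by
  have : (d - t).choose (j - t) = (Finset.powersetCard (j - t) (Finset.univ \ w)).card := by
    rw [Finset.card_powersetCard, Finset.card_sdiff_of_subset (Finset.subset_univ _),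
      Finset.card_univ, Fintype.card_fin, hw]
  rw [this]
  apply Finset.card_le_card_of_injOn (fun x => supp x \ w)
  · intro x hx
    simp only [Finset.coe_filter, Set.mem_ofPred_eq, Finset.mem_filter, Finset.mem_univ, true_and,
      Finset.mem_powersetCard, Finset.mem_coe] at hx ⊢
    refine ⟨Finset.sdiff_subset_sdiff (Finset.subset_univ _) le_rfl, ?_⟩
    rw [Finset.card_sdiff_of_subset hx.2.1, hx.1, hw]
  · intro x hx y hy hxy
    simp only [Finset.coe_filter, Set.mem_ofPred_eq, Finset.mem_filter, Finset.mem_univ, true_and,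
      Finset.mem_powersetCard] at hx hy hxy
    apply supp_inj
    rw [← Finset.sdiff_union_of_subset hx.2.1, ← Finset.sdiff_union_of_subset hy.2.1, hxy]

/-- the concrete hard functions -/
def fC (d t b : ℕ) (W : Finset (Finset (Fin d))) : (Fin d → Bool) → Bool :=
  fW (fun x => (supp x).powersetCard t) (fun x => b < (supp x).card) W

lemma fC_mono (d t b : ℕ) (W : Finset (Finset (Fin d))) (x z : Fin d → Bool)
    (h : ∀ j, x j ≤ z j) : fC d t b W x ≤ fC d t b W z := by
  have hs : supp x ⊆ supp z := by
    intro i hi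
    simp only [supp, Finset.mem_filter, Finset.mem_univ, true_and] at *
    have := h i
    rw [hi] at this
    exact Bool.le_iff_imp.1 this rfl
  rw [Bool.le_iff_imp]
  intro hx
  simp only [fC, fW, decide_eq_true_eq, Finset.mem_powersetCard] at *
  rcases hx with h1 | ⟨w, hw, h1, h2⟩
  · exact Or.inl (h1.trans_le (Finset.card_le_card hs))
  · exact Or.inr ⟨w, hw, h1.trans hs, h2⟩

lemma conc_layer (d n t b j : ℕ) (htj : t ≤ j) (hjb : j ≤ b) (hbd : b ≤ d)
    (T : ((Fin d → Bool) → Bool) → Finset (Fin d → Bool))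
    (out : ((Fin d → Bool) → Bool) → (Fin d → Bool) → Bool)
    (hT : ∀ f g : (Fin d → Bool) → Bool, (∀ y ∈ T f, f y = g y) → out f = out g)
    (hn : ∀ f, (T f).card ≤ n)
    (hA : 0.385 * (b.choose t : ℝ) ≤ j.choose t)
    (hl : Real.exp 1 * n * b.choose t ≤ 0.03 * d.choose t) :
    0.284 * (d.choose j : ℝ) ≤
      ∑ W ∈ (Finset.univ.powersetCard t : Finset (Finset (Fin d))).powerset,
        bw (1 - Real.exp (-(1 / (b.choose t : ℝ)))) (Finset.univ.powersetCard t) W *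
        (((Finset.univ.filter fun x : Fin d → Bool => (supp x).card = j).filter
          fun x => fC d t b W x ≠ out (fC d t b W) x).card : ℝ) := by
  set B := b.choose t with hB
  set p := 1 - Real.exp (-(1 / (B : ℝ))) with hp
  have hBpos : (0:ℝ) < B := by
    have : 0 < B := Nat.choose_pos (by omega)
    exact_mod_cast this
  have hNB : (j.choose t : ℝ) ≤ B := by
    have : j.choose t ≤ B := Nat.choose_le_choose t hjb
    exact_mod_cast this
  have h1p : 1 - p = Real.exp (-(1 / (B : ℝ))) := by rw [hp]; ring
  have h0 : 0 ≤ p := by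
    have : Real.exp (-(1 / (B : ℝ))) ≤ 1 := Real.exp_le_one_iff.2 (by
      have : 0 ≤ 1 / (B:ℝ) := by positivity
      linarith)
    linarith
  have h1 : p ≤ 1 := by have := Real.exp_pos (-(1 / (B : ℝ))); linarith
  have hpB : p * B ≤ 1 := by
    have := Real.add_one_le_exp (-(1 / (B : ℝ)))
    have h2 : p ≤ 1 / B := by linarith
    calc p * B ≤ 1 / B * B := mul_le_mul_of_nonneg_right h2 hBpos.le
      _ = 1 := by field_simp
  have key := layer_bound (X := Fin d → Bool) (Finset.univ.powersetCard t)
    (fun x => (supp x).powersetCard t)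
    (fun x => Finset.powersetCard_mono (Finset.subset_univ _)) (fun x => b < (supp x).card)
    h0 h1 T out hT n B ((d - t).choose (j - t)) (j.choose t) hn
    (fun y hy => by
      rw [Finset.card_powersetCard]; exact Nat.choose_le_choose t (not_lt.1 hy))
    (Finset.univ.filter fun x : Fin d → Bool => (supp x).card = j)
    (fun x hx => by
      have := (Finset.mem_filter.1 hx).2
      omega)
    (fun x hx => by
      rw [Finset.card_powersetCard, (Finset.mem_filter.1 hx).2])
    (fun w hw => above_card d j t w (Finset.mem_powersetCard.1 hw).2)
  rw [layer_card] at key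
  set S := ∑ W ∈ (Finset.univ.powersetCard t : Finset (Finset (Fin d))).powerset,
        bw p (Finset.univ.powersetCard t) W *
        (((Finset.univ.filter fun x : Fin d → Bool => (supp x).card = j).filter
          fun x => fC d t b W x ≠ out (fC d t b W) x).card : ℝ) with hS
  have key' : (d.choose j : ℝ) * ((1 - p) ^ (j.choose t) *
      min ((1 - p) ^ (j.choose t)) (1 - (1 - p) ^ (j.choose t)))
      - p * (n * B * (d - t).choose (j - t)) ≤ (1 - p) ^ (j.choose t) * S := key
  have hq : (1 - p) ^ (j.choose t) = Real.exp (-((j.choose t : ℝ) / B)) := by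
    rw [h1p, ← Real.exp_nat_mul]; congr 1; ring
  rw [hq] at key'
  set q := Real.exp (-((j.choose t : ℝ) / B)) with hqdef
  have hqpos : 0 < q := Real.exp_pos _
  have hq1 : 1 ≤ Real.exp 1 * q := by
    rw [hqdef, ← Real.exp_add]
    apply Real.one_le_exp
    have : (j.choose t : ℝ) / B ≤ 1 := by rw [div_le_one hBpos]; exact hNB
    linarith
  have he := Real.exp_one_lt_d9
  have hq2 : 0.314 ≤ q := by nlinarith
  have hq3 : q ≤ 0.686 := by
    have h5 : 0.385 ≤ (j.choose t : ℝ) / B := by rw [le_div_iff₀ hBpos]; exact hA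
    have h6 := Real.quadratic_le_exp_of_nonneg (show (0:ℝ) ≤ 0.385 by norm_num)
    have h7 : q ≤ Real.exp (-0.385) := Real.exp_le_exp.2 (by linarith)
    have h8 : Real.exp (-0.385) * Real.exp 0.385 = 1 := by rw [← Real.exp_add]; norm_num
    have h9 := Real.exp_pos (-0.385)
    nlinarith
  have hmin : 0.314 ≤ min q (1 - q) := le_min hq2 (by linarith)
  have hcm : (d.choose j : ℝ) * j.choose t = d.choose t * (d - t).choose (j - t) := by
    exact_mod_cast Nat.choose_mul htj
  set M := ((d - t).choose (j - t) : ℝ) with hM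
  have hC : (0:ℝ) < d.choose t := by
    have : 0 < d.choose t := Nat.choose_pos (by omega)
    exact_mod_cast this
  have hCj : (0:ℝ) ≤ d.choose j := by positivity
  have hnn : (0:ℝ) ≤ n := by positivity
  have hM0 : 0 ≤ M := by positivity
  have hloss : (n:ℝ) * M ≤ 0.03 * q * d.choose j := by
    have e1 : (d.choose t : ℝ) * (n * M) ≤ d.choose t * (0.03 * q * d.choose j) := by
      calc (d.choose t : ℝ) * (n * M) = n * (d.choose j * j.choose t) := by rw [hcm]; ring
        _ ≤ n * (d.choose j * B) := by gcongr
        _ ≤ (Real.exp 1 * q) * (n * (d.choose j * B)) :=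
            le_mul_of_one_le_left (by positivity) hq1
        _ = (Real.exp 1 * n * B) * (q * d.choose j) := by ring
        _ ≤ (0.03 * d.choose t) * (q * d.choose j) := by gcongr
        _ = _ := by ring
    exact le_of_mul_le_mul_left e1 hC
  have hloss2 : p * (n * B * M) ≤ n * M := by
    calc p * (n * B * M) = (p * B) * (n * M) := by ring
      _ ≤ 1 * (n * M) := by gcongr
      _ = _ := one_mul _
  have hmain : (d.choose j : ℝ) * (q * 0.314) ≤ (d.choose j : ℝ) * (q * min q (1 - q)) := by
    gcongr
  have : q * (0.284 * (d.choose j : ℝ)) ≤ q * S := by nlinarith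
  exact le_of_mul_le_mul_left this hqpos

lemma choose_ratio (b d t : ℕ) (hbd : b ≤ d) (htb : t ≤ b) :
    (b.choose t : ℝ) * (d:ℝ) ^ t ≤ d.choose t * (b:ℝ) ^ t := by
  induction t with
  | zero => simp
  | succ t ih =>
    have ih := ih (by omega)
    have e1 : (b.choose (t+1) : ℝ) * (t+1) = b.choose t * ((b:ℝ) - t) := by
      have := Nat.choose_succ_right_eq b t
      rw [← Nat.cast_sub (by omega)]; exact_mod_cast this
    have e2 : (d.choose (t+1) : ℝ) * (t+1) = d.choose t * ((d:ℝ) - t) := by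
      have := Nat.choose_succ_right_eq d t
      rw [← Nat.cast_sub (by omega)]; exact_mod_cast this
    have hb : (t:ℝ) + 1 ≤ b := by exact_mod_cast htb
    have hd : (b:ℝ) ≤ d := by exact_mod_cast hbd
    have ht : (0:ℝ) ≤ t := by positivity
    have h1 : ((b:ℝ) - t) * d ≤ ((d:ℝ) - t) * b := by nlinarith
    have h2 : (b.choose t : ℝ) * (d:ℝ) ^ t * (((b:ℝ) - t) * d) ≤
        d.choose t * (b:ℝ) ^ t * (((d:ℝ) - t) * b) := by
      apply mul_le_mul ih h1
      · apply mul_nonneg <;> linarith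
      · positivity
    have h3 : (b.choose (t+1) : ℝ) * (d:ℝ) ^ (t+1) * (t+1) ≤
        d.choose (t+1) * (b:ℝ) ^ (t+1) * (t+1) := by
      calc _ = ((b.choose (t+1) : ℝ) * (t+1)) * (d:ℝ) ^ (t+1) := by ring
        _ = (b.choose t : ℝ) * (d:ℝ) ^ t * (((b:ℝ) - t) * d) := by rw [e1]; ring
        _ ≤ _ := h2
        _ = ((d.choose (t+1) : ℝ) * (t+1)) * (b:ℝ) ^ (t+1) := by rw [e2]; ring
        _ = _ := by ring
    exact le_of_mul_le_mul_right h3 (by positivity)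

lemma choose_up (a t i : ℕ) (hta : t ≤ a) :
    ((a + i).choose t : ℝ) ≤ a.choose t * Real.exp (i * (t / ((a:ℝ) - t + 1))) := by
  induction i with
  | zero => simp
  | succ i ih =>
    have e : ((a + i).choose t : ℝ) * ((a:ℝ) + i + 1) =
        ((a + (i+1)).choose t : ℝ) * ((a:ℝ) + i + 1 - t) := by
      have := Nat.choose_mul_succ_eq (a + i) t
      have h : ((a + i + 1 - t : ℕ) : ℝ) = (a:ℝ) + i + 1 - t := by
        rw [Nat.cast_sub (by omega)]; push_cast; ring
      rw [← h]
      exact_mod_cast this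
    have hta' : (t:ℝ) ≤ a := by exact_mod_cast hta
    have hi : (0:ℝ) ≤ i := by positivity
    have hpos : 0 < (a:ℝ) + i + 1 - t := by linarith
    have e' : ((a + (i+1)).choose t : ℝ) = (a+i).choose t * (1 + t / ((a:ℝ) + i + 1 - t)) := by
      field_simp
      linarith
    rw [e']
    have h2 : 1 + t / ((a:ℝ) + i + 1 - t) ≤ Real.exp (t / ((a:ℝ) - t + 1)) := by
      have h3 : t / ((a:ℝ) + i + 1 - t) ≤ t / ((a:ℝ) - t + 1) := by
        apply div_le_div_of_nonneg_left <;> first | positivity | linarith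
      have := Real.add_one_le_exp (t / ((a:ℝ) - t + 1))
      linarith
    calc _ ≤ (a.choose t * Real.exp (i * (t / ((a:ℝ) - t + 1)))) *
          Real.exp (t / ((a:ℝ) - t + 1)) := by
          apply mul_le_mul ih h2
          · positivity
          · positivity
      _ = _ := by
        rw [mul_assoc, ← Real.exp_add]; push_cast; ring_nf

lemma choose_layer (d a i : ℕ) (ha : a = (d+1)/2) (hi : 4 * i ≤ d) (hd : 0 < d) :
    (1 - 2 * (i:ℝ) * (i+1) / d) * d.choose a ≤ d.choose (a + i) := by
  induction i with
  | zero => simp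
  | succ i ih =>
    have ih := ih (by omega)
    have e : ((d.choose (a + (i+1)) : ℕ) : ℝ) * ((a:ℝ) + i + 1) =
        d.choose (a+i) * ((d:ℝ) - a - i) := by
      have := Nat.choose_succ_right_eq d (a+i)
      have h : ((d - (a + i) : ℕ) : ℝ) = (d:ℝ) - a - i := by
        rw [Nat.cast_sub (by omega)]; push_cast; ring
      rw [← h]
      exact_mod_cast this
    have hd' : (0:ℝ) < d := by exact_mod_cast hd
    have ha1 : (2:ℝ) * a ≤ d + 1 := by
      have : 2 * a ≤ d + 1 := by omega
      exact_mod_cast this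
    have ha2 : (d:ℝ) ≤ 2 * a := by
      have : d ≤ 2 * a := by omega
      exact_mod_cast this
    have hi' : (4:ℝ) * (i+1) ≤ d := by exact_mod_cast hi
    have hi0 : (0:ℝ) ≤ i := by positivity
    have hpos : 0 < (a:ℝ) + i + 1 := by positivity
    have hr : 1 - 4 * ((i:ℝ)+1) / d ≤ ((d:ℝ) - a - i) / ((a:ℝ) + i + 1) := by
      rw [le_div_iff₀ hpos, sub_mul, div_mul_eq_mul_div]
      have : 2 * ((i:ℝ) + 1) ≤ 4 * ((i:ℝ)+1) * ((a:ℝ) + i + 1) / d := by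
        rw [le_div_iff₀ hd']; nlinarith
      linarith
    have hu : 0 ≤ 1 - 4 * ((i:ℝ)+1) / d := by
      rw [sub_nonneg, div_le_one hd']; exact hi'
    have e' : ((d.choose (a + (i+1)) : ℕ) : ℝ) =
        d.choose (a+i) * (((d:ℝ) - a - i) / ((a:ℝ) + i + 1)) := by
      field_simp; linarith
    rw [e']
    calc _ ≤ ((1 - 2 * (i:ℝ) * (i+1) / d) * d.choose a) * (1 - 4 * ((i:ℝ)+1) / d) := by
          have : (1 - 2 * ((i+1:ℕ):ℝ) * ((i+1:ℕ)+1) / d) ≤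
              (1 - 2 * (i:ℝ) * (i+1) / d) * (1 - 4 * ((i:ℝ)+1) / d) := by
            have h5 : 0 ≤ (2 * (i:ℝ) * (i+1) / d) * (4 * ((i:ℝ)+1) / d) := by positivity
            have h6 : 2 * ((i+1:ℕ):ℝ) * ((i+1:ℕ)+1) / d =
              2 * (i:ℝ) * (i+1) / d + 4 * ((i:ℝ)+1) / d := by push_cast; ring
            rw [h6]; nlinarith
          calc _ ≤ _ := mul_le_mul_of_nonneg_right this (Nat.cast_nonneg _)
            _ = _ := by ring
      _ ≤ d.choose (a+i) * (1 - 4 * ((i:ℝ)+1) / d) := mul_le_mul_of_nonneg_right ih hu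
      _ ≤ _ := mul_le_mul_of_nonneg_left hr (Nat.cast_nonneg _)

lemma cb_bound (n : ℕ) (hn : 1 ≤ n) : 16 ^ n ≤ n.centralBinom ^ 2 * (4 * n) := by
  induction n, hn using Nat.le_induction with
  | base => simp [Nat.centralBinom]
  | succ n hn ih =>
    have := Nat.succ_mul_centralBinom_succ n
    set c := n.centralBinom
    set c' := (n+1).centralBinom
    have h : (n+1) * 16 ^ (n+1) ≤ (n+1) * (c' ^ 2 * (4 * (n+1))) := by
      calc (n+1) * 16 ^ (n+1) ≤ (n+1) * (16 * (c ^ 2 * (4 * n))) := by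
            rw [pow_succ]; nlinarith
        _ ≤ 16 * c ^ 2 * (2 * n + 1) ^ 2 := by nlinarith [sq_nonneg c]
        _ = 4 * (2 * (2 * n + 1) * c) ^ 2 := by ring
        _ = 4 * ((n+1) * c') ^ 2 := by rw [← this]
        _ = _ := by ring
    exact Nat.le_of_mul_le_mul_left h (by omega)

lemma mid_bound (d a : ℕ) (ha : a = (d+1)/2) (hd : 2 ≤ d) :
    (4:ℝ) ^ d ≤ (d.choose a : ℝ) ^ 2 * (2 * (d + 1)) := by
  have : 4 ^ d ≤ (d.choose a) ^ 2 * (2 * (d + 1)) := by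
    rcases Nat.even_or_odd' d with ⟨m, rfl | rfl⟩
    · have : a = m := by omega
      subst this
      have := cb_bound a (by omega)
      rw [Nat.centralBinom] at this
      rw [pow_mul]; norm_num
      nlinarith [sq_nonneg ((2*a).choose a)]
    · have : a = m + 1 := by omega
      subst this
      have := cb_bound (m+1) (by omega)
      have e : (m+1).centralBinom = 2 * (2*m+1).choose (m+1) := by
        rw [Nat.centralBinom_eq_two_mul_choose, show 2 * (m+1) = (2*m+1) + 1 by ring,
          Nat.choose_succ_succ, Nat.choose_symm_half]; ring
      rw [e] at this
      have h4 : 4 * 4 ^ (2 * m + 1) = 16 ^ (m+1) := by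
        rw [show (16:ℕ) = 4 ^ 2 by norm_num, ← pow_mul, ← pow_succ']; ring_nf
      nlinarith
  exact_mod_cast this

set_option maxHeartbeats 1000000 in
lemma params (ε : ℝ) (hε0 : 0 < ε) (hε : ε ≤ 1 / 30)
    (d : ℕ) (hd : 1 / (9 * ε ^ 2) ≤ (d : ℝ))
    (n : ℕ) (hn : (n : ℝ) ≤ 108 * Real.exp (Real.sqrt d / (30 * ε) - 10)) :
    ∃ (t a k : ℕ) (γ : ℝ), t ≤ a ∧ a + k ≤ d ∧
      0.385 * ((a + k).choose t : ℝ) ≤ a.choose t ∧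
      Real.exp 1 * n * (a + k).choose t ≤ 0.03 * d.choose t ∧
      (∀ i ≤ k, γ ≤ d.choose (a + i)) ∧ ε * 2 ^ d < (k + 1) * (0.284 * γ) := by
  set s := Real.sqrt d with hs
  have hs0 : 0 ≤ s := Real.sqrt_nonneg _
  have hss : s * s = d := Real.mul_self_sqrt (Nat.cast_nonneg _)
  have hεs : 1 ≤ 3 * ε * s := by
    rw [div_le_iff₀ (by positivity)] at hd
    have : 1 ≤ (3 * ε * s) * (3 * ε * s) := by nlinarith
    by_contra h
    push Not at h
    have h2 : 0 ≤ 3 * ε * s := by positivity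
    nlinarith
  set q := 30 * ε * s with hq
  have hq10 : 10 ≤ q := by linarith
  have hqs : q ≤ s := by nlinarith
  have hs10 : 10 ≤ s := by linarith
  have hd100 : (100:ℝ) ≤ d := by nlinarith
  have hd100' : 100 ≤ d := by exact_mod_cast hd100
  set x := s / (30 * ε) with hx
  have hxq : x * q = d := by
    rw [hx, hq, ← hss]; field_simp
  have hx10 : 10 ≤ x := by
    rw [hx, le_div_iff₀ (by positivity)]; linarith
  have hxd : 10 * x ≤ d := by nlinarith
  set t := ⌈1.5 * x⌉₊ with ht
  have ht1 : 1.5 * x ≤ t := Nat.le_ceil _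
  have ht2 : (t:ℝ) ≤ 1.6 * x := by
    have := Nat.ceil_lt_add_one (show 0 ≤ 1.5 * x by positivity)
    rw [← ht] at this
    linarith
  set k := ⌊q / 5⌋₊ with hk
  have hk1 : (k:ℝ) ≤ q / 5 := Nat.floor_le (by positivity)
  have hk2 : q / 5 < k + 1 := Nat.lt_floor_add_one _
  set a := (d + 1) / 2 with ha
  have ha1 : (2:ℝ) * a ≤ d + 1 := by
    have : 2 * a ≤ d + 1 := by omega
    exact_mod_cast this
  have ha2 : (d:ℝ) ≤ 2 * a := by
    have : d ≤ 2 * a := by omega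
    exact_mod_cast this
  have hta' : (t:ℝ) ≤ a := by linarith
  have hta : t ≤ a := by exact_mod_cast hta'
  have hsd : 10 * s ≤ d := by nlinarith
  have hakd' : (a:ℝ) + k ≤ d := by linarith
  have hakd : a + k ≤ d := by exact_mod_cast hakd'
  have hk0 : (0:ℝ) ≤ k := by positivity
  have ht0 : (0:ℝ) ≤ t := by positivity
  have hdpos : (0:ℝ) < d := by linarith
  refine ⟨t, a, k, 0.88 * d.choose a, hta, hakd, ?_, ?_, ?_, ?_⟩
  · have h1 := choose_up a t k hta
    have h2 : (k:ℝ) * (t / ((a:ℝ) - t + 1)) ≤ 0.942 := by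
      rw [mul_div_assoc', div_le_iff₀ (by linarith)]
      have h3 : (k:ℝ) * t ≤ (q / 5) * (1.6 * x) := by gcongr
      have h4 : (q / 5) * (1.6 * x) = 0.32 * d := by rw [← hxq]; ring
      have h5 : 0.34 * (d:ℝ) ≤ (a:ℝ) - t + 1 := by linarith
      linarith
    have h3 : Real.exp ((k:ℝ) * (t / ((a:ℝ) - t + 1))) ≤ Real.exp 0.942 := Real.exp_le_exp.2 h2
    have h4 : Real.exp 0.942 * 0.385 ≤ 1 := by
      have e1 : Real.exp 0.942 * Real.exp 0.058 = Real.exp 1 := by rw [← Real.exp_add]; norm_num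
      have e2 := Real.add_one_le_exp 0.058
      have e3 := Real.exp_one_lt_d9
      have e4 := Real.exp_pos 0.942
      nlinarith
    have hc : (0:ℝ) ≤ a.choose t := by positivity
    calc 0.385 * ((a + k).choose t : ℝ)
        ≤ 0.385 * (a.choose t * Real.exp 0.942) := by
          gcongr; exact h1.trans (by gcongr)
      _ = a.choose t * (Real.exp 0.942 * 0.385) := by ring
      _ ≤ a.choose t * 1 := by gcongr
      _ = _ := mul_one _
  · have hr := choose_ratio (a + k) d t hakd (by omega)
    have hb : ((a + k : ℕ) : ℝ) ≤ d * (Real.exp ((1 + 0.4 * q) / d) / 2) := by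
      have := Real.add_one_le_exp ((1 + 0.4 * q) / d)
      have h2 : (d:ℝ) * (((1 + 0.4 * q) / d + 1) / 2) ≤ d * (Real.exp ((1 + 0.4 * q) / d) / 2) := by
        gcongr
      have h3 : (d:ℝ) * (((1 + 0.4 * q) / d + 1) / 2) = (1 + 0.4 * q + d) / 2 := by field_simp
      push_cast
      linarith
    have hbt : ((a + k : ℕ) : ℝ) ^ t ≤ (d:ℝ) ^ t * Real.exp (0.8 - 1.0395 * x) := by
      calc ((a + k : ℕ) : ℝ) ^ t ≤ (d * (Real.exp ((1 + 0.4 * q) / d) / 2)) ^ t := by gcongr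
        _ = (d:ℝ) ^ t * (Real.exp ((1 + 0.4 * q) / d) / 2) ^ t := by rw [mul_pow]
        _ ≤ _ := by
          gcongr
          have h2 : (2:ℝ) = Real.exp (Real.log 2) := (Real.exp_log (by norm_num)).symm
          have h3 : Real.exp ((1 + 0.4 * q) / d) / 2 =
              Real.exp ((1 + 0.4 * q) / d - Real.log 2) := by
            rw [Real.exp_sub, ← h2]
          rw [h3, ← Real.exp_nat_mul]
          apply Real.exp_le_exp.2
          have h4 := Real.log_two_gt_d9
          have h5 : (t:ℝ) * ((1 + 0.4 * q) / d) ≤ 0.8 := by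
            rw [mul_div_assoc', div_le_iff₀ hdpos]
            have : (t:ℝ) * (1 + 0.4 * q) ≤ 1.6 * x * (1 + 0.4 * q) := by gcongr
            have h6 : 1.6 * x * (1 + 0.4 * q) = 1.6 * x + 0.64 * d := by rw [← hxq]; ring
            linarith
          have h7 : 1.0395 * x ≤ t * Real.log 2 := by
            calc 1.0395 * x = 1.5 * x * 0.693 := by ring
              _ ≤ t * Real.log 2 := by
                apply mul_le_mul ht1 (by linarith) (by norm_num) ht0
          rw [mul_sub]; linarith
    have hdt : (0:ℝ) < (d:ℝ) ^ t := by positivity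
    have hr2 : ((a + k).choose t : ℝ) ≤ d.choose t * Real.exp (0.8 - 1.0395 * x) := by
      have : (d:ℝ) ^ t * ((a + k).choose t : ℝ) ≤
          (d:ℝ) ^ t * (d.choose t * Real.exp (0.8 - 1.0395 * x)) := by
        calc (d:ℝ) ^ t * ((a + k).choose t : ℝ) = ((a + k).choose t : ℝ) * (d:ℝ) ^ t := by ring
          _ ≤ d.choose t * ((a + k : ℕ) : ℝ) ^ t := hr
          _ ≤ d.choose t * ((d:ℝ) ^ t * Real.exp (0.8 - 1.0395 * x)) := by gcongr
          _ = _ := by ring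
      exact le_of_mul_le_mul_left this hdt
    have hexp : Real.exp 1 * Real.exp (x - 10) * Real.exp (0.8 - 1.0395 * x) ≤
        Real.exp (-8.5) := by
      rw [← Real.exp_add, ← Real.exp_add]
      apply Real.exp_le_exp.2; linarith
    have h85 : 108 * Real.exp (-8.5) ≤ 0.03 := by
      have e1 : Real.exp (-8.5) * Real.exp 8.5 = 1 := by rw [← Real.exp_add]; norm_num
      have e2 : (3600:ℝ) ≤ Real.exp 8.5 := by
        have e3 : Real.exp 8.5 = Real.exp 1 ^ 8 * Real.exp 0.5 := by
          rw [← Real.exp_nat_mul, ← Real.exp_add]; norm_num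
        have e4 := Real.add_one_le_exp 0.5
        have e5 : (2.7:ℝ) ≤ Real.exp 1 := by have := Real.exp_one_gt_d9; linarith
        rw [e3]
        calc (3600:ℝ) ≤ 2.7 ^ 8 * 1.5 := by norm_num
          _ ≤ _ := by gcongr; linarith
      have e6 := Real.exp_pos (-8.5)
      nlinarith
    calc Real.exp 1 * n * (a + k).choose t
        ≤ Real.exp 1 * (108 * Real.exp (x - 10)) * (d.choose t * Real.exp (0.8 - 1.0395 * x)) := by
          gcongr
      _ = 108 * (Real.exp 1 * Real.exp (x - 10) * Real.exp (0.8 - 1.0395 * x)) * d.choose t := by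
          ring
      _ ≤ 108 * Real.exp (-8.5) * d.choose t := by gcongr
      _ ≤ _ := by gcongr
  · intro i hi
    have hi' : (i:ℝ) ≤ k := by exact_mod_cast hi
    have h4i : (4:ℝ) * i ≤ d := by linarith
    have h1 := choose_layer d a i ha (by exact_mod_cast h4i) (by omega)
    refine le_trans ?_ h1
    gcongr
    have h2 : 2 * (i:ℝ) * (i + 1) / d ≤ 0.12 := by
      rw [div_le_iff₀ hdpos]
      have e1 : (i:ℝ) ≤ 0.2 * s := by linarith
      have e2 : (i:ℝ) + 1 ≤ 0.3 * s := by linarith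
      have e3 : (i:ℝ) * (i + 1) ≤ (0.2 * s) * (0.3 * s) := by gcongr
      nlinarith
    linarith
  · have h1 := mid_bound d a ha (by omega)
    set c := (d.choose a : ℝ) with hc
    have hc0 : 0 ≤ c := by positivity
    have h2 : (2:ℝ) ^ d ≤ c * (1.422 * s) := by
      apply le_of_sq_le_sq _ (by positivity)
      calc ((2:ℝ) ^ d) ^ 2 = 4 ^ d := by rw [← pow_mul, mul_comm, pow_mul]; norm_num
        _ ≤ c ^ 2 * (2 * (d + 1)) := h1
        _ ≤ c ^ 2 * (1.422 ^ 2 * (s * s)) := by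
          rw [hss]; exact mul_le_mul_of_nonneg_left (by linarith) (sq_nonneg c)
        _ = _ := by ring
    have hcpos : 0 < c := by
      rcases hc0.lt_or_eq with h | h
      · exact h
      · rw [← h] at h2
        have : (0:ℝ) < 2 ^ d := by positivity
        linarith
    have h3 : 6 * ε * s < k + 1 := by linarith
    calc ε * 2 ^ d ≤ ε * (c * (1.422 * s)) := by gcongr
      _ = (0.237 * c) * (6 * ε * s) := by ring
      _ < (0.237 * c) * (k + 1) := by gcongr
      _ ≤ (k + 1) * (0.284 * (0.88 * c)) := by nlinarith

lemma pts_congr {d n : ℕ}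
    (L : (k : Fin n) → (Fin (k : ℕ) → Bool) → (Fin d → Bool))
    (pts : ((Fin d → Bool) → Bool) → Fin n → (Fin d → Bool))
    (hpts : ∀ (f : (Fin d → Bool) → Bool) (k : Fin n),
      pts f k = L k (fun j => f (pts f (Fin.castLE k.isLt.le j))))
    (f g : (Fin d → Bool) → Bool) (h : ∀ k, f (pts f k) = g (pts f k)) (k : Fin n) :
    pts f k = pts g k := by
  obtain ⟨m, hm⟩ := k
  induction m using Nat.strong_induction_on with
  | _ m ih =>
    rw [hpts f, hpts g]
    congr 1
    funext j
    have := ih j.1 j.2 (by omega)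
    have e : Fin.castLE (Fin.isLt (⟨m, hm⟩ : Fin n)).le j = ⟨j.1, by omega⟩ := rfl
    rw [e, ← this, h]

lemma det_bound (d n t a k : ℕ) (γ : ℝ) (hta : t ≤ a) (hakd : a + k ≤ d)
    (hA : 0.385 * ((a + k).choose t : ℝ) ≤ a.choose t)
    (hl : Real.exp 1 * n * (a + k).choose t ≤ 0.03 * d.choose t)
    (hγ : ∀ i ≤ k, γ ≤ d.choose (a + i))
    (T : ((Fin d → Bool) → Bool) → Finset (Fin d → Bool))
    (out : ((Fin d → Bool) → Bool) → (Fin d → Bool) → Bool)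
    (hT : ∀ f g : (Fin d → Bool) → Bool, (∀ y ∈ T f, f y = g y) → out f = out g)
    (hn : ∀ f, (T f).card ≤ n) :
    (k + 1) * (0.284 * γ) ≤
      ∑ W ∈ (Finset.univ.powersetCard t : Finset (Finset (Fin d))).powerset,
        bw (1 - Real.exp (-(1 / ((a + k).choose t : ℝ)))) (Finset.univ.powersetCard t) W *
        ((Finset.univ.filter fun x => fC d t (a + k) W x ≠ out (fC d t (a + k) W) x).card : ℝ) := by
  set p := 1 - Real.exp (-(1 / ((a + k).choose t : ℝ))) with hp
  have h0 : 0 ≤ p := by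
    have : Real.exp (-(1 / ((a + k).choose t : ℝ))) ≤ 1 := Real.exp_le_one_iff.2 (by
      have : 0 ≤ 1 / ((a + k).choose t : ℝ) := by positivity
      linarith)
    linarith
  have h1 : p ≤ 1 := by have := Real.exp_pos (-(1 / ((a + k).choose t : ℝ))); linarith
  have hlay : ∀ i ∈ Finset.range (k + 1), 0.284 * γ ≤
      ∑ W ∈ (Finset.univ.powersetCard t : Finset (Finset (Fin d))).powerset,
        bw p (Finset.univ.powersetCard t) W *
        (((Finset.univ.filter fun x : Fin d → Bool => (supp x).card = a + i).filter
          fun x => fC d t (a + k) W x ≠ out (fC d t (a + k) W) x).card : ℝ) := by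
    intro i hi
    have hik : i ≤ k := by have := Finset.mem_range.1 hi; omega
    have hAi : 0.385 * ((a + k).choose t : ℝ) ≤ (a + i).choose t := by
      refine hA.trans ?_
      exact_mod_cast Nat.choose_le_choose t (by omega)
    have := conc_layer d n t (a + k) (a + i) (by omega) (by omega) hakd T out hT hn hAi hl
    refine le_trans ?_ this
    have := hγ i hik
    linarith
  have hsum := Finset.sum_le_sum hlay
  rw [Finset.sum_const, Finset.card_range, nsmul_eq_mul, Finset.sum_comm] at hsum
  push_cast at hsum
  refine hsum.trans (Finset.sum_le_sum fun W _ => ?_)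
  rw [← Finset.mul_sum]
  refine mul_le_mul_of_nonneg_left ?_ (bw_nonneg h0 h1 _ _)
  rw [← Nat.cast_sum, Nat.cast_le, ← Finset.card_biUnion]
  · apply Finset.card_le_card
    intro x hx
    simp only [Finset.mem_biUnion, Finset.mem_filter, Finset.mem_univ, true_and] at hx ⊢
    obtain ⟨i, _, _, h⟩ := hx
    exact h
  · intro i _ j _ hij
    simp only [Function.onFun]
    rw [Finset.disjoint_left]
    intro x hx hy
    simp only [Finset.mem_filter, Finset.mem_univ, true_and] at hx hy
    omega



theorem stmt13 (ε : ℝ) (hε0 : 0 < ε) (hε : ε ≤ 1 / 30)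
    (d : ℕ) (hd : 1 / (9 * ε ^ 2) ≤ (d : ℝ))
    (n : ℕ) (hn : (n : ℝ) ≤ 108 * Real.exp (Real.sqrt d / (30 * ε) - 10))
    {Ω : Type*} [MeasurableSpace Ω] (P : Measure Ω) [IsProbabilityMeasure P]
    -- the adaptive choice of the next sample point from previously observed values
    (L : Ω → (k : Fin n) → (Fin (k : ℕ) → Bool) → (Fin d → Bool))
    -- the sample points used for an input `f`
    (pts : Ω → ((Fin d → Bool) → Bool) → Fin n → (Fin d → Bool))
    (hpts : ∀ (ω : Ω) (f : (Fin d → Bool) → Bool) (k : Fin n),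
      pts ω f k = L ω k (fun j => f (pts ω f (Fin.castLE k.isLt.le j))))
    -- the output, depending on `f` only through the observed values
    (A : Ω → (Fin n → Bool) → ((Fin d → Bool) → Bool))
    (hmeas : ∀ f : (Fin d → Bool) → Bool,
      Measurable fun ω =>
        (((Finset.univ.filter fun x : Fin d → Bool =>
            f x ≠ A ω (fun k => f (pts ω f k)) x).card : ℝ))) :
    ENNReal.ofReal ε <
      ⨆ f : {f : (Fin d → Bool) → Bool //
          ∀ x z : Fin d → Bool, (∀ j, x j ≤ z j) → f x ≤ f z},
        ∫⁻ ω, ENNReal.ofReal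
          (((Finset.univ.filter fun x : Fin d → Bool =>
              f.1 x ≠ A ω (fun k => f.1 (pts ω f.1 k)) x).card : ℝ) / 2 ^ d) ∂P := by
  obtain ⟨t, a, k, γ, hta, hakd, hA, hl, hγ, hfin⟩ := params ε hε0 hε d hd n hn
  set p := 1 - Real.exp (-(1 / ((a + k).choose t : ℝ))) with hp
  have h0 : 0 ≤ p := by
    have : Real.exp (-(1 / ((a + k).choose t : ℝ))) ≤ 1 := Real.exp_le_one_iff.2 (by
      have : 0 ≤ 1 / ((a + k).choose t : ℝ) := by positivity
      linarith)
    linarith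
  have h1 : p ≤ 1 := by have := Real.exp_pos (-(1 / ((a + k).choose t : ℝ))); linarith
  set D : Finset (Finset (Fin d)) := Finset.univ.powersetCard t with hD
  set err : Finset (Finset (Fin d)) → Ω → ℝ := fun W ω =>
    (((Finset.univ.filter fun x : Fin d → Bool =>
      fC d t (a + k) W x ≠ A ω (fun i => fC d t (a + k) W (pts ω (fC d t (a + k) W) i)) x).card
        : ℝ)) / 2 ^ d with herr
  have herr0 : ∀ W ω, 0 ≤ err W ω := fun W ω =>
    div_nonneg (Nat.cast_nonneg _) (pow_nonneg zero_le_two _)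
  have hmeasW : ∀ W, Measurable fun ω => ENNReal.ofReal (err W ω) := fun W =>
    ENNReal.measurable_ofReal.comp ((hmeas (fC d t (a + k) W)).div_const _)
  have hdet : ∀ ω, (k + 1) * (0.284 * γ) / 2 ^ d ≤ ∑ W ∈ D.powerset, bw p D W * err W ω := by
    intro ω
    have := det_bound d n t a k γ hta hakd hA hl hγ
      (fun f => Finset.univ.image (pts ω f)) (fun f => A ω (fun i => f (pts ω f i)))
      (fun f g hfg => by
        have hag : ∀ i, f (pts ω f i) = g (pts ω f i) := fun i =>
          hfg _ (Finset.mem_image_of_mem _ (Finset.mem_univ _))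
        have hpe := pts_congr (L ω) (pts ω) (hpts ω) f g hag
        have : (fun i => f (pts ω f i)) = fun i => g (pts ω g i) := by
          funext i; rw [← hpe i, hag i]
        simp only [this])
      (fun f => Finset.card_image_le.trans (by rw [Finset.card_univ, Fintype.card_fin]))
    rw [div_le_iff₀ (by positivity), Finset.sum_mul]
    refine this.trans (le_of_eq (Finset.sum_congr rfl fun W _ => ?_))
    simp only [herr]
    rw [mul_assoc, div_mul_cancel₀ _ (pow_ne_zero _ two_ne_zero)]
  set c := (k + 1) * (0.284 * γ) / 2 ^ d with hc
  have hεc : ε < c := by rw [hc, lt_div_iff₀ (by positivity)]; exact hfin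
  refine lt_of_lt_of_le ((ENNReal.ofReal_lt_ofReal_iff (hε0.trans hεc)).2 hεc) ?_
  set Sup := ⨆ f : {f : (Fin d → Bool) → Bool //
          ∀ x z : Fin d → Bool, (∀ j, x j ≤ z j) → f x ≤ f z},
        ∫⁻ ω, ENNReal.ofReal
          (((Finset.univ.filter fun x : Fin d → Bool =>
              f.1 x ≠ A ω (fun k => f.1 (pts ω f.1 k)) x).card : ℝ) / 2 ^ d) ∂P with hSup
  have hI : ∀ W, ∫⁻ ω, ENNReal.ofReal (err W ω) ∂P ≤ Sup := fun W =>
    le_iSup (fun f : {f : (Fin d → Bool) → Bool //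
          ∀ x z : Fin d → Bool, (∀ j, x j ≤ z j) → f x ≤ f z} =>
        ∫⁻ ω, ENNReal.ofReal
          (((Finset.univ.filter fun x : Fin d → Bool =>
              f.1 x ≠ A ω (fun k => f.1 (pts ω f.1 k)) x).card : ℝ) / 2 ^ d) ∂P)
      ⟨fC d t (a + k) W, fC_mono d t (a + k) W⟩
  calc ENNReal.ofReal c = ∫⁻ _, ENNReal.ofReal c ∂P := by
        rw [lintegral_const, measure_univ, mul_one]
    _ ≤ ∫⁻ ω, ∑ W ∈ D.powerset, ENNReal.ofReal (bw p D W) * ENNReal.ofReal (err W ω) ∂P := by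
        refine lintegral_mono fun ω => ?_
        refine (ENNReal.ofReal_le_ofReal (hdet ω)).trans (le_of_eq ?_)
        rw [ENNReal.ofReal_sum_of_nonneg
          (fun W _ => mul_nonneg (bw_nonneg h0 h1 _ _) (herr0 _ _))]
        exact Finset.sum_congr rfl fun W _ => ENNReal.ofReal_mul (bw_nonneg h0 h1 _ _)
    _ = ∑ W ∈ D.powerset, ENNReal.ofReal (bw p D W) * ∫⁻ ω, ENNReal.ofReal (err W ω) ∂P := by
        rw [lintegral_finsetSum _ (fun W _ => (hmeasW W).const_mul _)]
        exact Finset.sum_congr rfl fun W _ => lintegral_const_mul _ (hmeasW W)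
    _ ≤ ∑ W ∈ D.powerset, ENNReal.ofReal (bw p D W) * Sup :=
        Finset.sum_le_sum fun W _ => mul_le_mul_right (hI W) _
    _ = Sup := by
        rw [← Finset.sum_mul, ← ENNReal.ofReal_sum_of_nonneg
          (fun W _ => bw_nonneg h0 h1 _ _), bw_sum]
        simp
end

section
/- Let d, k, r ∈ ℕ and let f : [0,1]^d → [−1,+1] be monotone. Then Σ over all α ∈ ℕ₀^d with |α|₀ > k and α_j ≤ 2^r − 1 for all j of f̃(α)² ≤ √(d·r)/(k+1), where |α|₀ = #{j : α_j > 0} and f̃(α) = ∫_{[0,1]^d} ψ_α f dλ^d are the Haar wavelet coefficients of f. -/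
open MeasureTheory

/-- The dyadic interval `I_{λ,κ} ⊆ [0,1]`. -/
noncomputable def haarI (lam kap : ℕ) : Set ℝ :=
  if kap = 2 ^ lam - 1 then Set.Icc (1 - (2 : ℝ) ^ (-(lam : ℤ))) 1
  else Set.Ico ((kap : ℝ) * (2 : ℝ) ^ (-(lam : ℤ))) (((kap : ℝ) + 1) * (2 : ℝ) ^ (-(lam : ℤ)))

/-- The univariate Haar function `h_a` on `[0,1]`: `h_0 ≡ 1` and, for
`a = 2^λ + κ ≥ 1`, `h_a = 2^(λ/2) (𝟙_{I_{λ+1,2κ+1}} - 𝟙_{I_{λ+1,2κ}})`. -/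
noncomputable def haarFn (a : ℕ) (t : ℝ) : ℝ :=
  if a = 0 then 1
  else
    (2 : ℝ) ^ ((Nat.log 2 a : ℝ) / 2) *
      ((haarI (Nat.log 2 a + 1) (2 * (a - 2 ^ Nat.log 2 a) + 1)).indicator
          (fun _ => (1 : ℝ)) t -
        (haarI (Nat.log 2 a + 1) (2 * (a - 2 ^ Nat.log 2 a))).indicator
          (fun _ => (1 : ℝ)) t)

/-- The tensor Haar wavelet `ψ_α` on `[0,1]^d`. -/
noncomputable def haarPsi (d : ℕ) (α : Fin d → ℕ) (x : Fin d → ℝ) : ℝ :=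
  ∏ j, haarFn (α j) (x j)


noncomputable def fl (l : ℕ) (t : ℝ) : ℤ := ⌊(2 : ℝ) ^ l * t⌋

noncomputable def tau (l : ℕ) (t : ℝ) : ℝ :=
  if Even (fl (l + 1) t) then t + 1 / 2 ^ (l + 1) else t - 1 / 2 ^ (l + 1)

noncomputable def rad (l : ℕ) (t : ℝ) : ℝ := if Even (fl (l + 1) t) then -1 else 1

noncomputable def hz (a : ℕ) (t : ℝ) : ℝ :=
  if a = 0 then 1
  else
    (2 : ℝ) ^ ((Nat.log 2 a : ℝ) / 2) *
      ((if fl (Nat.log 2 a + 1) t = 2 * ((a - 2 ^ Nat.log 2 a : ℕ) : ℤ) + 1 then 1 else 0) -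
        (if fl (Nat.log 2 a + 1) t = 2 * ((a - 2 ^ Nat.log 2 a : ℕ) : ℤ) then 1 else 0))

noncomputable def mu1 : Measure ℝ := volume.restrict (Set.Ico (0 : ℝ) 1)

instance : IsProbabilityMeasure mu1 := ⟨by simp [mu1]⟩

lemma fl_tau_even {l : ℕ} {t : ℝ} (h : Even (fl (l + 1) t)) :
    fl (l + 1) (tau l t) = fl (l + 1) t + 1 := by
  rw [tau, if_pos h, fl, mul_add, mul_one_div_cancel (by positivity), Int.floor_add_one]; rfl

lemma fl_tau_odd {l : ℕ} {t : ℝ} (h : ¬ Even (fl (l + 1) t)) :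
    fl (l + 1) (tau l t) = fl (l + 1) t - 1 := by
  rw [tau, if_neg h, fl, mul_sub, mul_one_div_cancel (by positivity), Int.floor_sub_one]; rfl

lemma even_fl_tau (l : ℕ) (t : ℝ) : Even (fl (l + 1) (tau l t)) ↔ ¬ Even (fl (l + 1) t) := by
  by_cases h : Even (fl (l + 1) t)
  · rw [fl_tau_even h]; rw [Int.even_add_one]
  · rw [fl_tau_odd h]; rw [Int.even_sub_one]

lemma tau_invol (l : ℕ) : Function.Involutive (tau l) := by
  intro t
  by_cases h : Even (fl (l + 1) t)
  · have h2 : ¬ Even (fl (l + 1) (tau l t)) := by rw [even_fl_tau]; simpa using h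
    rw [tau, if_neg h2, tau, if_pos h]; ring
  · have h2 : Even (fl (l + 1) (tau l t)) := by rw [even_fl_tau]; simpa using h
    rw [tau, if_pos h2, tau, if_neg h]; ring

lemma fl_coarse (m l : ℕ) (h : m ≤ l) (t : ℝ) : fl m t = fl (l + 1) t / 2 / 2 ^ (l - m) := by
  obtain ⟨e, rfl⟩ := Nat.exists_eq_add_of_le h
  have := Int.floor_div_natCast ((2 : ℝ) ^ (m + e + 1) * t) (2 ^ (e + 1))
  rw [fl, fl, Int.ediv_ediv_of_nonneg (by norm_num)]
  have h2 : (2 : ℝ) ^ (m + e + 1) * t / ((2 ^ (e + 1) : ℕ) : ℝ) = 2 ^ m * t := by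
    push_cast
    rw [add_assoc, pow_add 2 m]; field_simp
  rw [h2] at this
  rw [this]; push_cast; congr 1
  rw [Nat.add_sub_cancel_left, pow_succ]; ring

lemma fl_tau_lt (m l : ℕ) (h : m ≤ l) (t : ℝ) : fl m (tau l t) = fl m t := by
  rw [fl_coarse m l h, fl_coarse m l h t]
  congr 1
  by_cases h : Even (fl (l + 1) t)
  · rw [fl_tau_even h]; obtain ⟨c, hc⟩ := h; omega
  · rw [fl_tau_odd h]
    rw [Int.not_even_iff_odd] at h
    obtain ⟨c, hc⟩ := h; omega

lemma mem_Ico_iff_fl (t : ℝ) : t ∈ Set.Ico (0 : ℝ) 1 ↔ fl 0 t = 0 := by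
  simp [fl, Int.floor_eq_iff]

lemma tau_mem_iff (l : ℕ) (t : ℝ) : tau l t ∈ Set.Ico (0 : ℝ) 1 ↔ t ∈ Set.Ico (0 : ℝ) 1 := by
  rw [mem_Ico_iff_fl, mem_Ico_iff_fl, fl_tau_lt 0 l (Nat.zero_le _)]

lemma measurable_fl (l : ℕ) : Measurable (fl l) := by
  unfold fl; fun_prop

lemma measurableSet_even (l : ℕ) : MeasurableSet {t | Even (fl l t)} :=
  measurable_fl l (MeasurableSet.of_discrete (s := {n : ℤ | Even n}))

lemma measurable_tau (l : ℕ) : Measurable (tau l) :=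
  Measurable.ite (measurableSet_even _) (by fun_prop) (by fun_prop)

lemma measurable_rad (l : ℕ) : Measurable (rad l) :=
  Measurable.ite (measurableSet_even _) (by fun_prop) (by fun_prop)

lemma measurable_hz (a : ℕ) : Measurable (hz a) := by
  unfold hz
  by_cases h : a = 0
  · simp [h]
  · simp only [h, if_false]
    have hm : ∀ n : ℤ, MeasurableSet {t | fl (Nat.log 2 a + 1) t = n} := fun n =>
      measurable_fl _ (measurableSet_singleton n)
    exact measurable_const.mul ((Measurable.ite (hm _) measurable_const measurable_const).sub
      (Measurable.ite (hm _) measurable_const measurable_const))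

lemma rad_tau (l : ℕ) (t : ℝ) : rad l (tau l t) = - rad l t := by
  unfold rad
  simp only [even_fl_tau]; by_cases h : Even (fl (l + 1) t) <;> simp [h]

lemma rad_tau_lt (m l : ℕ) (h : m < l) (t : ℝ) : rad m (tau l t) = rad m t := by
  unfold rad
  rw [fl_tau_lt _ _ h]

lemma hz_tau (a : ℕ) (ha : a ≠ 0) (t : ℝ) : hz a (tau (Nat.log 2 a) t) = - hz a t := by
  unfold hz
  simp only [ha, if_false]
  rw [← mul_neg]
  congr 1
  generalize ((a - 2 ^ Nat.log 2 a : ℕ) : ℤ) = c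
  by_cases h : Even (fl (Nat.log 2 a + 1) t)
  · rw [fl_tau_even h]
    obtain ⟨b, hb⟩ := h
    split_ifs <;> first | omega | norm_num
  · rw [fl_tau_odd h]
    rw [Int.not_even_iff_odd] at h
    obtain ⟨b, hb⟩ := h
    split_ifs <;> first | omega | norm_num

lemma hz_tau_lt (a l : ℕ) (h : a = 0 ∨ Nat.log 2 a < l) (t : ℝ) : hz a (tau l t) = hz a t := by
  unfold hz
  by_cases ha : a = 0
  · simp [ha]
  · have := h.resolve_left ha
    rw [fl_tau_lt _ _ this]

lemma tau_mp_vol (l : ℕ) : MeasurePreserving (tau l) volume volume := by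
  refine ⟨measurable_tau l, ?_⟩
  ext A hA
  rw [Measure.map_apply (measurable_tau l) hA]
  set E := {t | Even (fl (l + 1) t)} with hE
  have hEm : MeasurableSet E := measurableSet_even _
  set s : ℝ := 1 / 2 ^ (l + 1)
  have h1 : tau l ⁻¹' A ∩ E = (fun t => t + s) ⁻¹' (A \ E) := by
    ext t
    constructor
    · rintro ⟨h1, h2⟩
      have h3 : tau l t = t + s := if_pos h2
      have h4 := even_fl_tau l t
      simp only [Set.mem_preimage, Set.mem_sdiff, ← h3]
      exact ⟨h1, fun h => h4.1 h h2⟩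
    · rintro ⟨h1, h2⟩
      have h3 : tau l (t + s) = t := by
        rw [tau, if_neg (show ¬ Even (fl (l + 1) (t + s)) from h2)]; simp [s]
      have h4 : tau l t = t + s := by rw [← h3, tau_invol]; rw [h3]
      refine ⟨by simpa [h4] using h1, ?_⟩
      have h5 := even_fl_tau l t
      rw [h4] at h5
      by_contra h6
      exact h2 (h5.2 h6)
  have h2 : tau l ⁻¹' A \ E = (fun t => t + (-s)) ⁻¹' (A ∩ E) := by
    ext t
    constructor
    · rintro ⟨h1, h2⟩
      have h3 : tau l t = t + -s := by
        rw [tau, if_neg (show ¬ Even (fl (l + 1) t) from h2)]; ring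
      have h4 := even_fl_tau l t
      simp only [Set.mem_preimage, ← h3]
      exact ⟨h1, h4.2 h2⟩
    · rintro ⟨h1, h2⟩
      have h3 : tau l (t + -s) = t := by
        rw [tau, if_pos (show Even (fl (l + 1) (t + -s)) from h2)]; simp [s]
      have h4 : tau l t = t + -s := by rw [← h3, tau_invol]; rw [h3]
      refine ⟨by simpa [h4] using h1, ?_⟩
      have h5 := even_fl_tau l t
      rw [h4] at h5
      exact h5.1 h2
  rw [← measure_inter_add_sdiff (tau l ⁻¹' A) hEm, h1, h2, measure_preimage_add_right,
    measure_preimage_add_right, add_comm, measure_inter_add_sdiff A hEm]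

lemma tau_mp (l : ℕ) : MeasurePreserving (tau l) mu1 mu1 := by
  have := (tau_mp_vol l).restrict_preimage (measurableSet_Ico (a := (0 : ℝ)) (b := 1))
  have h : tau l ⁻¹' Set.Ico (0 : ℝ) 1 = Set.Ico (0 : ℝ) 1 := by
    ext t; exact tau_mem_iff l t
  rwa [h] at this

lemma haarI_indicator (l n : ℕ) (t : ℝ) (ht : t ∈ Set.Ico (0 : ℝ) 1) :
    (haarI l n).indicator (fun _ => (1 : ℝ)) t = if fl l t = (n : ℤ) then 1 else 0 := by
  have hp : (0 : ℝ) < 2 ^ l := by positivity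
  have key : t ∈ haarI l n ↔ fl l t = (n : ℤ) := by
    unfold haarI fl
    rw [Int.floor_eq_iff, zpow_neg, zpow_natCast]
    split_ifs with h
    · have h2 : (n : ℝ) = 2 ^ l - 1 := by
        rw [h, Nat.cast_sub Nat.one_le_two_pow]; push_cast; rfl
      push_cast
      rw [h2]
      constructor
      · rintro ⟨h1, -⟩
        have := mul_le_mul_of_nonneg_left h1 hp.le
        rw [mul_sub, mul_inv_cancel₀ hp.ne'] at this
        constructor <;> nlinarith [ht.2]
      · rintro ⟨h1, -⟩
        refine ⟨?_, ht.2.le⟩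
        by_contra h3
        push Not at h3
        have := mul_lt_mul_of_pos_left h3 hp
        rw [mul_sub, mul_inv_cancel₀ hp.ne'] at this
        linarith
    · rw [Set.mem_Ico, ← div_eq_mul_inv, ← div_eq_mul_inv, div_le_iff₀ hp, lt_div_iff₀ hp, mul_comm t]
      push_cast; rfl
  by_cases h : t ∈ haarI l n
  · rw [Set.indicator_of_mem h, if_pos (key.1 h)]
  · rw [Set.indicator_of_notMem h, if_neg (fun h' => h (key.2 h'))]

lemma haarFn_eq_hz (a : ℕ) (t : ℝ) (ht : t ∈ Set.Ico (0 : ℝ) 1) : haarFn a t = hz a t := by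
  unfold haarFn hz
  rw [haarI_indicator _ _ _ ht, haarI_indicator _ _ _ ht]
  push_cast; rfl

lemma integral_comp_tau (l : ℕ) (g : ℝ → ℝ) : ∫ t, g (tau l t) ∂mu1 = ∫ t, g t ∂mu1 :=
  MeasurePreserving.integral_comp' (f := MeasurableEquiv.ofInvolutive (tau l) (tau_invol l)
    (measurable_tau l)) (tau_mp l) g

lemma hz_orth_lt (a b : ℕ) (hb : b ≠ 0) (h : a = 0 ∨ Nat.log 2 a < Nat.log 2 b) :
    ∫ t, hz a t * hz b t ∂mu1 = 0 := by
  have := integral_comp_tau (Nat.log 2 b) (fun t => hz a t * hz b t)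
  simp only [hz_tau b hb, hz_tau_lt a _ h, mul_neg, integral_neg] at this
  linarith

lemma hz_orth (a b : ℕ) (h : a ≠ b) : ∫ t, hz a t * hz b t ∂mu1 = 0 := by
  by_cases ha : a = 0
  · exact hz_orth_lt a b (by omega) (Or.inl ha)
  by_cases hb : b = 0
  · simp_rw [mul_comm (hz a _)]
    exact hz_orth_lt b a ha (Or.inl hb)
  rcases lt_trichotomy (Nat.log 2 a) (Nat.log 2 b) with h1 | h1 | h1
  · exact hz_orth_lt a b hb (Or.inr h1)
  · have h3 := Nat.pow_log_le_self 2 ha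
    have h4 := Nat.pow_log_le_self 2 hb
    have : ∀ t, hz a t * hz b t = 0 := by
      intro t
      unfold hz
      simp only [ha, hb, if_false]
      rw [h1] at h3 ⊢
      split_ifs <;> first | omega | simp
    simp [this]
  · simp_rw [mul_comm (hz a _)]
    exact hz_orth_lt b a ha (Or.inr h1)

lemma hz_sq (a : ℕ) : ∫ t, hz a t * hz a t ∂mu1 = 1 := by
  by_cases ha : a = 0
  · simp [hz, ha]
  set l := Nat.log 2 a with hl
  have h3 := Nat.pow_log_le_self 2 ha
  have h4 := Nat.lt_pow_succ_log_self (b := 2) (by norm_num) a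
  set c := a - 2 ^ l with hc
  have hcl : c + 1 ≤ 2 ^ l := by rw [Nat.succ_eq_add_one, pow_succ, ← hl] at h4; rw [← hl] at h3; omega
  have hp : (0 : ℝ) < 2 ^ l := by positivity
  set S := Set.Ico ((c : ℝ) / 2 ^ l) ((c + 1) / 2 ^ l) with hS
  have key : ∀ t, hz a t * hz a t = S.indicator (fun _ => (2 : ℝ) ^ l) t := by
    intro t
    have h5 : t ∈ S ↔ fl (l + 1) t / 2 = c := by
      have := fl_coarse l l le_rfl t
      simp at this
      rw [← this, fl, Int.floor_eq_iff, hS, Set.mem_Ico, div_le_iff₀ hp, lt_div_iff₀ hp, mul_comm t]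
      push_cast; rfl
    have h6 : (2 : ℝ) ^ ((l : ℝ) / 2) * (2 : ℝ) ^ ((l : ℝ) / 2) = 2 ^ l := by
      rw [← Real.rpow_add (by norm_num), add_halves, Real.rpow_natCast]
    unfold hz
    simp only [ha, if_false]
    rw [← hl, ← hc]
    by_cases h : t ∈ S
    · rw [Set.indicator_of_mem h, ← h6]
      rw [h5] at h
      split_ifs <;> first | omega | ring
    · rw [Set.indicator_of_notMem h]
      rw [h5] at h
      split_ifs <;> first | omega | ring
  simp_rw [key]
  have hsub : S ⊆ Set.Ico (0 : ℝ) 1 := by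
    intro t ht
    refine ⟨le_trans (by positivity) ht.1, ht.2.trans_le ?_⟩
    rw [div_le_one hp]; exact_mod_cast hcl
  rw [integral_indicator measurableSet_Ico, mu1, Measure.restrict_restrict measurableSet_Ico,
    Set.inter_eq_left.2 hsub, setIntegral_const, hS, Real.volume_real_Ico_of_le (by gcongr; linarith)]
  rw [smul_eq_mul]; field_simp; ring

lemma hz_bound (a : ℕ) : ∃ C, ∀ t, ‖hz a t‖ ≤ C := by
  refine ⟨1 + (2 : ℝ) ^ ((Nat.log 2 a : ℝ) / 2), fun t => ?_⟩
  have : (0 : ℝ) < (2 : ℝ) ^ ((Nat.log 2 a : ℝ) / 2) := by positivity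
  rw [Real.norm_eq_abs, abs_le]
  unfold hz
  split_ifs <;> constructor <;> linarith

noncomputable def muD (d : ℕ) : Measure (Fin d → ℝ) := Measure.pi (fun _ => mu1)

instance (d : ℕ) : IsProbabilityMeasure (muD d) := by unfold muD; infer_instance

lemma muD_eq' (d : ℕ) :
    muD d = volume.restrict (Set.univ.pi fun _ : Fin d => Set.Ico (0 : ℝ) 1) := by
  unfold muD mu1
  rw [← Measure.restrict_pi_pi]; rfl

lemma muD_eq (d : ℕ) : volume.restrict (Set.Icc (0 : Fin d → ℝ) 1) = muD d := by
  rw [muD_eq']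
  exact (Measure.restrict_congr_set
    (Measure.univ_pi_Ico_ae_eq_Icc (μ := fun _ : Fin d => (volume : Measure ℝ))
      (f := (0 : Fin d → ℝ)) (g := 1))).symm

lemma ae_mem (d : ℕ) : ∀ᵐ x ∂(muD d), ∀ i, x i ∈ Set.Ico (0 : ℝ) 1 := by
  rw [muD_eq']
  filter_upwards [ae_restrict_mem (MeasurableSet.univ_pi fun _ => measurableSet_Ico)] with x hx i
  exact hx i trivial

noncomputable def bflip (d : ℕ) (j : Fin d) (l : ℕ) (x : Fin d → ℝ) : Fin d → ℝ :=
  fun i => (if i = j then tau l else id) (x i)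

lemma flip_same (d : ℕ) (j : Fin d) (l : ℕ) (x : Fin d → ℝ) : bflip d j l x j = tau l (x j) := by
  simp [bflip]

lemma flip_ne (d : ℕ) (j : Fin d) (l : ℕ) (x : Fin d → ℝ) (i : Fin d) (h : i ≠ j) :
    bflip d j l x i = x i := by
  simp [bflip, h]

lemma flip_mp (d : ℕ) (j : Fin d) (l : ℕ) : MeasurePreserving (bflip d j l) (muD d) (muD d) := by
  refine measurePreserving_pi (fun _ => mu1) (fun _ => mu1)
    (f := fun i => if i = j then tau l else id) (fun i => ?_)
  by_cases h : i = j
  · simp only [h, if_true]; exact tau_mp l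
  · simp only [h, if_false]; exact MeasurePreserving.id _

lemma flip_invol (d : ℕ) (j : Fin d) (l : ℕ) : Function.Involutive (bflip d j l) := by
  intro x
  ext i
  by_cases h : i = j
  · subst h; rw [flip_same, flip_same, tau_invol]
  · rw [flip_ne _ _ _ _ _ h, flip_ne _ _ _ _ _ h]

lemma integral_comp_flip (d : ℕ) (j : Fin d) (l : ℕ) (g : (Fin d → ℝ) → ℝ) :
    ∫ x, g (bflip d j l x) ∂(muD d) = ∫ x, g x ∂(muD d) :=
  MeasurePreserving.integral_comp' (f := MeasurableEquiv.ofInvolutive (bflip d j l)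
    (flip_invol d j l) (flip_mp d j l).measurable) (flip_mp d j l) g

lemma bessel {Ω ι : Type*} [MeasurableSpace Ω] (μ : Measure Ω) (v : ι → Ω → ℝ)
    (hv : ∀ i, MemLp (v i) 2 μ) (ho : ∀ i j, i ≠ j → ∫ x, v i x * v j x ∂μ = 0)
    (hn : ∀ i, ∫ x, v i x * v i x ∂μ = 1) (g : Ω → ℝ) (hg : MemLp g 2 μ) (s : Finset ι) :
    ∑ i ∈ s, (∫ x, v i x * g x ∂μ) ^ 2 ≤ ∫ x, g x * g x ∂μ := by
  classical
  have hin : ∀ (a b : Ω → ℝ) (ha : MemLp a 2 μ) (hb : MemLp b 2 μ),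
      inner ℝ (ha.toLp a) (hb.toLp b) = ∫ x, a x * b x ∂μ := by
    intro a b ha hb
    rw [L2.inner_def]
    apply integral_congr_ae
    filter_upwards [ha.coeFn_toLp, hb.coeFn_toLp] with x h1 h2
    rw [h1, h2]; simp [mul_comm]
  have hon : Orthonormal ℝ (fun i => (hv i).toLp (v i)) := by
    rw [orthonormal_iff_ite]
    intro i j
    rw [hin]
    split_ifs with h
    · subst h; exact hn i
    · exact ho i j h
  have := hon.sum_inner_products_le (hg.toLp g) (s := s)
  rw [← real_inner_self_eq_norm_sq, hin] at this
  simpa [hin] using this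

noncomputable def psz (d : ℕ) (α : Fin d → ℕ) (x : Fin d → ℝ) : ℝ := ∏ j, hz (α j) (x j)

lemma psz_memLp (d : ℕ) (α : Fin d → ℕ) : MemLp (psz d α) 2 (muD d) := by
  choose C hC using hz_bound
  refine MemLp.of_bound ?_ (∏ j, C (α j)) (Filter.Eventually.of_forall fun x => ?_)
  · apply Measurable.aestronglyMeasurable
    unfold psz
    exact Finset.measurable_prod _ fun j _ => (measurable_hz _).comp (measurable_pi_apply j)
  · unfold psz
    rw [norm_prod]
    exact Finset.prod_le_prod (fun _ _ => norm_nonneg _) (fun j _ => hC _ _)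

lemma psz_int (d : ℕ) (α β : Fin d → ℕ) : ∫ x, psz d α x * psz d β x ∂(muD d) =
    ∏ j, ∫ t, hz (α j) t * hz (β j) t ∂mu1 := by
  unfold psz muD
  simp_rw [← Finset.prod_mul_distrib]
  exact integral_fintype_prod_eq_prod (fun j t => hz (α j) t * hz (β j) t)

lemma psz_flip (d : ℕ) (α : Fin d → ℕ) (j : Fin d) (h : α j ≠ 0) (x : Fin d → ℝ) :
    psz d α (bflip d j (Nat.log 2 (α j)) x) = - psz d α x := by
  unfold psz
  rw [← Finset.mul_prod_erase _ _ (Finset.mem_univ j),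
    ← Finset.mul_prod_erase _ (fun j => hz (α j) (x j)) (Finset.mem_univ j), flip_same, hz_tau _ h,
    neg_mul]
  congr 2
  refine Finset.prod_congr rfl fun i hi => ?_
  rw [flip_ne _ _ _ _ _ (Finset.ne_of_mem_erase hi)]

lemma haarPsi_ae (d : ℕ) (α : Fin d → ℕ) : haarPsi d α =ᵐ[muD d] psz d α := by
  filter_upwards [ae_mem d] with x hx
  exact Finset.prod_congr rfl fun j _ => haarFn_eq_hz _ _ (hx j)

lemma rad_sq (l : ℕ) (t : ℝ) : rad l t * rad l t = 1 := by
  unfold rad; split_ifs <;> norm_num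

lemma rad_norm (l : ℕ) (t : ℝ) : ‖rad l t‖ ≤ 1 := by
  unfold rad; split_ifs <;> norm_num

lemma rad_memLp (d : ℕ) (j : Fin d) (l : ℕ) : MemLp (fun x => rad l (x j)) 2 (muD d) :=
  MemLp.of_bound ((measurable_rad l).comp (measurable_pi_apply j)).aestronglyMeasurable 1
    (Filter.Eventually.of_forall fun _ => rad_norm _ _)

lemma rad_orth' (d : ℕ) (i j : Fin d) (m l : ℕ) (h : i ≠ j ∨ m < l) :
    ∫ x, rad m (x i) * rad l (x j) ∂(muD d) = 0 := by
  have := integral_comp_flip d j l (fun x => rad m (x i) * rad l (x j))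
  have h2 : ∀ x, rad m (bflip d j l x i) = rad m (x i) := by
    intro x
    by_cases hij : i = j
    · subst hij
      rw [flip_same, rad_tau_lt _ _ (h.resolve_left (by simp))]
    · rw [flip_ne _ _ _ _ _ hij]
  simp only [h2, flip_same, rad_tau, mul_neg, integral_neg] at this
  linarith

lemma rad_orth (d : ℕ) (p q : Fin d × ℕ) (h : p ≠ q) :
    ∫ x, rad p.2 (x p.1) * rad q.2 (x q.1) ∂(muD d) = 0 := by
  by_cases h1 : p.1 = q.1
  · have h2 : p.2 ≠ q.2 := fun h2 => h (Prod.ext h1 h2)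
    rcases lt_or_gt_of_ne h2 with h3 | h3
    · exact rad_orth' d _ _ _ _ (Or.inr h3)
    · simp_rw [mul_comm (rad p.2 _)]
      exact rad_orth' d _ _ _ _ (Or.inr h3)
  · exact rad_orth' d _ _ _ _ (Or.inl h1)

lemma mono_aemeas (d : ℕ) (f : (Fin d → ℝ) → ℝ)
    (hmono : ∀ x ∈ Set.Icc (0 : Fin d → ℝ) 1, ∀ z ∈ Set.Icc (0 : Fin d → ℝ) 1,
      x ≤ z → f x ≤ f z)
    (hval : ∀ x ∈ Set.Icc (0 : Fin d → ℝ) 1, f x ∈ Set.Icc (-1 : ℝ) 1) :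
    AEMeasurable f (muD d) := by
  classical
  set g : (Fin d → ℝ) → ℝ := fun x => if x ∈ Set.Icc (0 : Fin d → ℝ) 1 then f x else -2 with hg
  have hgm : NullMeasurable g (volume : Measure (Fin d → ℝ)) := by
    refine measurable_of_Ioi (δ := NullMeasurableSpace (Fin d → ℝ) volume) (f := g) fun c => ?_
    by_cases hc : c < -2
    · have : g ⁻¹' Set.Ioi c = Set.univ := by
        ext x
        simp only [Set.mem_preimage, Set.mem_Ioi, Set.mem_univ, iff_true, hg]
        split_ifs with h
        · have := (hval x h).1; linarith
        · exact hc
      exact (show NullMeasurableSet (g ⁻¹' Set.Ioi c) volume by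
        rw [this]; exact nullMeasurableSet_univ)
    · have h1 : ∀ x, x ∈ g ⁻¹' Set.Ioi c ↔ x ∈ Set.Icc (0 : Fin d → ℝ) 1 ∧ c < f x := by
        intro x
        simp only [Set.mem_preimage, Set.mem_Ioi, hg]
        split_ifs with h
        · simp [h]
        · simp only [h, false_and, iff_false]; exact hc
      have : (g ⁻¹' Set.Ioi c).OrdConnected := by
        refine ⟨fun x hx z hz y hy => ?_⟩
        rw [h1] at hx hz ⊢
        have hyI : y ∈ Set.Icc (0 : Fin d → ℝ) 1 := ⟨hx.1.1.trans hy.1, hy.2.trans hz.1.2⟩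
        exact ⟨hyI, hx.2.trans_le (hmono _ hx.1 _ hyI hy.1)⟩
      exact this.nullMeasurableSet
  have h2 : AEMeasurable g (muD d) := by
    rw [← muD_eq]; exact hgm.aemeasurable.restrict
  refine h2.congr ?_
  filter_upwards [ae_mem d] with x hx
  have : x ∈ Set.Icc (0 : Fin d → ℝ) 1 := ⟨fun i => (hx i).1, fun i => (hx i).2.le⟩
  simp only [hg, this, if_true]

lemma level_bound (d : ℕ) (f : (Fin d → ℝ) → ℝ)
    (hval : ∀ x ∈ Set.Icc (0 : Fin d → ℝ) 1, f x ∈ Set.Icc (-1 : ℝ) 1)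
    (hmono : ∀ x ∈ Set.Icc (0 : Fin d → ℝ) 1, ∀ z ∈ Set.Icc (0 : Fin d → ℝ) 1,
      x ≤ z → f x ≤ f z) (hf : MemLp f 2 (muD d)) (j : Fin d) (l : ℕ)
    (s : Finset (Fin d → ℕ)) (hs : ∀ α ∈ s, α j ≠ 0 ∧ Nat.log 2 (α j) = l) :
    ∑ α ∈ s, (∫ x, psz d α x * f x ∂(muD d)) ^ 2 ≤ ∫ x, rad l (x j) * f x ∂(muD d) := by
  set T := bflip d j l with hT
  have hfT : MemLp (fun x => f (T x)) 2 (muD d) := hf.comp_measurePreserving (flip_mp d j l)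
  set D : (Fin d → ℝ) → ℝ := fun x => (1 / 2 : ℝ) * (f x - f (T x)) with hD
  have hDm : MemLp D 2 (muD d) := (hf.sub hfT).const_mul _
  have h1 : ∀ v : (Fin d → ℝ) → ℝ, MemLp v 2 (muD d) → (∀ x, v (T x) = - v x) →
      ∫ x, v x * D x ∂(muD d) = ∫ x, v x * f x ∂(muD d) := by
    intro v hv hvT
    have e1 := integral_comp_flip d j l (fun x => v x * f x)
    simp only [← hT, hvT, neg_mul, integral_neg] at e1
    have i1 : Integrable (fun x => v x * f x) (muD d) := hv.integrable_mul hf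
    have i2 : Integrable (fun x => v x * f (T x)) (muD d) := hv.integrable_mul hfT
    have : ∀ x, v x * D x = (1 / 2 : ℝ) * (v x * f x - v x * f (T x)) := by
      intro x; simp only [hD]; ring
    simp_rw [this]
    rw [integral_const_mul, integral_sub i1 i2]
    linarith
  have h2 := bessel (muD d) (psz d) (psz_memLp d)
    (by
      intro α β h
      rw [psz_int]
      obtain ⟨i, hi⟩ := Function.ne_iff.1 h
      exact Finset.prod_eq_zero (Finset.mem_univ i) (hz_orth _ _ hi))
    (by intro α; rw [psz_int]; exact Finset.prod_eq_one fun i _ => hz_sq _) D hDm s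
  rw [Finset.sum_congr rfl (fun α hα => by
    rw [h1 _ (psz_memLp d α) (fun x => by
      obtain ⟨h3, h4⟩ := hs α hα
      rw [hT, ← h4]; exact psz_flip d α j h3 x)])] at h2
  rw [← h1 _ (rad_memLp d j l) (fun x => by rw [hT, flip_same, rad_tau])]
  refine h2.trans (integral_mono_ae (hDm.integrable_mul hDm)
    ((rad_memLp d j l).integrable_mul hDm) ?_)
  filter_upwards [ae_mem d] with x hx
  have hxI : x ∈ Set.Icc (0 : Fin d → ℝ) 1 := ⟨fun i => (hx i).1, fun i => (hx i).2.le⟩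
  have hTi : ∀ i, T x i ∈ Set.Ico (0 : ℝ) 1 := by
    intro i
    by_cases h : i = j
    · subst h; rw [hT, flip_same, tau_mem_iff]; exact hx i
    · rw [hT, flip_ne _ _ _ _ _ h]; exact hx i
  have hTI : T x ∈ Set.Icc (0 : Fin d → ℝ) 1 := ⟨fun i => (hTi i).1, fun i => (hTi i).2.le⟩
  have b1 := hval _ hxI
  have b2 := hval _ hTI
  have hpos : (0 : ℝ) < 1 / 2 ^ (l + 1) := by positivity
  simp only [Pi.mul_apply, hD]
  by_cases h : Even (fl (l + 1) (x j))
  · have hle : x ≤ T x := by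
      intro i
      by_cases h' : i = j
      · subst h'; rw [hT, flip_same, tau, if_pos h]; linarith
      · rw [hT, flip_ne _ _ _ _ _ h']
    have h5 := hmono _ hxI _ hTI hle
    rw [rad, if_pos h]
    nlinarith [b1.1, b1.2, b2.1, b2.2]
  · have hle : T x ≤ x := by
      intro i
      by_cases h' : i = j
      · subst h'; rw [hT, flip_same, tau, if_neg h]; linarith
      · rw [hT, flip_ne _ _ _ _ _ h']
    have h5 := hmono _ hTI _ hxI hle
    rw [rad, if_neg h]
    nlinarith [b1.1, b1.2, b2.1, b2.2]

theorem stmt16 (d k r : ℕ) (hd : 1 ≤ d) (hk : 1 ≤ k) (hr : 1 ≤ r)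
    (f : (Fin d → ℝ) → ℝ)
    (hval : ∀ x ∈ Set.Icc (0 : Fin d → ℝ) 1, f x ∈ Set.Icc (-1 : ℝ) 1)
    (hmono : ∀ x ∈ Set.Icc (0 : Fin d → ℝ) 1, ∀ z ∈ Set.Icc (0 : Fin d → ℝ) 1,
      x ≤ z → f x ≤ f z) :
    ∑ α ∈ Finset.univ.filter (fun α : Fin d → Fin (2 ^ r) =>
        k < (Finset.univ.filter fun j => (α j : ℕ) ≠ 0).card),
      (∫ x in Set.Icc (0 : Fin d → ℝ) 1, haarPsi d (fun j => (α j : ℕ)) x * f x) ^ 2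
      ≤ Real.sqrt ((d : ℝ) * r) / (k + 1) := by
  classical
  have hfm : MemLp f 2 (muD d) := by
    refine MemLp.of_bound (mono_aemeas d f hmono hval).aestronglyMeasurable 1 ?_
    filter_upwards [ae_mem d] with x hx
    have := hval x ⟨fun i => (hx i).1, fun i => (hx i).2.le⟩
    rw [Real.norm_eq_abs, abs_le]; exact this
  have hnorm : ∫ x, f x * f x ∂(muD d) ≤ 1 := by
    have : ∫ x, f x * f x ∂(muD d) ≤ ∫ _, (1 : ℝ) ∂(muD d) := by
      refine integral_mono_ae (hfm.integrable_mul hfm) (integrable_const _) ?_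
      filter_upwards [ae_mem d] with x hx
      have := hval x ⟨fun i => (hx i).1, fun i => (hx i).2.le⟩
      change f x * f x ≤ 1
      nlinarith [this.1, this.2]
    simpa using this
  set F : (Fin d → ℕ) → ℝ := fun α => (∫ x, psz d α x * f x ∂(muD d)) ^ 2 with hF
  set c : Fin d × ℕ → ℝ := fun p => ∫ x, rad p.2 (x p.1) * f x ∂(muD d) with hc
  set val : (Fin d → Fin (2 ^ r)) → (Fin d → ℕ) := fun α j => (α j : ℕ) with hval'
  have hvinj : Function.Injective val := by
    intro α β h
    funext j
    exact Fin.ext (congrFun h j)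
  have hcoef : ∀ α : Fin d → Fin (2 ^ r),
      (∫ x in Set.Icc (0 : Fin d → ℝ) 1, haarPsi d (fun j => (α j : ℕ)) x * f x) ^ 2
        = F (val α) := by
    intro α
    rw [muD_eq]
    simp only [hF]
    congr 1
    apply integral_congr_ae
    filter_upwards [haarPsi_ae d (val α)] with x hx
    rw [← hx]
  simp_rw [hcoef]
  have hF0 : ∀ α, 0 ≤ F α := fun α => sq_nonneg _
  set P := (Finset.univ : Finset (Fin d)) ×ˢ Finset.range r with hP
  -- weighted sum
  have hlev : ∀ p ∈ P, ∑ α : Fin d → Fin (2 ^ r),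
      (if (α p.1 : ℕ) ≠ 0 ∧ Nat.log 2 (α p.1 : ℕ) = p.2 then F (val α) else 0) ≤ c p := by
    intro p _
    rw [← Finset.sum_filter]
    have := level_bound d f hval hmono hfm p.1 p.2
      ((Finset.univ.filter fun α : Fin d → Fin (2 ^ r) =>
        (α p.1 : ℕ) ≠ 0 ∧ Nat.log 2 (α p.1 : ℕ) = p.2).image val) (by
        intro α hα
        obtain ⟨β, hβ, rfl⟩ := Finset.mem_image.1 hα
        exact (Finset.mem_filter.1 hβ).2)
    rw [Finset.sum_image (fun a _ b _ h => hvinj h)] at this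
    exact this
  have hcard : ∀ α : Fin d → Fin (2 ^ r),
      ((Finset.univ.filter fun j => (α j : ℕ) ≠ 0).card : ℝ) * F (val α) =
      ∑ p ∈ P, if (α p.1 : ℕ) ≠ 0 ∧ Nat.log 2 (α p.1 : ℕ) = p.2 then F (val α) else 0 := by
    intro α
    rw [hP, Finset.sum_product, ← nsmul_eq_mul, ← Finset.sum_const, Finset.sum_filter]
    refine Finset.sum_congr rfl fun j _ => ?_
    by_cases h : (α j : ℕ) = 0
    · simp [h]
    · have hlt : Nat.log 2 (α j : ℕ) < r := Nat.log_lt_of_lt_pow h (α j).2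
      simp [h, hlt]
  have hsum : ((k : ℝ) + 1) * ∑ α ∈ Finset.univ.filter (fun α : Fin d → Fin (2 ^ r) =>
        k < (Finset.univ.filter fun j => (α j : ℕ) ≠ 0).card), F (val α) ≤ ∑ p ∈ P, c p := by
    calc _ ≤ ∑ α ∈ Finset.univ.filter (fun α : Fin d → Fin (2 ^ r) =>
        k < (Finset.univ.filter fun j => (α j : ℕ) ≠ 0).card),
          ((Finset.univ.filter fun j => (α j : ℕ) ≠ 0).card : ℝ) * F (val α) := by
          rw [Finset.mul_sum]
          refine Finset.sum_le_sum fun α hα => ?_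
          refine mul_le_mul_of_nonneg_right ?_ (hF0 _)
          exact_mod_cast (Finset.mem_filter.1 hα).2
      _ ≤ ∑ α : Fin d → Fin (2 ^ r),
          ((Finset.univ.filter fun j => (α j : ℕ) ≠ 0).card : ℝ) * F (val α) :=
          Finset.sum_le_sum_of_subset_of_nonneg (Finset.filter_subset _ _)
            fun α _ _ => mul_nonneg (Nat.cast_nonneg _) (hF0 _)
      _ = ∑ p ∈ P, ∑ α : Fin d → Fin (2 ^ r),
          (if (α p.1 : ℕ) ≠ 0 ∧ Nat.log 2 (α p.1 : ℕ) = p.2 then F (val α) else 0) := by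
          rw [Finset.sum_comm]
          exact Finset.sum_congr rfl fun α _ => hcard α
      _ ≤ ∑ p ∈ P, c p := Finset.sum_le_sum hlev
  have hc2 : ∑ p ∈ P, c p ^ 2 ≤ 1 :=
    (bessel (muD d) (fun (p : Fin d × ℕ) x => rad p.2 (x p.1)) (fun p => rad_memLp d p.1 p.2)
      (fun p q h => rad_orth d p q h) (fun p => by simp [rad_sq]) f hfm P).trans hnorm
  have hcs : ∑ p ∈ P, c p ≤ Real.sqrt ((d : ℝ) * r) := by
    apply Real.le_sqrt_of_sq_le
    have := Finset.sum_mul_sq_le_sq_mul_sq P (fun _ => (1 : ℝ)) c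
    simp only [one_mul, one_pow, Finset.sum_const, nsmul_eq_mul, mul_one] at this
    have hPc : (P.card : ℝ) = d * r := by simp [hP]
    rw [hPc] at this
    have h0 : (0 : ℝ) ≤ (d : ℝ) * r := by positivity
    nlinarith
  rw [le_div_iff₀ (by positivity), mul_comm]
  exact hsum.trans hcs
end

section
/- Let m ∈ ℕ, let F̃ be a real normed space, let J : ℝ^m → F̃ be a nonzero linear map, let X be a standard Gaussian vector in ℝ^m, let ‖J‖_{2→F} denote the operator norm of J from the Euclidean space ℓ₂^m to F̃, and set ρ = 𝔼‖J X‖_F / ‖J‖_{2→F}. Then for every λ > 1: ℙ{ ‖J X‖_F > λ · 𝔼‖J X‖_F } ≤ exp(−(λ−1)² ρ² / 2) ≤ exp(−(λ−1)² / π). -/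
open MeasureTheory ProbabilityTheory

/-- The operator norm of a linear map `J` from the Euclidean space `ℓ₂^m` to a
normed space `F`. -/
noncomputable def opNorm2F {F : Type*} [NormedAddCommGroup F] [NormedSpace ℝ F]
    (m : ℕ) (J : (Fin m → ℝ) →ₗ[ℝ] F) : ℝ :=
  ⨆ x : {x : Fin m → ℝ // ∑ i, x i ^ 2 ≤ 1}, ‖J x.1‖


lemma bm_compact {K L : Set ℝ} (hK : IsCompact K) (hL : IsCompact L) (hK0 : K.Nonempty)
    (hL0 : L.Nonempty) {C : Set ℝ} (hC : ∀ a ∈ K, ∀ b ∈ L, a + b ∈ C) :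
    volume K + volume L ≤ volume C := by
  have hk := hK.sSup_mem hK0
  have hl := hL.sInf_mem hL0
  set k := sSup K
  set l := sInf L
  have hk' : ∀ x ∈ K, x ≤ k := fun x hx => le_csSup hK.bddAbove hx
  have hl' : ∀ x ∈ L, l ≤ x := fun x hx => csInf_le hL.bddBelow hx
  have h1 : volume ((fun x => l + x) '' K) = volume K := by
    rw [Set.image_add_left, measure_preimage_add]
  have h2 : volume ((fun x => k + x) '' L) = volume L := by
    rw [Set.image_add_left, measure_preimage_add]
  have hm : MeasurableSet ((fun x => k + x) '' L) :=
    (hL.image (by fun_prop)).measurableSet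
  have hd : AEDisjoint volume ((fun x => l + x) '' K) ((fun x => k + x) '' L) := by
    refine measure_mono_null (t := {k + l}) ?_ (by simp)
    rintro z ⟨⟨x, hx, rfl⟩, ⟨y, hy, hxy⟩⟩
    have := hk' x hx
    have := hl' y hy
    simp only at hxy
    simp only [Set.mem_singleton_iff]
    linarith
  rw [← h1, ← h2, ← measure_union₀ hm.nullMeasurableSet hd]
  apply measure_mono
  rintro z (⟨x, hx, rfl⟩ | ⟨x, hx, rfl⟩)
  · simpa [add_comm] using hC x hx l hl
  · exact hC k hk x hx

lemma bm_meas {A B : Set ℝ} (hA : MeasurableSet A) (hB : MeasurableSet B) (hA0 : A.Nonempty)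
    (hB0 : B.Nonempty) {C : Set ℝ} (hC : ∀ a ∈ A, ∀ b ∈ B, a + b ∈ C) :
    volume A + volume B ≤ volume C := by
  obtain ⟨a, ha⟩ := hA0
  obtain ⟨b, hb⟩ := hB0
  rw [hA.measure_eq_iSup_isCompact, hB.measure_eq_iSup_isCompact]
  simp_rw [iSup_and']
  refine ENNReal.biSup_add_biSup_le' ⟨∅, by simp⟩ ⟨∅, by simp⟩ ?_
  rintro K ⟨hKA, hK⟩ L ⟨hLB, hL⟩
  calc volume K + volume L ≤ volume (insert a K) + volume (insert b L) := by
        gcongr <;> exact Set.subset_insert _ _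
    _ ≤ _ := by
      refine bm_compact (hK.insert a) (hL.insert b) (by simp) (by simp) ?_
      intro x hx y hy
      exact hC x (Set.insert_subset ha hKA hx) y (Set.insert_subset hb hLB hy)

open scoped Pointwise in
lemma pl_norm {A B C : ℝ → ℝ} {t : ℝ} (ht0 : 0 < t) (ht1 : t < 1)
    (hA : Measurable A) (hB : Measurable B) (hC : Measurable C)
    (hA0 : ∀ x, 0 ≤ A x) (hB0 : ∀ x, 0 ≤ B x) (hC0 : ∀ x, 0 ≤ C x)
    (hA1 : ∀ x, A x ≤ 1) (hB1 : ∀ x, B x ≤ 1)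
    (hAs : ∀ s < 1, ∃ x, s < A x) (hBs : ∀ s < 1, ∃ x, s < B x)
    (h : ∀ x y, A x ^ t * B y ^ (1 - t) ≤ C (t * x + (1 - t) * y)) :
    ENNReal.ofReal t * (∫⁻ x, ENNReal.ofReal (A x)) + ENNReal.ofReal (1 - t) *
      ∫⁻ x, ENNReal.ofReal (B x) ≤ ∫⁻ x, ENNReal.ofReal (C x) := by
  rw [lintegral_eq_lintegral_meas_lt _ (ae_of_all _ hA0) hA.aemeasurable,
    lintegral_eq_lintegral_meas_lt _ (ae_of_all _ hB0) hB.aemeasurable,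
    lintegral_eq_lintegral_meas_lt _ (ae_of_all _ hC0) hC.aemeasurable]
  have mA : Measurable fun s => volume {a : ℝ | s < A a} :=
    Antitone.measurable (fun s s' hs => measure_mono fun x hx => lt_of_le_of_lt hs hx)
  have mB : Measurable fun s => volume {a : ℝ | s < B a} :=
    Antitone.measurable (fun s s' hs => measure_mono fun x hx => lt_of_le_of_lt hs hx)
  rw [← lintegral_const_mul _ mA, ← lintegral_const_mul _ mB, ← lintegral_add_left (by fun_prop)]
  refine setLIntegral_mono' measurableSet_Ioi fun s hs => ?_
  have hs : 0 < s := hs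
  rcases lt_or_ge s 1 with hs1 | hs1
  swap
  · have e1 : {a : ℝ | s < A a} = ∅ := by
      ext x; simpa using (hA1 x).trans hs1
    have e2 : {a : ℝ | s < B a} = ∅ := by
      ext x; simpa using (hB1 x).trans hs1
    simp [e1, e2]
  have ht1' : 0 < 1 - t := by linarith
  have k1 : ∀ (r : ℝ) (hr : 0 < r) (S : Set ℝ), ENNReal.ofReal r * volume S = volume (r • S) := by
    intro r hr S
    rw [Measure.addHaar_smul]
    simp [abs_of_pos hr]
  rw [k1 t ht0, k1 (1 - t) ht1']
  refine bm_meas ?_ ?_ ?_ ?_ ?_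
  · exact (measurableSet_lt measurable_const hA).const_smul_of_ne_zero ht0.ne'
  · exact (measurableSet_lt measurable_const hB).const_smul_of_ne_zero ht1'.ne'
  · exact (hAs s hs1).imp (fun x hx => hx) |> Set.Nonempty.smul_set
  · exact (hBs s hs1).imp (fun x hx => hx) |> Set.Nonempty.smul_set
  · rintro _ ⟨x, hx, rfl⟩ _ ⟨y, hy, rfl⟩
    simp only [Set.mem_ofPred_eq, smul_eq_mul] at *
    refine lt_of_lt_of_le ?_ (h x y)
    calc s = s ^ t * s ^ (1 - t) := by rw [← Real.rpow_add hs]; simp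
      _ < _ := by
        apply mul_lt_mul'' <;> first | positivity | skip
        · exact Real.rpow_lt_rpow hs.le hx ht0
        · exact Real.rpow_lt_rpow hs.le hy ht1'

lemma pl_main {A B C : ℝ → ℝ} {t : ℝ} (ht0 : 0 < t) (ht1 : t < 1)
    (hA : Measurable A) (hB : Measurable B) (hC : Measurable C)
    (hA0 : ∀ x, 0 ≤ A x) (hB0 : ∀ x, 0 ≤ B x) (hC0 : ∀ x, 0 ≤ C x)
    (hA1 : BddAbove (Set.range A)) (hB1 : BddAbove (Set.range B))
    (hAp : ∃ x, 0 < A x) (hBp : ∃ x, 0 < B x)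
    (h : ∀ x y, A x ^ t * B y ^ (1 - t) ≤ C (t * x + (1 - t) * y))
    (hCi : ∫⁻ x, ENNReal.ofReal (C x) ≠ ⊤) :
    (∫⁻ x, ENNReal.ofReal (A x)) ≠ ⊤ ∧ (∫⁻ x, ENNReal.ofReal (B x)) ≠ ⊤ ∧ 
    (∫⁻ x, ENNReal.ofReal (A x)).toReal ^ t * (∫⁻ x, ENNReal.ofReal (B x)).toReal ^ (1 - t)
      ≤ (∫⁻ x, ENNReal.ofReal (C x)).toReal := by
  have ht1' : 0 < 1 - t := by linarith
  set α := ⨆ x, A x with hα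
  set β := ⨆ x, B x with hβ
  have hα0 : 0 < α := by obtain ⟨x, hx⟩ := hAp; exact hx.trans_le (le_ciSup hA1 x)
  have hβ0 : 0 < β := by obtain ⟨x, hx⟩ := hBp; exact hx.trans_le (le_ciSup hB1 x)
  set γ := α ^ t * β ^ (1 - t) with hγ
  have hγ0 : 0 < γ := by positivity
  have key := pl_norm (A := fun x => α⁻¹ * A x) (B := fun x => β⁻¹ * B x)
    (C := fun x => γ⁻¹ * C x) ht0 ht1 (by fun_prop) (by fun_prop) (by fun_prop)
    (fun x => mul_nonneg (by positivity) (hA0 x)) (fun x => mul_nonneg (by positivity) (hB0 x))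
    (fun x => mul_nonneg (by positivity) (hC0 x))
    (fun x => by rw [inv_mul_le_iff₀ hα0, mul_one]; exact le_ciSup hA1 x)
    (fun x => by rw [inv_mul_le_iff₀ hβ0, mul_one]; exact le_ciSup hB1 x)
    (fun s hs => by
      obtain ⟨x, hx⟩ := exists_lt_of_lt_ciSup (show α * s < ⨆ x, A x by rw [← hα]; nlinarith)
      exact ⟨x, by rwa [lt_inv_mul_iff₀ hα0]⟩)
    (fun s hs => by
      obtain ⟨x, hx⟩ := exists_lt_of_lt_ciSup (show β * s < ⨆ x, B x by rw [← hβ]; nlinarith)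
      exact ⟨x, by rwa [lt_inv_mul_iff₀ hβ0]⟩)
    (fun x y => by
      rw [Real.mul_rpow (by positivity) (hA0 x), Real.mul_rpow (by positivity) (hB0 y),
        Real.inv_rpow hα0.le, Real.inv_rpow hβ0.le]
      calc _ = γ⁻¹ * (A x ^ t * B y ^ (1 - t)) := by rw [hγ, mul_inv]; ring
        _ ≤ _ := by gcongr; exact h x y)
  simp_rw [ENNReal.ofReal_mul (inv_nonneg.2 hα0.le), ENNReal.ofReal_mul (inv_nonneg.2 hβ0.le),
    ENNReal.ofReal_mul (inv_nonneg.2 hγ0.le)] at key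
  rw [lintegral_const_mul _ (by fun_prop), lintegral_const_mul _ (by fun_prop),
    lintegral_const_mul _ (by fun_prop)] at key
  set a := ∫⁻ x, ENNReal.ofReal (A x)
  set b := ∫⁻ x, ENNReal.ofReal (B x)
  set c := ∫⁻ x, ENNReal.ofReal (C x)
  have hr : ENNReal.ofReal γ⁻¹ * c ≠ ⊤ := ENNReal.mul_ne_top ENNReal.ofReal_ne_top hCi
  have hl := ne_top_of_le_ne_top hr key
  rw [ENNReal.add_ne_top] at hl
  have ha : a ≠ ⊤ := by
    intro ha
    apply hl.1
    rw [ha, ENNReal.mul_top, ENNReal.mul_top] <;> simpa using (by positivity)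
  have hb : b ≠ ⊤ := by
    intro ha
    apply hl.2
    rw [ha, ENNReal.mul_top, ENNReal.mul_top]
    · simpa using (by linarith)
    · simpa using (by positivity)
  refine ⟨ha, hb, ?_⟩
  have key2 := ENNReal.toReal_mono hr key
  rw [ENNReal.toReal_add hl.1 hl.2] at key2
  simp only [ENNReal.toReal_mul, ENNReal.toReal_ofReal ht0.le, ENNReal.toReal_ofReal ht1'.le,
    ENNReal.toReal_ofReal (inv_nonneg.2 hα0.le), ENNReal.toReal_ofReal (inv_nonneg.2 hβ0.le),
    ENNReal.toReal_ofReal (inv_nonneg.2 hγ0.le)] at key2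
  have am := Real.geom_mean_le_arith_mean2_weighted ht0.le ht1'.le
    (mul_nonneg (inv_nonneg.2 hα0.le) (ENNReal.toReal_nonneg (a := a)))
    (mul_nonneg (inv_nonneg.2 hβ0.le) (ENNReal.toReal_nonneg (a := b))) (by ring)
  have := am.trans key2
  rw [Real.mul_rpow (by positivity) (by positivity), Real.mul_rpow (by positivity) (by positivity),
        Real.inv_rpow hα0.le, Real.inv_rpow hβ0.le, le_inv_mul_iff₀ hγ0] at this
  refine le_trans (le_of_eq ?_) this
  rw [hγ]
  field_simp

lemma pdf_exp : ∃ κ : ℝ, ∀ x, gaussianPDFReal 0 1 x = Real.exp (κ - x ^ 2 / 2) := by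
  refine ⟨Real.log (√(2 * Real.pi))⁻¹, fun x => ?_⟩
  rw [sub_eq_add_neg, Real.exp_add, Real.exp_log (by positivity)]
  simp [gaussianPDFReal]
  left; ring

lemma lint_gauss {w : ℝ → ENNReal} (hw : Measurable w) :
    ∫⁻ x, w x ∂gaussianReal 0 1 = ∫⁻ x, w x * ENNReal.ofReal (gaussianPDFReal 0 1 x) := by
  rw [gaussianReal_of_var_ne_zero _ one_ne_zero,
    lintegral_withDensity_eq_lintegral_mul _ (measurable_gaussianPDF 0 1) hw]
  simp [gaussianPDF, mul_comm]

lemma oneD {t : ℝ} (ht0 : 0 < t) (ht1 : t < 1) {f : ℝ → ℝ} (hf : Measurable f)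
    (hf0 : ∀ x, 0 ≤ f x) (hfi : Integrable f (gaussianReal 0 1)) {u : ℝ → ENNReal}
    (hu : Measurable u)
    (h : ∀ x y, u x ≤ ENNReal.ofReal (Real.exp (f y + (1 - t) * (x - y) ^ 2 / 2))) :
    ∫⁻ x, u x ∂gaussianReal 0 1 ≤ ENNReal.ofReal (Real.exp (∫ x, f x ∂gaussianReal 0 1)) := by
  by_cases hz : ∀ x, u x = 0
  · simp [hz]
  push Not at hz
  have ht1' : 0 < 1 - t := by linarith
  obtain ⟨κ, hκ⟩ := pdf_exp
  set p := gaussianPDFReal 0 1 with hp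
  have hpm : Measurable p := measurable_gaussianPDFReal 0 1
  have hp0 : ∀ x, 0 < p x := fun x => by rw [hκ]; positivity
  have hutop : ∀ x, u x ≠ ⊤ := fun x => ne_top_of_le_ne_top ENNReal.ofReal_ne_top (h x 0)
  have hur : ∀ x y, (u x).toReal ≤ Real.exp (f y + (1 - t) * (x - y) ^ 2 / 2) := fun x y =>
    ENNReal.toReal_le_of_le_ofReal (by positivity) (h x y)
  set a := t / (1 - t) with ha
  have ha0 : 0 < a := by positivity
  have key := pl_main (A := fun x => (u x).toReal * p x) (B := fun x => Real.exp (-a * f x) * p x)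
    (C := p) ht0 ht1 (by fun_prop) (by fun_prop) hpm
    (fun x => mul_nonneg (by positivity) (hp0 x).le)
    (fun x => mul_nonneg (by positivity) (hp0 x).le) (fun x => (hp0 x).le)
    ⟨Real.exp (f 0 + κ), by
      rintro _ ⟨x, rfl⟩
      simp only [hκ]
      calc _ ≤ Real.exp (f 0 + (1 - t) * (x - 0) ^ 2 / 2) * Real.exp (κ - x ^ 2 / 2) := by
            gcongr; exact hur x 0
        _ ≤ _ := by
          rw [← Real.exp_add]
          apply Real.exp_le_exp.2
          nlinarith [mul_nonneg ht0.le (sq_nonneg x)]⟩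
    ⟨Real.exp κ, by
      rintro _ ⟨x, rfl⟩
      simp only [hκ]
      rw [← Real.exp_add]
      gcongr
      nlinarith [sq_nonneg x, mul_nonneg ha0.le (hf0 x)]⟩
    (by
      obtain ⟨x, hx⟩ := hz
      exact ⟨x, mul_pos (ENNReal.toReal_pos hx (hutop x)) (hp0 x)⟩)
    ⟨0, mul_pos (by positivity) (hp0 0)⟩
    (fun x y => by
      calc _ ≤ (Real.exp (f y + (1 - t) * (x - y) ^ 2 / 2) * p x) ^ t *
              (Real.exp (-a * f y) * p y) ^ (1 - t) := by
            have := hp0 x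
            have := hp0 y
            gcongr
            exact hur x y
        _ = _ := by
          simp only [hκ]
          rw [← Real.exp_add, ← Real.exp_add, ← Real.exp_mul, ← Real.exp_mul, ← Real.exp_add]
          congr 1
          have : a * (1 - t) = t := by rw [ha]; field_simp
          linear_combination (-f y) * this)
    (by rw [hp, lintegral_gaussianPDFReal_eq_one 0 one_ne_zero]; simp)
  obtain ⟨hAt, hBt, key⟩ := key
  rw [hp, lintegral_gaussianPDFReal_eq_one 0 one_ne_zero, ← hp, ENNReal.toReal_one] at key
  have eA : ∫⁻ x, ENNReal.ofReal ((u x).toReal * p x) = ∫⁻ x, u x ∂gaussianReal 0 1 := by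
    rw [lint_gauss hu]
    refine lintegral_congr fun x => ?_
    rw [ENNReal.ofReal_mul (by positivity), ENNReal.ofReal_toReal (hutop x)]
  have hint : Integrable (fun x => Real.exp (-a * f x)) (gaussianReal 0 1) := by
    refine Integrable.mono' (integrable_const (1 : ℝ)) (by fun_prop) (ae_of_all _ fun x => ?_)
    rw [Real.norm_eq_abs, abs_of_pos (Real.exp_pos _), Real.exp_le_one_iff]
    nlinarith [mul_nonneg ha0.le (hf0 x)]
  have eB : (∫⁻ x, ENNReal.ofReal (Real.exp (-a * f x) * p x)).toReal
      = ∫ x, Real.exp (-a * f x) ∂gaussianReal 0 1 := by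
    rw [integral_eq_lintegral_of_nonneg_ae (ae_of_all _ fun x => by positivity)
      hint.aestronglyMeasurable, lint_gauss (by fun_prop)]
    congr 1
    refine lintegral_congr fun x => ?_
    rw [ENNReal.ofReal_mul (by positivity)]
  have jensen : Real.exp (-a * ∫ x, f x ∂gaussianReal 0 1) ≤
      ∫ x, Real.exp (-a * f x) ∂gaussianReal 0 1 := by
    rw [← integral_const_mul]
    exact convexOn_exp.map_integral_le Real.continuous_exp.continuousOn isClosed_univ
      (ae_of_all _ fun _ => Set.mem_univ _) (hfi.const_mul _) hint
  rw [eB, eA] at key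
  rw [eA] at hAt
  set I := ∫ x, f x ∂gaussianReal 0 1
  set U := ∫⁻ x, u x ∂gaussianReal 0 1
  rw [← ENNReal.ofReal_toReal hAt]
  apply ENNReal.ofReal_le_ofReal
  have h1 : U.toReal ^ t * Real.exp (-t * I) ≤ 1 := by
    refine le_trans ?_ key
    have : Real.exp (-t * I) = Real.exp (-a * I) ^ (1 - t) := by
      rw [← Real.exp_mul]
      congr 1
      have : a * (1 - t) = t := by rw [ha]; field_simp
      linear_combination I * this
    rw [this]
    gcongr
  have h2 : U.toReal ^ t ≤ Real.exp I ^ t := by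
    rw [← Real.exp_mul]
    rw [neg_mul, Real.exp_neg, mul_inv_le_iff₀ (by positivity), one_mul] at h1
    rwa [mul_comm]
  exact (Real.rpow_le_rpow_iff (by positivity) (by positivity) ht0).1 h2

lemma tens {t : ℝ} (ht0 : 0 < t) (ht1 : t < 1) (m : ℕ) : ∀ {f : (Fin m → ℝ) → ℝ}
    (_ : Measurable f) (_ : ∀ x, 0 ≤ f x) {D : ℝ} (_ : 0 ≤ D) (_ : ∀ x, f x ≤ D * (1 + ∑ i, |x i|))
    {u : (Fin m → ℝ) → ENNReal} (_ : Measurable u)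
    (_ : ∀ x y, u x ≤ ENNReal.ofReal (Real.exp (f y + (1 - t) * (∑ i, (x i - y i) ^ 2) / 2))),
    ∫⁻ x, u x ∂(Measure.pi fun _ => gaussianReal 0 1) ≤
      ENNReal.ofReal (Real.exp (∫ x, f x ∂(Measure.pi fun _ => gaussianReal 0 1))) := by
  have hi1 : Integrable (fun x : ℝ => |x|) (gaussianReal 0 1) :=
    (IsGaussian.integrable_id).abs
  induction m with
  | zero =>
    intro f hf hf0 D hD hfD u hu h
    rw [Measure.pi_of_empty]
    simpa using h (fun a => isEmptyElim a) (fun a => isEmptyElim a)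
  | succ n ih =>
    intro f hf hf0 D hD hfD u hu h
    have hmp := (measurePreserving_piFinSuccAbove (fun _ : Fin (n + 1) => gaussianReal 0 1) 0).symm
    set e := MeasurableEquiv.piFinSuccAbove (fun _ : Fin (n + 1) => ℝ) 0
    have he : ∀ z : ℝ × (Fin n → ℝ), e.symm z = Fin.cons z.1 z.2 := fun z => by
      simp [e, MeasurableEquiv.piFinSuccAbove]; rfl
    have hes : Measurable e.symm := e.symm.measurable
    have hi : Integrable (fun z : ℝ × (Fin n → ℝ) => f (e.symm z))
      ((gaussianReal 0 1).prod (Measure.pi fun _ : Fin n => gaussianReal 0 1)) := by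
      have hg : Integrable (fun z : ℝ × (Fin n → ℝ) => D * (1 + (|z.1| + ∑ i, |z.2 i|)))
        ((gaussianReal 0 1).prod (Measure.pi fun _ : Fin n => gaussianReal 0 1)) := by
        refine ((integrable_const _).add ((hi1.comp_fst _).add ?_)).const_mul _
        refine integrable_finsetSum _ fun i _ => ?_
        exact Integrable.comp_snd (f := fun x : Fin n → ℝ => |x i|) 
          (integrable_comp_eval (μ := fun _ : Fin n => gaussianReal 0 1) (f := fun x : ℝ => |x|) hi1) _
      refine hg.mono' (hf.comp hes).aestronglyMeasurable (ae_of_all _ fun z => ?_)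
      rw [Real.norm_eq_abs, abs_of_nonneg (hf0 _)]
      refine (hfD _).trans (le_of_eq ?_)
      simp [he, Fin.sum_univ_succ]
    rw [← hmp.lintegral_comp hu, ← hmp.integral_comp e.symm.measurableEmbedding,
      lintegral_prod_symm (fun z => u (e.symm z)) (hu.comp hes).aemeasurable, integral_prod_symm _ hi]
    have hsec : ∀ y, Integrable (fun x => f (e.symm (x, y))) (gaussianReal 0 1) := by
      intro y
      have hg : Integrable (fun x : ℝ => D * (1 + (|x| + ∑ i, |y i|))) (gaussianReal 0 1) := by
        exact ((integrable_const _).add (hi1.add (integrable_const _))).const_mul _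
      refine hg.mono' (hf.comp (by fun_prop)).aestronglyMeasurable (ae_of_all _ fun z => ?_)
      rw [Real.norm_eq_abs, abs_of_nonneg (hf0 _)]
      refine (hfD _).trans (le_of_eq ?_)
      simp [he, Fin.sum_univ_succ]
    have hc0 : 0 ≤ ∫ x, |x| ∂gaussianReal 0 1 := integral_nonneg fun _ => abs_nonneg _
    refine ih (D := D * (1 + ∫ x, |x| ∂gaussianReal 0 1)) ?_ ?_ (by positivity) ?_ ?_ ?_
    · exact (StronglyMeasurable.integral_prod_left' (hf.comp hes).stronglyMeasurable).measurable
    · intro y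
      exact integral_nonneg fun _ => hf0 _
    · intro y
      have hg : Integrable (fun x : ℝ => D * (1 + (|x| + ∑ i, |y i|))) (gaussianReal 0 1) := by
        exact ((integrable_const _).add (hi1.add (integrable_const _))).const_mul _
      calc _ ≤ ∫ x : ℝ, D * (1 + (|x| + ∑ i, |y i|)) ∂gaussianReal 0 1 := by
            refine integral_mono (hsec y) hg fun x => ?_
            refine (hfD _).trans (le_of_eq ?_)
            simp [he, Fin.sum_univ_succ]
        _ = D * (1 + ((∫ x, |x| ∂gaussianReal 0 1) + ∑ i, |y i|)) := by
            have hi2 : Integrable (fun x : ℝ => |x| + ∑ i, |y i|) (gaussianReal 0 1) :=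
              hi1.add (integrable_const _)
            rw [integral_const_mul, integral_add (integrable_const _) hi2,
              integral_add hi1 (integrable_const _)]
            simp
        _ ≤ _ := by
            have : 0 ≤ ∑ i, |y i| := by positivity
            rw [mul_assoc]
            gcongr
            nlinarith
    · exact Measurable.lintegral_prod_left' (hu.comp hes)
    · intro x y
      have := oneD ht0 ht1 (f := fun s => f (e.symm (s, y)) + (1 - t) * (∑ i, (x i - y i) ^ 2) / 2)
        (u := fun s => u (e.symm (s, x))) ((hf.comp (by fun_prop)).add measurable_const)
        (fun s => add_nonneg (hf0 _) (div_nonneg (mul_nonneg (by linarith) (by positivity)) (by norm_num)))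
        ((hsec y).add (integrable_const _)) (hu.comp (by fun_prop)) (by
          intro r s
          refine (h _ (e.symm (s, y))).trans (le_of_eq ?_)
          congr 2
          simp [he, Fin.sum_univ_succ]
          ring)
      refine this.trans (le_of_eq ?_)
      rw [integral_add (hsec y) (integrable_const _)]
      simp

lemma abs_gauss_s18 : (∫ x, |x| ∂gaussianReal 0 1) = 2 * (√(2 * Real.pi))⁻¹ := by
  rw [integral_gaussianReal_eq_integral_smul one_ne_zero]
  have h1 : ∀ x : ℝ, gaussianPDFReal 0 1 x • |x| =
      (fun r : ℝ => (√(2 * Real.pi))⁻¹ * (r ^ (1 : ℝ) * Real.exp (-(1 / 2) * r ^ (2 : ℝ)))) |x| := by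
    intro x
    simp [gaussianPDFReal]
    ring_nf
  simp_rw [h1]
  rw [integral_comp_abs (f := fun r : ℝ => (√(2 * Real.pi))⁻¹ * (r ^ (1 : ℝ) * Real.exp (-(1 / 2) * r ^ (2 : ℝ)))),
    integral_const_mul, integral_rpow_mul_exp_neg_mul_rpow (by norm_num) (by norm_num) (by norm_num)]
  norm_num

lemma abs_lin (m : ℕ) (a : Fin m → ℝ) :
    (∫ x, |∑ i, a i * x i| ∂(Measure.pi fun _ : Fin m => gaussianReal 0 1)) =
      √(∑ i, a i ^ 2) * (2 * (√(2 * Real.pi))⁻¹) := by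
  let v : EuclideanSpace ℝ (Fin m) := WithLp.toLp 2 a
  let L : StrongDual ℝ (EuclideanSpace ℝ (Fin m)) := innerSL ℝ v
  have hL : ∀ x : Fin m → ℝ, ∑ i, a i * x i = L (WithLp.toLp 2 x) := by
    intro x
    simp [L, v, PiLp.inner_apply, mul_comm]
  have hn : ‖L‖ = √(∑ i, a i ^ 2) := by
    simp [L, v, EuclideanSpace.norm_eq]
  have e1 : (∫ x, |∑ i, a i * x i| ∂(Measure.pi fun _ : Fin m => gaussianReal 0 1)) =
      ∫ z, |L z| ∂(ProbabilityTheory.stdGaussian (EuclideanSpace ℝ (Fin m))) := by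
    rw [← map_pi_eq_stdGaussian, integral_map (by fun_prop) (by fun_prop)]
    simp_rw [hL]
  have e2 : (∫ z, |L z| ∂(ProbabilityTheory.stdGaussian (EuclideanSpace ℝ (Fin m)))) =
      ∫ r, |r| ∂((ProbabilityTheory.stdGaussian (EuclideanSpace ℝ (Fin m))).map L) := by
    rw [integral_map (by fun_prop) (by fun_prop)]
  rw [e1, e2, IsGaussian.map_eq_gaussianReal, integral_strongDual_stdGaussian,
    variance_dual_stdGaussian, hn]
  have e3 : gaussianReal 0 (√(∑ i, a i ^ 2) ^ 2).toNNReal =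
      (gaussianReal 0 1).map (fun x => √(∑ i, a i ^ 2) * x) := by
    rw [gaussianReal_map_const_mul]
    congr 1
    · simp
    · rw [mul_one]; ext; simp
  rw [e3, integral_map (by fun_prop) (by fun_prop)]
  simp_rw [abs_mul]
  rw [integral_const_mul, abs_gauss_s18, abs_of_nonneg (by positivity)]

section
variable {F : Type*} [NormedAddCommGroup F] [NormedSpace ℝ F] (m : ℕ) (J : (Fin m → ℝ) →ₗ[ℝ] F)

lemma norm_le_sum : ∃ D : ℝ, 0 ≤ D ∧ ∀ x, ‖J x‖ ≤ D * ∑ i, |x i| := by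
  refine ⟨‖J.toContinuousLinearMap‖, by positivity, fun x => ?_⟩
  refine (J.toContinuousLinearMap.le_opNorm x).trans ?_
  gcongr
  rw [pi_norm_le_iff_of_nonneg (by positivity)]
  intro i
  exact Finset.single_le_sum (f := fun i => |x i|) (fun _ _ => abs_nonneg _) (Finset.mem_univ i)

lemma op_bdd : BddAbove (Set.range fun x : {x : Fin m → ℝ // ∑ i, x i ^ 2 ≤ 1} => ‖J x.1‖) := by
  obtain ⟨D, hD, h⟩ := norm_le_sum m J
  refine ⟨D * m, ?_⟩
  rintro _ ⟨⟨x, hx⟩, rfl⟩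
  refine (h x).trans ?_
  gcongr
  calc ∑ i, |x i| ≤ ∑ i : Fin m, (1 : ℝ) := by
        refine Finset.sum_le_sum fun i _ => ?_
        have := Finset.single_le_sum (f := fun i => x i ^ 2) (fun _ _ => sq_nonneg _)
          (Finset.mem_univ i)
        rw [← sq_le_one_iff_abs_le_one]
        exact this.trans hx
    _ = m := by simp

lemma op_le (x : Fin m → ℝ) : ‖J x‖ ≤ opNorm2F m J * √(∑ i, x i ^ 2) := by
  by_cases hx : ∑ i, x i ^ 2 = 0
  · have : x = 0 := by
      ext i
      have := (Finset.sum_eq_zero_iff_of_nonneg (fun i _ => sq_nonneg (x i))).1 hx i (Finset.mem_univ i)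
      simpa using this
    simp [this]
  have hp : 0 < ∑ i, x i ^ 2 := lt_of_le_of_ne (by positivity) (Ne.symm hx)
  set r := √(∑ i, x i ^ 2) with hr
  have hr0 : 0 < r := Real.sqrt_pos.2 hp
  have hr2 : r ^ 2 = ∑ i, x i ^ 2 := Real.sq_sqrt hp.le
  have := le_ciSup (op_bdd m J) ⟨r⁻¹ • x, by
    simp only [Pi.smul_apply, smul_eq_mul, mul_pow]
    rw [← Finset.mul_sum, ← hr2, ← mul_pow, inv_mul_cancel₀ hr0.ne', one_pow]⟩
  change _ ≤ opNorm2F m J at this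
  simp only [map_smul, norm_smul, norm_inv, Real.norm_eq_abs, abs_of_pos hr0] at this
  rwa [inv_mul_le_iff₀ hr0, mul_comm] at this

lemma op_pos (hJ : J ≠ 0) : 0 < opNorm2F m J := by
  obtain ⟨x, hx⟩ : ∃ x, J x ≠ 0 := by
    by_contra! h
    exact hJ (LinearMap.ext h)
  by_contra! h
  have := op_le m J x
  have h2 := mul_nonpos_of_nonpos_of_nonneg h (Real.sqrt_nonneg (∑ i, x i ^ 2))
  exact hx (norm_le_zero_iff.1 (this.trans h2))

lemma cont_normJ : Continuous fun x => ‖J x‖ :=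
  (LinearMap.continuous_of_finiteDimensional J).norm

lemma int_normJ : Integrable (fun x => ‖J x‖) (Measure.pi fun _ : Fin m => gaussianReal 0 1) := by
  obtain ⟨D, hD, h⟩ := norm_le_sum m J
  have hi1 : Integrable (fun x : ℝ => |x|) (gaussianReal 0 1) :=
    (IsGaussian.integrable_id).abs
  have hg : Integrable (fun x : Fin m → ℝ => D * ∑ i, |x i|)
      (Measure.pi fun _ : Fin m => gaussianReal 0 1) := by
    refine Integrable.const_mul (integrable_finsetSum _ fun i _ => ?_) _
    exact integrable_comp_eval (μ := fun _ : Fin m => gaussianReal 0 1) (f := fun x : ℝ => |x|) hi1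
  refine hg.mono' (cont_normJ m J).aestronglyMeasurable (ae_of_all _ fun x => ?_)
  simpa using h x

lemma op_le_mean : opNorm2F m J * (2 * (√(2 * Real.pi))⁻¹) ≤
    ∫ x, ‖J x‖ ∂(Measure.pi fun _ : Fin m => gaussianReal 0 1) := by
  have hc : 0 < 2 * (√(2 * Real.pi))⁻¹ := by positivity
  rw [← le_div_iff₀ hc]
  have : Nonempty {x : Fin m → ℝ // ∑ i, x i ^ 2 ≤ 1} := ⟨⟨0, by simp⟩⟩
  refine ciSup_le fun ⟨x, hx⟩ => ?_
  rw [le_div_iff₀ hc]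
  obtain ⟨g, hg, hgx⟩ := exists_dual_vector'' ℝ (J x)
  set a : Fin m → ℝ := fun i => g (J (Pi.single i 1)) with ha
  have hlin : ∀ y : Fin m → ℝ, g (J y) = ∑ i, a i * y i := by
    intro y
    conv_lhs => rw [pi_eq_sum_univ' y]
    simp [ha, map_sum, mul_comm]
  calc _ ≤ √(∑ i, a i ^ 2) * (2 * (√(2 * Real.pi))⁻¹) := by
        gcongr
        have : ‖J x‖ = ∑ i, a i * x i := by rw [← hlin, hgx]; rfl
        simp only [this]
        refine (Real.sum_mul_le_sqrt_mul_sqrt _ _ _).trans ?_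
        refine mul_le_of_le_one_right (by positivity) ?_
        exact Real.sqrt_le_one.2 hx
    _ = _ := (abs_lin m a).symm
    _ ≤ _ := by
        refine integral_mono_of_nonneg (ae_of_all _ fun _ => abs_nonneg _) (int_normJ m J)
          (ae_of_all _ fun y => ?_)
        simp only [← hlin]
        rw [← Real.norm_eq_abs]
        refine (g.le_opNorm _).trans ?_
        exact mul_le_of_le_one_left (norm_nonneg _) hg

lemma tail_t (hJ : J ≠ 0) (lam : ℝ) (hlam : 1 < lam) {t : ℝ} (ht0 : 0 < t) (ht1 : t < 1)
    {E : ℝ} (hE : E = ∫ x, ‖J x‖ ∂(Measure.pi fun _ : Fin m => gaussianReal 0 1)) (hE0 : 0 < E) :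
    (Measure.pi fun _ : Fin m => gaussianReal 0 1) {x | lam * E < ‖J x‖} ≤
    ENNReal.ofReal (Real.exp (-(1 - t) * ((lam - 1) ^ 2 * (E / opNorm2F m J) ^ 2 / 2))) := by
  have hL := op_pos m J hJ
  have hle := op_le m J
  set L := opNorm2F m J
  obtain ⟨D, hD, h⟩ := norm_le_sum m J
  obtain ⟨c, hc⟩ : ∃ c, c = 1 - t := ⟨_, rfl⟩
  have hc0 : 0 < c := by linarith
  have hl1 : 0 < lam - 1 := by linarith
  set s := c * (lam - 1) * E / L ^ 2 with hs
  have hs0 : 0 < s := by positivity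
  set q := s ^ 2 * L ^ 2 / (2 * c) with hq
  have hm : Measurable fun x => ‖J x‖ := (cont_normJ m J).measurable
  have key := tens ht0 ht1 m (f := fun x => s * ‖J x‖) (D := s * D)
    (u := fun x => ENNReal.ofReal (Real.exp (s * ‖J x‖ - q))) (by fun_prop)
    (fun x => by positivity) (by positivity)
    (fun x => by
      rw [mul_assoc]
      gcongr
      refine (h x).trans ?_
      gcongr
      linarith) (by fun_prop)
    (fun x y => by
      apply ENNReal.ofReal_le_ofReal
      apply Real.exp_le_exp.2
      have h1 : ‖J x‖ ≤ ‖J y‖ + L * √(∑ i, (x i - y i) ^ 2) := by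
        have h2 := hle (x - y)
        rw [map_sub] at h2
        simp only [Pi.sub_apply] at h2
        have := norm_le_norm_add_norm_sub' (J x) (J y)
        linarith
      set r := √(∑ i, (x i - y i) ^ 2) with hr
      have hr2 : ∑ i, (x i - y i) ^ 2 = r ^ 2 := (Real.sq_sqrt (by positivity)).symm
      rw [hr2, ← hc]
      have h3 : s * L * r ≤ q + c * r ^ 2 / 2 := by
        have : q + c * r ^ 2 / 2 - s * L * r = (s * L - c * r) ^ 2 / (2 * c) := by
          rw [hq]; field_simp; ring
        have h4 : 0 ≤ (s * L - c * r) ^ 2 / (2 * c) := by positivity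
        linarith
      nlinarith)
  rw [integral_const_mul, ← hE] at key
  calc _ ≤ (Measure.pi fun _ : Fin m => gaussianReal 0 1) {x | ENNReal.ofReal (Real.exp (s * (lam * E) - q)) ≤
          ENNReal.ofReal (Real.exp (s * ‖J x‖ - q))} := by
        apply measure_mono
        intro x hx
        have hx : lam * E < ‖J x‖ := hx
        apply ENNReal.ofReal_le_ofReal
        apply Real.exp_le_exp.2
        nlinarith
    _ ≤ _ := meas_ge_le_lintegral_div
        (Measurable.aemeasurable (by fun_prop)) (by simp [Real.exp_pos]) ENNReal.ofReal_ne_top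
    _ ≤ ENNReal.ofReal (Real.exp (s * E)) / ENNReal.ofReal (Real.exp (s * (lam * E) - q)) := by
        gcongr
    _ = _ := by
        rw [← ENNReal.ofReal_div_of_pos (Real.exp_pos _), ← Real.exp_sub, ← hc]
        congr 2
        rw [hq, hs]
        field_simp
        ring

end

theorem stmt18 {F : Type*} [NormedAddCommGroup F] [NormedSpace ℝ F]
    (m : ℕ) (hm : 1 ≤ m)
    (J : (Fin m → ℝ) →ₗ[ℝ] F) (hJ : J ≠ 0)
    (lam : ℝ) (hlam : 1 < lam) :
    stdGaussian m {x | lam * (∫ y, ‖J y‖ ∂stdGaussian m) < ‖J x‖} ≤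
      ENNReal.ofReal (Real.exp (-(lam - 1) ^ 2 *
        ((∫ y, ‖J y‖ ∂stdGaussian m) / opNorm2F m J) ^ 2 / 2)) ∧
    Real.exp (-(lam - 1) ^ 2 * ((∫ y, ‖J y‖ ∂stdGaussian m) / opNorm2F m J) ^ 2 / 2) ≤
      Real.exp (-(lam - 1) ^ 2 / Real.pi) := by
  have hL := op_pos m J hJ
  have hmean := op_le_mean m J
  have hdef : _root_.stdGaussian m = Measure.pi fun _ : Fin m => gaussianReal 0 1 := rfl
  rw [hdef]
  obtain ⟨E, hE⟩ : ∃ E, E = ∫ x, ‖J x‖ ∂(Measure.pi fun _ : Fin m => gaussianReal 0 1) := ⟨_, rfl⟩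
  rw [← hE] at hmean ⊢
  have hE0 : 0 < E := lt_of_lt_of_le (by positivity) hmean
  constructor
  · have hlim : Filter.Tendsto (fun t : ℝ => ENNReal.ofReal (Real.exp (-(1 - t) *
        ((lam - 1) ^ 2 * (E / opNorm2F m J) ^ 2 / 2)))) (nhdsWithin 0 (Set.Ioi 0))
        (nhds (ENNReal.ofReal (Real.exp (-(1 - 0) *
        ((lam - 1) ^ 2 * (E / opNorm2F m J) ^ 2 / 2))))) := by
      refine tendsto_nhdsWithin_of_tendsto_nhds (Continuous.tendsto ?_ 0)
      exact ENNReal.continuous_ofReal.comp (by fun_prop)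
    have e : -(lam - 1) ^ 2 * (E / opNorm2F m J) ^ 2 / 2 =
      -(1 - 0) * ((lam - 1) ^ 2 * (E / opNorm2F m J) ^ 2 / 2) := by ring
    rw [e]
    refine ge_of_tendsto hlim ?_
    filter_upwards [Ioo_mem_nhdsGT (show (0 : ℝ) < 1 by norm_num)] with t ht
    exact tail_t m J hJ lam hlam ht.1 ht.2 hE hE0
  · apply Real.exp_le_exp.2
    have hρ : 2 * (√(2 * Real.pi))⁻¹ ≤ E / opNorm2F m J := by
      rw [le_div_iff₀ hL]; linarith
    have h2 : (2 * (√(2 * Real.pi))⁻¹) ^ 2 ≤ (E / opNorm2F m J) ^ 2 := by gcongr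
    have h3 : (2 * (√(2 * Real.pi))⁻¹) ^ 2 = 2 / Real.pi := by
      rw [mul_pow, inv_pow, Real.sq_sqrt (by positivity)]
      field_simp
    rw [h3] at h2
    have h4 := mul_le_mul_of_nonneg_left h2 (sq_nonneg (lam - 1))
    have h5 : -(lam - 1) ^ 2 / Real.pi = -((lam - 1) ^ 2 * (2 / Real.pi)) / 2 := by ring
    rw [h5]
    linarith
end
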